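/- arXiv:1306.5880 — 6 statements merged into one kernel-verified Lean document; each statement's English description precedes it below -/
import Mathlib

section
/- Let p, q > 2 be real numbers with log p / log q = n₀/m₀ where n₀, m₀ are coprime positive integers, set α = 1/p, β = 1/q, and for nonzero λ and a ∈ {0,1}^{m₀}, b ∈ {0,1}^{n₀} define S_λ^{a,b}(t) := p^{−m₀}·t + (1−α)·∑_{k=0}^{m₀−1} a_k·α^k − λ·(1−β)·∑_{k=0}^{n₀−1} b_k·β^k (the contractions of the iterated function system whose attractor is C_α − λ·C_β). For λ ≠ 0, let I_λ denote the interior of the convex hull of C_α − λ·C_β (so I_λ = (−λ, 1) when λ > 0 and I_λ = (0, 1−λ) when λ < 0). Suppose (m₁, m₂) is an open interval not containing 0 such that: (i) for each λ ∈ (m₁, m₂), the union ⋃_{a,b} S_λ^{a,b}(I_λ) is connected; (ii) for each pair of indices (a,b), (a′,b′), either S_λ^{a,b}(I_λ) ∩ S_λ^{a′,b′}(I_λ) = ∅ for every λ ∈ (m₁, m₂), or there exists d ∈ ℝ with d ∈ S_λ^{a,b}(I_λ) ∩ S_λ^{a′,b′}(I_λ) for every λ ∈ (m₁, m₂). Let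 f, g : [0,1] → ℝ and suppose there is a point (x₀, y₀) ∈ C_α × C_β such that f is continuously differentiable on a neighborhood of x₀, g is continuously differentiable on a neighborhood of y₀, f′(x₀) ≠ 0, and m₁ < g′(y₀)/f′(x₀) < m₂. Then the set { f(x) − g(y) : x ∈ C_α, y ∈ C_β } contains a nonempty open interval. -/
/-! Write `α = 1/p`, `β = 1/q` and `r = α ^ m₀ = β ^ n₀`.  After a change of sign the derivative of `f` at `x₀`
is positive.
A pair of cylinders of the two Cantor sets with hulls `[x, x + h]` and `[y, y + h]` is assigned the
open interval with endpoints `f x - g (y + θ h)` and `f (x + h) - g (y + (1 - θ) h)`, where `θ = 1`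
if the slopes `λ ∈ (m₁, m₂)` are positive and `θ = 0` if they are negative; it is the interior of
`f [x, x + h] - g [y, y + h]`.

The heart of the proof (`exists_child`) is that, close to `(x₀, y₀)`, the interval of a pair is
covered by the intervals of its children.  By the mean value theorem, an inequality
`u - λ w < v - λ z` valid for all `λ ∈ (m₁, m₂)` yields `f u - g w < f v - g z`, so two
children whose linear models overlap for all `λ` have overlapping intervals.  If a point `z` of the
parent's interval were missed by all children, the children to the left and to the right of `z`
would be two nonempty classes (the extreme children share the endpoints of the parent) without any
overlap between them, hence by (ii) without overlap of the linear models, contradicting the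
connectedness (i) for one value of `λ`.

Iterating, every `z` in the interval of a small pair around `(x₀, y₀)` lies in the intervals of a
nested sequence of pairs, which shrinks to a point `(x, y) ∈ C_α × C_β` with `f x - g y = z`. -/

open Set MeasureTheory

/-- The middle Cantor set `C_a`, for `0 < a < 1/2`:
`C_a = { (1-a) * ∑ εₖ aᵏ : εₖ ∈ {0,1} }`. -/
noncomputable def middleCantor (a : ℝ) : Set ℝ :=
  {x : ℝ | ∃ ε : ℕ → Bool, x = (1 - a) * ∑' k : ℕ, (if ε k then a ^ k else 0)}

/-- The arithmetic difference `C_a - l · C_b`. -/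
noncomputable def diffSet (a b l : ℝ) : Set ℝ :=
  {z : ℝ | ∃ x ∈ middleCantor a, ∃ y ∈ middleCantor b, z = x - l * y}


/-- The contraction `S_λ^{a,b}(t) = p^(-m₀) t + (1-α) ∑ aₖ αᵏ - λ (1-β) ∑ bₖ βᵏ`,
with `α = 1/p`, `β = 1/q`. -/
noncomputable def S14 (p q l : ℝ) (m₀ n₀ : ℕ)
    (a : Fin m₀ → Bool) (b : Fin n₀ → Bool) (t : ℝ) : ℝ :=
  (p ^ m₀)⁻¹ * t
    + (1 - 1 / p) * ∑ k : Fin m₀, (if a k then (1 : ℝ) else 0) * (1 / p) ^ (k : ℕ)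
    - l * ((1 - 1 / q) * ∑ k : Fin n₀, (if b k then (1 : ℝ) else 0) * (1 / q) ^ (k : ℕ))

/-- The interior `I_λ` of the convex hull of `C_α - λ C_β` :
`(-λ, 1)` for `λ > 0` and `(0, 1 - λ)` for `λ < 0`. -/
noncomputable def I14 (l : ℝ) : Set ℝ :=
  if 0 < l then Set.Ioo (-l) 1 else Set.Ioo 0 (1 - l)

/-! ### Middle Cantor sets -/

lemma summable_digits {a : ℝ} (h0 : 0 < a) (h1 : a < 1) (ε : ℕ → Bool) :
    Summable (fun k : ℕ => if ε k then a ^ k else 0) := by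
  refine Summable.of_nonneg_of_le (fun k => ?_) (fun k => ?_)
    (summable_geometric_of_lt_one h0.le h1)
  · split_ifs <;> positivity
  · split_ifs
    · exact le_rfl
    · positivity

lemma middleCantor_subset {a : ℝ} (h0 : 0 < a) (h1 : a < 1) : middleCantor a ⊆ Icc 0 1 := by
  rintro x ⟨ε, rfl⟩
  have hs := summable_digits h0 h1 ε
  have hle : ∑' k : ℕ, (if ε k then a ^ k else 0) ≤ (1 - a)⁻¹ := by
    rw [← tsum_geometric_of_lt_one h0.le h1]
    refine hs.tsum_le_tsum (fun k => ?_) (summable_geometric_of_lt_one h0.le h1)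
    split_ifs
    · exact le_rfl
    · positivity
  have hge : 0 ≤ ∑' k : ℕ, (if ε k then a ^ k else 0) :=
    tsum_nonneg (fun k => by split_ifs <;> positivity)
  have h2 : 0 < 1 - a := by linarith
  refine ⟨by positivity, ?_⟩
  calc _ ≤ (1 - a) * (1 - a)⁻¹ := by gcongr
    _ = 1 := mul_inv_cancel₀ h2.ne'

lemma zero_mem_middleCantor (a : ℝ) : 0 ∈ middleCantor a :=
  ⟨fun _ => false, by simp⟩

lemma one_mem_middleCantor {a : ℝ} (h0 : 0 < a) (h1 : a < 1) : 1 ∈ middleCantor a := by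
  refine ⟨fun _ => true, ?_⟩
  have h2 : 1 - a ≠ 0 := by linarith
  simp [tsum_geometric_of_lt_one h0.le h1, h2]

lemma isClosed_middleCantor {a : ℝ} (h0 : 0 < a) (h1 : a < 1) : IsClosed (middleCantor a) := by
  have hc : Continuous (fun ε : ℕ → Bool => (1 - a) * ∑' k : ℕ, (if ε k then a ^ k else 0)) := by
    refine continuous_const.mul (continuous_tsum (u := fun k => a ^ k) (fun k => ?_)
      (summable_geometric_of_lt_one h0.le h1) (fun k ε => ?_))
    · exact (continuous_of_discreteTopology (f := fun b : Bool => if b then a ^ k else 0)).comp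
        (continuous_apply k)
    · have : 0 < a ^ k := by positivity
      split_ifs
      · simp [abs_of_pos h0]
      · simpa using this.le
  have hr : middleCantor a =
      range (fun ε : ℕ → Bool => (1 - a) * ∑' k : ℕ, (if ε k then a ^ k else 0)) := by
    ext x
    simp only [middleCantor, mem_ofPred_eq, mem_range, eq_comm]
  rw [hr]
  exact (isCompact_range hc).isClosed

lemma digits_succ {a : ℝ} (h0 : 0 < a) (h1 : a < 1) (ε : ℕ → Bool) :
    (1 - a) * ∑' k : ℕ, (if ε k then a ^ k else 0) =
      (1 - a) * (if ε 0 then 1 else 0)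
        + a * ((1 - a) * ∑' k : ℕ, (if ε (k + 1) then a ^ k else 0)) := by
  rw [(summable_digits h0 h1 ε).tsum_eq_zero_add, mul_left_comm a, ← tsum_mul_left (a := a)]
  have : ∀ k, (if ε (k + 1) then a ^ (k + 1) else 0) = a * (if ε (k + 1) then a ^ k else 0) := by
    intro k
    split_ifs
    · ring
    · simp
  simp only [this, pow_zero]
  ring

/-- Prepending one digit to a point of the Cantor set. -/
lemma cons_mem {a : ℝ} (h0 : 0 < a) (h1 : a < 1) (e : Bool) {c : ℝ} (hc : c ∈ middleCantor a) :
    (1 - a) * (if e then 1 else 0) + a * c ∈ middleCantor a := by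
  obtain ⟨ε, rfl⟩ := hc
  refine ⟨fun k => Nat.casesOn k e ε, ?_⟩
  exact (digits_succ h0 h1 (fun k => Nat.casesOn k e ε)).symm

/-- Removing the first digit from a point of the Cantor set. -/
lemma exists_cons {a : ℝ} (h0 : 0 < a) (h1 : a < 1) {x : ℝ} (hx : x ∈ middleCantor a) :
    ∃ e : Bool, ∃ c ∈ middleCantor a, x = (1 - a) * (if e then 1 else 0) + a * c := by
  obtain ⟨ε, rfl⟩ := hx
  exact ⟨ε 0, _, ⟨fun k => ε (k + 1), rfl⟩, digits_succ h0 h1 ε⟩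

/-- The left endpoint of the cylinder of the Cantor set given by the word `w`. -/
noncomputable def wordPt (a : ℝ) {m : ℕ} (w : Fin m → Bool) : ℝ :=
  (1 - a) * ∑ k : Fin m, (if w k then (1 : ℝ) else 0) * a ^ (k : ℕ)

lemma wordPt_add_mem {a : ℝ} (h0 : 0 < a) (h1 : a < 1) {m : ℕ} (w : Fin m → Bool) {c : ℝ}
    (hc : c ∈ middleCantor a) : wordPt a w + a ^ m * c ∈ middleCantor a := by
  induction m with
  | zero => simpa [wordPt] using hc
  | succ m ih =>
    have := cons_mem h0 h1 (w 0) (ih (fun k => w k.succ))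
    convert this using 1
    simp only [wordPt, Fin.sum_univ_succ, Fin.val_zero, Fin.val_succ, pow_zero, pow_succ,
      ← mul_assoc, ← Finset.sum_mul]
    ring

lemma wordPt_nonneg {a : ℝ} (h0 : 0 < a) (h1 : a < 1) {m : ℕ} (w : Fin m → Bool) :
    0 ≤ wordPt a w := by
  have := (middleCantor_subset h0 h1 (wordPt_add_mem h0 h1 w (zero_mem_middleCantor a))).1
  simpa using this

lemma wordPt_add_le {a : ℝ} (h0 : 0 < a) (h1 : a < 1) {m : ℕ} (w : Fin m → Bool) :
    wordPt a w + a ^ m ≤ 1 := by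
  have := (middleCantor_subset h0 h1 (wordPt_add_mem h0 h1 w (one_mem_middleCantor h0 h1))).2
  simpa using this

lemma wordPt_false (a : ℝ) (m : ℕ) : wordPt a (fun _ : Fin m => false) = 0 := by
  simp [wordPt]

lemma wordPt_true (a : ℝ) (m : ℕ) : wordPt a (fun _ : Fin m => true) + a ^ m = 1 := by
  have := mul_neg_geom_sum a m
  rw [← Fin.sum_univ_eq_sum_range] at this
  simp [wordPt, this]

/-- `x` is the left endpoint of a copy of the Cantor set at scale `h` inside the Cantor set. -/
def IsCyl (a x h : ℝ) : Prop := ∀ c ∈ middleCantor a, x + h * c ∈ middleCantor a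

lemma IsCyl.child {a x h : ℝ} (h0 : 0 < a) (h1 : a < 1) (hx : IsCyl a x h) {m : ℕ}
    (w : Fin m → Bool) : IsCyl a (x + h * wordPt a w) (h * a ^ m) := by
  intro c hc
  have := hx _ (wordPt_add_mem h0 h1 w hc)
  convert this using 1
  ring

/-- Every point of the Cantor set lies in the hull of a cylinder of each level. -/
lemma exists_isCyl {a : ℝ} (h0 : 0 < a) (h1 : a < 1) {x₀ : ℝ} (hx₀ : x₀ ∈ middleCantor a)
    (n : ℕ) : ∃ x, IsCyl a x (a ^ n) ∧ x₀ ∈ Icc x (x + a ^ n) := by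
  suffices h : ∃ x, IsCyl a x (a ^ n) ∧ ∃ c ∈ middleCantor a, x₀ = x + a ^ n * c by
    obtain ⟨x, hx, c, hc, rfl⟩ := h
    obtain ⟨hc0, hc1⟩ := middleCantor_subset h0 h1 hc
    have : 0 < a ^ n := by positivity
    exact ⟨x, hx, by nlinarith, by nlinarith⟩
  induction n with
  | zero => exact ⟨0, by simp [IsCyl], x₀, hx₀, by simp⟩
  | succ n ih =>
    obtain ⟨x, hx, c, hc, rfl⟩ := ih
    obtain ⟨e, d, hd, rfl⟩ := exists_cons h0 h1 hc
    refine ⟨x + a ^ n * ((1 - a) * (if e then 1 else 0)), ?_, d, hd, by ring⟩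
    intro b hb
    have := hx _ (cons_mem h0 h1 e hb)
    convert this using 1
    ring

/-! ### Covering a pair by its children -/

/-- Comparisons `u - l w < v - l z` that hold for all slopes `l ∈ (m₁, m₂)` are inherited by
`f` and `g` on `s` and `t`. -/
def Transfers (m₁ m₂ : ℝ) (f g : ℝ → ℝ) (s t : Set ℝ) : Prop :=
  ∀ u ∈ s, ∀ v ∈ s, ∀ w ∈ t, ∀ z ∈ t,
    (∀ l ∈ Ioo m₁ m₂, u - l * w < v - l * z) → f u - g w < f v - g z

/-- The interval of a pair is covered by the intervals of its children.  Here `i` runs over the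
children, which sit at relative positions `(X i, Y i)` with relative size `r`. -/
lemma exists_child {ι : Type*} {X Y : ι → ℝ} {r θ m₁ m₂ l₀ : ℝ}
    (hr : 0 < r) (hθ : θ = 0 ∨ θ = 1)
    (hX0 : ∀ i, 0 ≤ X i) (hX1 : ∀ i, X i + r ≤ 1) (hY0 : ∀ i, 0 ≤ Y i) (hY1 : ∀ i, Y i + r ≤ 1)
    (i₀ i₁ : ι) (hX₀ : X i₀ = 0) (hY₀ : Y i₀ + θ * r = θ)
    (hX₁ : X i₁ + r = 1) (hY₁ : Y i₁ + (1 - θ) * r = 1 - θ)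
    (hconn : IsPreconnected
      (⋃ i, Ioo (X i - l₀ * (Y i + θ * r)) (X i + r - l₀ * (Y i + (1 - θ) * r))))
    (hne : ∀ i, X i - l₀ * (Y i + θ * r) < X i + r - l₀ * (Y i + (1 - θ) * r))
    (hlink : ∀ i j,
      Ioo (X i - l₀ * (Y i + θ * r)) (X i + r - l₀ * (Y i + (1 - θ) * r)) ∩
        Ioo (X j - l₀ * (Y j + θ * r)) (X j + r - l₀ * (Y j + (1 - θ) * r)) = ∅ ∨
      ∀ l ∈ Ioo m₁ m₂, X j - l * (Y j + θ * r) < X i + r - l * (Y i + (1 - θ) * r))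
    {f g : ℝ → ℝ} {x y h z : ℝ} (hh : 0 < h)
    (hT : Transfers m₁ m₂ f g (Icc x (x + h)) (Icc y (y + h)))
    (hz : z ∈ Ioo (f x - g (y + θ * h)) (f (x + h) - g (y + (1 - θ) * h))) :
    ∃ i, z ∈ Ioo (f (x + h * X i) - g (y + h * Y i + θ * (h * r)))
      (f (x + h * X i + h * r) - g (y + h * Y i + (1 - θ) * (h * r))) := by
  by_contra hcon
  push Not at hcon
  have hside : ∀ i, ¬ f (x + h * X i + h * r) - g (y + h * Y i + (1 - θ) * (h * r)) ≤ z →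
      z ≤ f (x + h * X i) - g (y + h * Y i + θ * (h * r)) := by
    intro i hi
    by_contra hlt
    exact hcon i ⟨not_le.1 hlt, not_le.1 hi⟩
  -- `A` consists of the children to the left of `z`.
  set A : Set ι := {i | f (x + h * X i + h * r) - g (y + h * Y i + (1 - θ) * (h * r)) ≤ z} with hA
  have hi₀ : i₀ ∈ A := by
    by_contra hn
    have h2 := hside i₀ hn
    have e : y + h * Y i₀ + θ * (h * r) = y + θ * h := by linear_combination h * hY₀
    rw [hX₀, e] at h2
    simp only [mul_zero, add_zero] at h2
    linarith [hz.1]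
  have hi₁ : i₁ ∉ A := by
    intro hn
    have h2 : f (x + h * X i₁ + h * r) - g (y + h * Y i₁ + (1 - θ) * (h * r)) ≤ z := hn
    have e : y + h * Y i₁ + (1 - θ) * (h * r) = y + (1 - θ) * h := by
      linear_combination h * hY₁
    have e' : x + h * X i₁ + h * r = x + h := by linear_combination h * hX₁
    rw [e, e'] at h2
    linarith [hz.2]
  have hdisj : ∀ i ∈ A, ∀ j ∉ A,
      Ioo (X i - l₀ * (Y i + θ * r)) (X i + r - l₀ * (Y i + (1 - θ) * r)) ∩
        Ioo (X j - l₀ * (Y j + θ * r)) (X j + r - l₀ * (Y j + (1 - θ) * r)) = ∅ := by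
    intro i hi j hj
    refine (hlink i j).resolve_right fun hl => ?_
    have hr' : 0 < h * r := by positivity
    have bX : ∀ i, 0 ≤ h * X i ∧ h * X i + h * r ≤ h := fun i =>
      ⟨mul_nonneg hh.le (hX0 i), by nlinarith [hX1 i]⟩
    have bY : ∀ i, 0 ≤ h * Y i ∧ h * Y i + h * r ≤ h := fun i =>
      ⟨mul_nonneg hh.le (hY0 i), by nlinarith [hY1 i]⟩
    have hmem : ∀ i (s : ℝ), s = 0 ∨ s = 1 → y + h * Y i + s * (h * r) ∈ Icc y (y + h) := by
      rintro i s (rfl | rfl) <;> constructor <;> linarith [bY i]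
    have hlt : f (x + h * X j) - g (y + h * Y j + θ * (h * r)) <
        f (x + h * X i + h * r) - g (y + h * Y i + (1 - θ) * (h * r)) := by
      refine hT _ ?_ _ ?_ _ (hmem j θ hθ) _ (hmem i (1 - θ) ?_) fun l hlm => ?_
      · constructor <;> linarith [bX j]
      · constructor <;> linarith [bX i]
      · rcases hθ with rfl | rfl <;> simp
      · have := mul_lt_mul_of_pos_left (hl l hlm) hh
        linarith
    have h1 : f (x + h * X i + h * r) - g (y + h * Y i + (1 - θ) * (h * r)) ≤ z := hi
    linarith [hside j hj]
  have hne' : ∀ i,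
      (Ioo (X i - l₀ * (Y i + θ * r)) (X i + r - l₀ * (Y i + (1 - θ) * r))).Nonempty :=
    fun i => nonempty_Ioo.2 (hne i)
  obtain ⟨t, -, ht1, ht2⟩ := hconn
    (⋃ i ∈ A, Ioo (X i - l₀ * (Y i + θ * r)) (X i + r - l₀ * (Y i + (1 - θ) * r)))
    (⋃ i ∈ Aᶜ, Ioo (X i - l₀ * (Y i + θ * r)) (X i + r - l₀ * (Y i + (1 - θ) * r)))
    (isOpen_biUnion fun _ _ => isOpen_Ioo) (isOpen_biUnion fun _ _ => isOpen_Ioo)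
    (by
      intro t ht
      obtain ⟨i, hi⟩ := mem_iUnion.1 ht
      by_cases hiA : i ∈ A
      · exact Or.inl (mem_biUnion hiA hi)
      · exact Or.inr (mem_biUnion (show i ∈ Aᶜ from hiA) hi))
    (by
      obtain ⟨t, ht⟩ := hne' i₀
      exact ⟨t, mem_iUnion.2 ⟨i₀, ht⟩, mem_biUnion hi₀ ht⟩)
    (by
      obtain ⟨t, ht⟩ := hne' i₁
      exact ⟨t, mem_iUnion.2 ⟨i₁, ht⟩, mem_biUnion (show i₁ ∈ Aᶜ from hi₁) ht⟩)
  obtain ⟨i, hi, hti⟩ := mem_iUnion₂.1 ht1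
  obtain ⟨j, hj, htj⟩ := mem_iUnion₂.1 ht2
  exact (hdisj i hi j hj).subset ⟨hti, htj⟩

/-! ### Transfer of comparisons by the mean value theorem -/

lemma exists_slope {f : ℝ → ℝ} {s : Set ℝ} (hs : s.OrdConnected)
    (hf : ∀ x ∈ s, DifferentiableAt ℝ f x) {u v : ℝ} (hu : u ∈ s) (hv : v ∈ s) :
    ∃ ξ ∈ s, f v - f u = deriv f ξ * (v - u) := by
  have key : ∀ u ∈ s, ∀ v ∈ s, u < v → ∃ ξ ∈ s, f v - f u = deriv f ξ * (v - u) := by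
    intro u hu v hv huv
    have hsub : Icc u v ⊆ s := hs.out hu hv
    obtain ⟨ξ, hξ, he⟩ := exists_deriv_eq_slope f huv
      (fun x hx => (hf x (hsub hx)).continuousAt.continuousWithinAt)
      (fun x hx => (hf x (hsub (Ioo_subset_Icc_self hx))).differentiableWithinAt)
    refine ⟨ξ, hsub (Ioo_subset_Icc_self hξ), ?_⟩
    have : v - u ≠ 0 := by linarith
    rw [he]
    field_simp
  rcases lt_trichotomy u v with h | rfl | h
  · exact key u hu v hv h
  · exact ⟨u, hu, by simp⟩
  · obtain ⟨ξ, hξ, he⟩ := key v hv u hu h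
    exact ⟨ξ, hξ, by linarith⟩

lemma transfers_of_deriv {m₁ m₂ : ℝ} {f g : ℝ → ℝ} {s t : Set ℝ}
    (hs : s.OrdConnected) (ht : t.OrdConnected)
    (hf : ∀ x ∈ s, DifferentiableAt ℝ f x) (hg : ∀ y ∈ t, DifferentiableAt ℝ g y)
    (hpos : ∀ x ∈ s, 0 < deriv f x)
    (hratio : ∀ x ∈ s, ∀ y ∈ t, deriv g y / deriv f x ∈ Ioo m₁ m₂) :
    Transfers m₁ m₂ f g s t := by
  intro u hu v hv w hw z hz hl
  obtain ⟨ξ, hξ, e1⟩ := exists_slope hs hf hu hv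
  obtain ⟨η, hη, e2⟩ := exists_slope ht hg hw hz
  have h1 := hpos ξ hξ
  have h2 := mul_lt_mul_of_pos_left (hl _ (hratio ξ hξ η hη)) h1
  have e3 : deriv f ξ * (deriv g η / deriv f ξ) = deriv g η := by field_simp
  have h3 : deriv f ξ * u - deriv g η * w < deriv f ξ * v - deriv g η * z := by
    rw [← e3]
    linarith
  linarith

lemma continuousAt_deriv_of_contDiffAt {f : ℝ → ℝ} {x : ℝ} (hf : ContDiffAt ℝ 1 f x) :
    ContinuousAt (deriv f) x := by
  have h := (hf.fderiv_right (m := 0) (by simp)).continuousAt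
  have e : deriv f = fun y => fderiv ℝ f y 1 := by
    ext y
    simp
  rw [e]
  exact h.clm_apply continuousAt_const

/-- A `C¹` pair transfers comparisons near a point where the derivative ratio is in `(m₁, m₂)`. -/
lemma exists_transfers {m₁ m₂ x₀ y₀ : ℝ} {f g : ℝ → ℝ}
    (hf : ContDiffAt ℝ 1 f x₀) (hg : ContDiffAt ℝ 1 g y₀) (hpos : 0 < deriv f x₀)
    (hm : deriv g y₀ / deriv f x₀ ∈ Ioo m₁ m₂) :
    ∃ δ > 0, Transfers m₁ m₂ f g (Metric.ball x₀ δ) (Metric.ball y₀ δ) ∧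
      (∀ x ∈ Metric.ball x₀ δ, ContinuousAt f x) ∧ ∀ y ∈ Metric.ball y₀ δ, ContinuousAt g y := by
  have hdf : ContinuousAt (deriv f) x₀ := continuousAt_deriv_of_contDiffAt hf
  have hdg : ContinuousAt (deriv g) y₀ := continuousAt_deriv_of_contDiffAt hg
  have ef : ∀ᶠ x in nhds x₀, DifferentiableAt ℝ f x :=
    (hf.eventually (by simp)).mono fun x hx => hx.differentiableAt (by simp)
  have eg : ∀ᶠ x in nhds y₀, DifferentiableAt ℝ g x :=
    (hg.eventually (by simp)).mono fun x hx => hx.differentiableAt (by simp)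
  have ep : ∀ᶠ x in nhds x₀, 0 < deriv f x := hdf.eventually (lt_mem_nhds hpos)
  have hq : ContinuousAt (fun P : ℝ × ℝ => deriv g P.2 / deriv f P.1) (x₀, y₀) :=
    ContinuousAt.div (ContinuousAt.comp (g := deriv g) (f := Prod.snd) hdg continuousAt_snd)
      (ContinuousAt.comp (g := deriv f) (f := Prod.fst) hdf continuousAt_fst) hpos.ne'
  have eq : ∀ᶠ P in nhds (x₀, y₀), deriv g P.2 / deriv f P.1 ∈ Ioo m₁ m₂ :=
    hq.eventually (isOpen_Ioo.mem_nhds hm)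
  have eall : ∀ᶠ P in nhds (x₀, y₀), (DifferentiableAt ℝ f P.1 ∧ 0 < deriv f P.1) ∧
      DifferentiableAt ℝ g P.2 ∧ deriv g P.2 / deriv f P.1 ∈ Ioo m₁ m₂ := by
    have h1 := continuousAt_fst (p := (x₀, y₀)) |>.eventually (ef.and ep)
    have h2 := continuousAt_snd (p := (x₀, y₀)) |>.eventually eg
    filter_upwards [h1, h2, eq] with P a b c using ⟨a, b, c⟩
  obtain ⟨δ, hδ, hball⟩ := Metric.eventually_nhds_iff_ball.1 eall
  have hB : ∀ x ∈ Metric.ball x₀ δ, ∀ y ∈ Metric.ball y₀ δ,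
      (DifferentiableAt ℝ f x ∧ 0 < deriv f x) ∧
      DifferentiableAt ℝ g y ∧ deriv g y / deriv f x ∈ Ioo m₁ m₂ := fun x hx y hy =>
    hball (x, y) (by rw [← ball_prod_same]; exact ⟨hx, hy⟩)
  have hx₀ := Metric.mem_ball_self (x := x₀) hδ
  have hy₀ := Metric.mem_ball_self (x := y₀) hδ
  refine ⟨δ, hδ, transfers_of_deriv ?_ ?_ (fun x hx => (hB x hx y₀ hy₀).1.1)
    (fun y hy => (hB x₀ hx₀ y hy).2.1) (fun x hx => (hB x hx y₀ hy₀).1.2)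
    (fun x hx y hy => (hB x hx y hy).2.2), fun x hx => (hB x hx y₀ hy₀).1.1.continuousAt,
    fun y hy => (hB x₀ hx₀ y hy).2.1.continuousAt⟩
  · exact (convex_ball x₀ δ).ordConnected
  · exact (convex_ball y₀ δ).ordConnected

/-! ### The linear model and the descent -/

/-- The image of `I_λ` under a contraction, with `θ` recording the sign of `λ`. -/
lemma image_S14 {p q r θ l : ℝ} {m₀ n₀ : ℕ} (hr : 0 < r) (hrp : (p ^ m₀)⁻¹ = r)
    (hθ : (θ = 1 ∧ 0 < l) ∨ (θ = 0 ∧ l < 0)) (a : Fin m₀ → Bool) (b : Fin n₀ → Bool) :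
    S14 p q l m₀ n₀ a b '' I14 l =
      Ioo (wordPt (1 / p) a - l * (wordPt (1 / q) b + θ * r))
        (wordPt (1 / p) a + r - l * (wordPt (1 / q) b + (1 - θ) * r)) := by
  have hS : ∀ t, S14 p q l m₀ n₀ a b t = r * t + (wordPt (1 / p) a - l * wordPt (1 / q) b) := by
    intro t
    simp only [S14, wordPt, hrp]
    ring
  have hI : I14 l = Ioo (-(l * θ)) (1 - l * (1 - θ)) := by
    rcases hθ with ⟨rfl, h⟩ | ⟨rfl, h⟩
    · simp [I14, h]
    · simp [I14, not_lt.2 h.le]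
  rw [funext hS, hI, image_affine_Ioo hr]
  congr 1 <;> ring

/-- Descent through nested pairs of cylinders. -/
lemma mem_of_interval {p q r θ m₁ m₂ : ℝ} {m₀ n₀ : ℕ}
    (hα : 0 < 1 / p) (hα1 : 1 / p < 1) (hβ : 0 < 1 / q) (hβ1 : 1 / q < 1)
    (hr0 : 0 < r) (hr1 : r < 1) (hrp : (1 / p) ^ m₀ = r) (hrq : (1 / q) ^ n₀ = r)
    {f g : ℝ → ℝ} {x y h z : ℝ} (hh : 0 < h)
    (hcx : IsCyl (1 / p) x h) (hcy : IsCyl (1 / q) y h)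
    (hT : Transfers m₁ m₂ f g (Icc x (x + h)) (Icc y (y + h)))
    (hfc : ∀ u ∈ Icc x (x + h), ContinuousAt f u) (hgc : ∀ u ∈ Icc y (y + h), ContinuousAt g u)
    (hstep : ∀ x y h : ℝ, 0 < h → Transfers m₁ m₂ f g (Icc x (x + h)) (Icc y (y + h)) →
      z ∈ Ioo (f x - g (y + θ * h)) (f (x + h) - g (y + (1 - θ) * h)) →
      ∃ i : (Fin m₀ → Bool) × (Fin n₀ → Bool),
        z ∈ Ioo (f (x + h * wordPt (1 / p) i.1) - g (y + h * wordPt (1 / q) i.2 + θ * (h * r)))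
          (f (x + h * wordPt (1 / p) i.1 + h * r)
            - g (y + h * wordPt (1 / q) i.2 + (1 - θ) * (h * r))))
    (hz : z ∈ Ioo (f x - g (y + θ * h)) (f (x + h) - g (y + (1 - θ) * h))) :
    ∃ x ∈ middleCantor (1 / p), ∃ y ∈ middleCantor (1 / q), z = f x - g y := by
  -- The states of the descent: corners of the pairs of level `k` whose interval contains `z`.
  let Good : ℕ → ℝ × ℝ → Prop := fun k P =>
    (IsCyl (1 / p) P.1 (h * r ^ k) ∧ IsCyl (1 / q) P.2 (h * r ^ k)) ∧
    (Icc P.1 (P.1 + h * r ^ k) ⊆ Icc x (x + h) ∧ Icc P.2 (P.2 + h * r ^ k) ⊆ Icc y (y + h)) ∧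
    z ∈ Ioo (f P.1 - g (P.2 + θ * (h * r ^ k)))
      (f (P.1 + h * r ^ k) - g (P.2 + (1 - θ) * (h * r ^ k)))
  have hnext : ∀ k P, Good k P → ∃ P', Good (k + 1) P' ∧
      (P.1 ≤ P'.1 ∧ P'.1 + h * r ^ (k + 1) ≤ P.1 + h * r ^ k) ∧
      (P.2 ≤ P'.2 ∧ P'.2 + h * r ^ (k + 1) ≤ P.2 + h * r ^ k) := by
    rintro k ⟨a, b⟩ ⟨⟨c1, c2⟩, ⟨s1, s2⟩, hzk⟩
    dsimp only at c1 c2 s1 s2 hzk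
    have hk : 0 < h * r ^ k := by positivity
    obtain ⟨i, hi⟩ := hstep a b (h * r ^ k) hk
      (fun u hu v hv w hw t ht => hT u (s1 hu) v (s1 hv) w (s2 hw) t (s2 ht)) hzk
    have e : h * r ^ (k + 1) = h * r ^ k * r := by ring
    have a0 := wordPt_nonneg hα hα1 i.1
    have a1 := wordPt_add_le hα hα1 i.1
    have b0 := wordPt_nonneg hβ hβ1 i.2
    have b1 := wordPt_add_le hβ hβ1 i.2
    rw [hrp] at a1
    rw [hrq] at b1
    have ha : a ≤ a + h * r ^ k * wordPt (1 / p) i.1 ∧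
        a + h * r ^ k * wordPt (1 / p) i.1 + h * r ^ (k + 1) ≤ a + h * r ^ k := by
      constructor
      · nlinarith
      · rw [e]; nlinarith
    have hb : b ≤ b + h * r ^ k * wordPt (1 / q) i.2 ∧
        b + h * r ^ k * wordPt (1 / q) i.2 + h * r ^ (k + 1) ≤ b + h * r ^ k := by
      constructor
      · nlinarith
      · rw [e]; nlinarith
    refine ⟨(a + h * r ^ k * wordPt (1 / p) i.1, b + h * r ^ k * wordPt (1 / q) i.2),
      ⟨⟨?_, ?_⟩, ⟨?_, ?_⟩, ?_⟩, ha, hb⟩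
    · have := c1.child hα hα1 i.1
      rw [hrp] at this
      rwa [e]
    · have := c2.child hβ hβ1 i.2
      rw [hrq] at this
      rwa [e]
    · exact (Icc_subset_Icc ha.1 ha.2).trans s1
    · exact (Icc_subset_Icc hb.1 hb.2).trans s2
    · rw [e]
      exact hi
  choose! nxt hnxt using hnext
  let P : ℕ → ℝ × ℝ := fun k => Nat.rec (x, y) (fun k P => nxt k P) k
  have hP : ∀ k, Good k (P k) := by
    intro k
    induction k with
    | zero =>
      simp only [Good, P, pow_zero, mul_one]
      exact ⟨⟨hcx, hcy⟩, ⟨subset_rfl, subset_rfl⟩, hz⟩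
    | succ k ih => exact (hnxt k _ ih).1
  have hPs : ∀ k, ((P k).1 ≤ (P (k + 1)).1 ∧
      (P (k + 1)).1 + h * r ^ (k + 1) ≤ (P k).1 + h * r ^ k) ∧
      ((P k).2 ≤ (P (k + 1)).2 ∧ (P (k + 1)).2 + h * r ^ (k + 1) ≤ (P k).2 + h * r ^ k) :=
    fun k => (hnxt k _ (hP k)).2
  have hrk : Filter.Tendsto (fun k : ℕ => h * r ^ k) Filter.atTop (nhds 0) := by
    simpa using (tendsto_pow_atTop_nhds_zero_of_lt_one hr0.le hr1).const_mul h
  have hin : ∀ k, (P k).1 ∈ Icc x (x + h) ∧ (P k).2 ∈ Icc y (y + h) := by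
    intro k
    have hk : 0 ≤ h * r ^ k := by positivity
    exact ⟨(hP k).2.1.1 (left_mem_Icc.2 (by linarith)), (hP k).2.1.2 (left_mem_Icc.2 (by linarith))⟩
  have hlim1 : Filter.Tendsto (fun k => (P k).1) Filter.atTop (nhds (⨆ k, (P k).1)) :=
    tendsto_atTop_ciSup (monotone_nat_of_le_succ fun k => (hPs k).1.1)
      ⟨x + h, by rintro _ ⟨k, rfl⟩; exact (hin k).1.2⟩
  have hlim2 : Filter.Tendsto (fun k => (P k).2) Filter.atTop (nhds (⨆ k, (P k).2)) :=
    tendsto_atTop_ciSup (monotone_nat_of_le_succ fun k => (hPs k).2.1)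
      ⟨y + h, by rintro _ ⟨k, rfl⟩; exact (hin k).2.2⟩
  set xl := ⨆ k, (P k).1
  set yl := ⨆ k, (P k).2
  have hxl : xl ∈ Icc x (x + h) :=
    isClosed_Icc.mem_of_tendsto hlim1 (Filter.Eventually.of_forall fun k => (hin k).1)
  have hyl : yl ∈ Icc y (y + h) :=
    isClosed_Icc.mem_of_tendsto hlim2 (Filter.Eventually.of_forall fun k => (hin k).2)
  have hxC : xl ∈ middleCantor (1 / p) :=
    (isClosed_middleCantor hα hα1).mem_of_tendsto hlim1 (Filter.Eventually.of_forall fun k => by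
      simpa using (hP k).1.1 0 (zero_mem_middleCantor _))
  have hyC : yl ∈ middleCantor (1 / q) :=
    (isClosed_middleCantor hβ hβ1).mem_of_tendsto hlim2 (Filter.Eventually.of_forall fun k => by
      simpa using (hP k).1.2 0 (zero_mem_middleCantor _))
  have hlim3 : Filter.Tendsto (fun k => (P k).1 + h * r ^ k) Filter.atTop (nhds xl) := by
    simpa using hlim1.add hrk
  have hlim4 : ∀ s : ℝ, Filter.Tendsto (fun k => (P k).2 + s * (h * r ^ k)) Filter.atTop
      (nhds yl) := by
    intro s
    simpa using hlim2.add (hrk.const_mul s)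
  have hf := hfc xl hxl
  have hg := hgc yl hyl
  have hlo := (hf.tendsto.comp hlim1).sub (hg.tendsto.comp (hlim4 θ))
  have hhi := (hf.tendsto.comp hlim3).sub (hg.tendsto.comp (hlim4 (1 - θ)))
  refine ⟨xl, hxC, yl, hyC, le_antisymm ?_ ?_⟩
  · exact ge_of_tendsto' hhi fun k => (hP k).2.2.2.le
  · exact le_of_tendsto' hlo fun k => (hP k).2.2.1.le

/-- The theorem when the derivative of `f` at `x₀` is positive. -/
lemma stmt14_of_pos (p q : ℝ) (hp : 2 < p) (hq : 2 < q) (n₀ m₀ : ℕ) (hm₀ : 0 < m₀)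
    (hratio : Real.log p / Real.log q = (n₀ : ℝ) / (m₀ : ℝ))
    (m₁ m₂ : ℝ) (hm : m₁ < m₂) (h0 : (0 : ℝ) ∉ Set.Ioo m₁ m₂)
    (hconn : ∀ l ∈ Set.Ioo m₁ m₂,
      IsConnected (⋃ (a : Fin m₀ → Bool) (b : Fin n₀ → Bool), S14 p q l m₀ n₀ a b '' I14 l))
    (hlink : ∀ (a a' : Fin m₀ → Bool) (b b' : Fin n₀ → Bool),
      (∀ l ∈ Set.Ioo m₁ m₂,
        S14 p q l m₀ n₀ a b '' I14 l ∩ S14 p q l m₀ n₀ a' b' '' I14 l = ∅) ∨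
      (∃ d : ℝ, ∀ l ∈ Set.Ioo m₁ m₂,
        d ∈ S14 p q l m₀ n₀ a b '' I14 l ∩ S14 p q l m₀ n₀ a' b' '' I14 l))
    (f g : ℝ → ℝ) (x₀ y₀ : ℝ)
    (hx₀ : x₀ ∈ middleCantor (1 / p)) (hy₀ : y₀ ∈ middleCantor (1 / q))
    (hf : ContDiffAt ℝ 1 f x₀) (hg : ContDiffAt ℝ 1 g y₀)
    (hf' : 0 < deriv f x₀) (hmem : deriv g y₀ / deriv f x₀ ∈ Ioo m₁ m₂) :
    ∃ u v : ℝ, u < v ∧ Set.Ioo u v ⊆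
      {z : ℝ | ∃ x ∈ middleCantor (1 / p), ∃ y ∈ middleCantor (1 / q), z = f x - g y} := by
  have hα : 0 < 1 / p := by positivity
  have hβ : 0 < 1 / q := by positivity
  have hα1 : 1 / p < 1 := by rw [div_lt_one (by linarith)]; linarith
  have hβ1 : 1 / q < 1 := by rw [div_lt_one (by linarith)]; linarith
  have hpq : p ^ m₀ = q ^ n₀ := by
    have hlq : 0 < Real.log q := Real.log_pos (by linarith)
    have hm' : (m₀ : ℝ) ≠ 0 := by positivity
    have e : (m₀ : ℝ) * Real.log p = n₀ * Real.log q := by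
      field_simp at hratio
      linarith
    rw [← Real.log_pow, ← Real.log_pow] at e
    exact Real.log_injOn_pos (mem_Ioi.2 (by positivity)) (mem_Ioi.2 (by positivity)) e
  obtain ⟨r, hr⟩ : ∃ r, r = (1 / p) ^ m₀ := ⟨_, rfl⟩
  have hrp : (1 / p) ^ m₀ = r := hr.symm
  have hrp' : (p ^ m₀)⁻¹ = r := by rw [hr]; simp
  have hrq : (1 / q) ^ n₀ = r := by rw [← hrp', hpq]; simp
  have hr0 : 0 < r := by rw [hr]; positivity
  have hr1 : r < 1 := by rw [hr]; exact pow_lt_one₀ hα.le hα1 hm₀.ne'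
  obtain ⟨θ, hθ⟩ : ∃ θ : ℝ, ∀ l ∈ Ioo m₁ m₂, (θ = 1 ∧ 0 < l) ∨ (θ = 0 ∧ l < 0) := by
    by_cases h : 0 ≤ m₁
    · exact ⟨1, fun l hl => Or.inl ⟨rfl, h.trans_lt hl.1⟩⟩
    · have h2 : m₂ ≤ 0 := by
        by_contra h3
        exact h0 ⟨not_le.1 h, not_le.1 h3⟩
      exact ⟨0, fun l hl => Or.inr ⟨rfl, hl.2.trans_le h2⟩⟩
  obtain ⟨l₀, hl₀⟩ : ∃ l₀, l₀ ∈ Ioo m₁ m₂ := nonempty_Ioo.2 hm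
  have hθ01 : θ = 0 ∨ θ = 1 := by
    rcases hθ l₀ hl₀ with h | h
    · exact Or.inr h.1
    · exact Or.inl h.1
  have himg : ∀ l ∈ Ioo m₁ m₂, ∀ a b, S14 p q l m₀ n₀ a b '' I14 l = _ :=
    fun l hl a b => image_S14 (p := p) (q := q) (m₀ := m₀) (n₀ := n₀) hr0 hrp' (hθ l hl) a b
  have hmodel : ∀ l ∈ Ioo m₁ m₂, 0 < 1 - l * (1 - 2 * θ) := by
    intro l hl
    rcases hθ l hl with ⟨rfl, h⟩ | ⟨rfl, h⟩ <;> linarith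
  obtain ⟨δ, hδ, hT, hfc, hgc⟩ := exists_transfers hf hg hf' hmem
  obtain ⟨K, hK⟩ := exists_pow_lt_of_lt_one hδ hr1
  obtain ⟨x, hcx, hx⟩ := exists_isCyl hα hα1 hx₀ (m₀ * K)
  obtain ⟨y, hcy, hy⟩ := exists_isCyl hβ hβ1 hy₀ (n₀ * K)
  rw [pow_mul, hrp] at hcx hx
  rw [pow_mul, hrq] at hcy hy
  have hh : 0 < r ^ K := by positivity
  generalize r ^ K = h at *
  have hsx : Icc x (x + h) ⊆ Metric.ball x₀ δ := by
    intro u hu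
    rw [Metric.mem_ball, Real.dist_eq, abs_lt]
    constructor <;> linarith [hu.1, hu.2, hx.1, hx.2]
  have hsy : Icc y (y + h) ⊆ Metric.ball y₀ δ := by
    intro u hu
    rw [Metric.mem_ball, Real.dist_eq, abs_lt]
    constructor <;> linarith [hu.1, hu.2, hy.1, hy.2]
  have hT' : Transfers m₁ m₂ f g (Icc x (x + h)) (Icc y (y + h)) :=
    fun u hu v hv w hw t ht => hT u (hsx hu) v (hsx hv) w (hsy hw) t (hsy ht)
  refine ⟨f x - g (y + θ * h), f (x + h) - g (y + (1 - θ) * h), ?_, ?_⟩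
  · refine hT' _ ?_ _ ?_ _ ?_ _ ?_ fun l hl => ?_
    · exact ⟨le_rfl, by linarith⟩
    · exact ⟨by linarith, le_rfl⟩
    · rcases hθ01 with rfl | rfl <;> constructor <;> linarith
    · rcases hθ01 with rfl | rfl <;> constructor <;> linarith
    · have := mul_pos hh (hmodel l hl)
      linarith
  · intro z hz
    refine mem_of_interval (m₁ := m₁) (m₂ := m₂) (θ := θ) hα hα1 hβ hβ1 hr0 hr1 hrp hrq hh hcx hcy
      hT' (fun u hu => hfc u (hsx hu)) (fun u hu => hgc u (hsy hu)) ?_ hz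
    intro x y h hh hT hz
    refine exists_child (ι := (Fin m₀ → Bool) × (Fin n₀ → Bool))
      (X := fun i => wordPt (1 / p) i.1) (Y := fun i => wordPt (1 / q) i.2) (l₀ := l₀)
      hr0 hθ01 (fun i => wordPt_nonneg hα hα1 i.1)
      (fun i => by simpa only [hrp] using wordPt_add_le hα hα1 i.1)
      (fun i => wordPt_nonneg hβ hβ1 i.2)
      (fun i => by simpa only [hrq] using wordPt_add_le hβ hβ1 i.2)
      -- The extreme children; the word chosen in `C_β` depends on the sign of `λ`.
      (fun _ => false, fun _ => decide (θ = 1)) (fun _ => true, fun _ => decide (θ = 0))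
      (wordPt_false _ _) ?_ ?_ ?_ ?_ ?_ ?_ hh hT hz
    · rcases hθ01 with rfl | rfl
      · simp [wordPt_false]
      · simpa [← hrq] using wordPt_true (1 / q) n₀
    · simpa only [hrp] using wordPt_true (1 / p) m₀
    · rcases hθ01 with rfl | rfl
      · simpa [← hrq] using wordPt_true (1 / q) n₀
      · simp [wordPt_false]
    · have := (hconn l₀ hl₀).isPreconnected
      simp only [himg l₀ hl₀] at this
      rwa [iUnion_prod']
    · intro i
      have := mul_pos hr0 (hmodel l₀ hl₀)
      linarith
    · intro i j
      rcases hlink i.1 j.1 i.2 j.2 with h | ⟨d, hd⟩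
      · left
        have := h l₀ hl₀
        rwa [himg l₀ hl₀, himg l₀ hl₀] at this
      · right
        intro l hl
        have := hd l hl
        rw [himg l hl, himg l hl] at this
        exact this.2.1.trans this.1.2

theorem stmt14 (p q : ℝ) (hp : 2 < p) (hq : 2 < q) (n₀ m₀ : ℕ)
    (hn₀ : 0 < n₀) (hm₀ : 0 < m₀) (hcop : Nat.Coprime n₀ m₀)
    (hratio : Real.log p / Real.log q = (n₀ : ℝ) / (m₀ : ℝ))
    (m₁ m₂ : ℝ) (hm : m₁ < m₂) (h0 : (0 : ℝ) ∉ Set.Ioo m₁ m₂)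
    -- (i) for each `λ ∈ (m₁, m₂)` the union of the images of `I_λ` is connected:
    (hconn : ∀ l ∈ Set.Ioo m₁ m₂,
      IsConnected (⋃ (a : Fin m₀ → Bool) (b : Fin n₀ → Bool), S14 p q l m₀ n₀ a b '' I14 l))
    -- (ii) any two images are either disjoint for all `λ`, or share a common point `d`
    -- for all `λ`:
    (hlink : ∀ (a a' : Fin m₀ → Bool) (b b' : Fin n₀ → Bool),
      (∀ l ∈ Set.Ioo m₁ m₂,
        S14 p q l m₀ n₀ a b '' I14 l ∩ S14 p q l m₀ n₀ a' b' '' I14 l = ∅) ∨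
      (∃ d : ℝ, ∀ l ∈ Set.Ioo m₁ m₂,
        d ∈ S14 p q l m₀ n₀ a b '' I14 l ∩ S14 p q l m₀ n₀ a' b' '' I14 l))
    (f g : ℝ → ℝ) (x₀ y₀ : ℝ)
    (hx₀ : x₀ ∈ middleCantor (1 / p)) (hy₀ : y₀ ∈ middleCantor (1 / q))
    (hf : ∃ U ∈ nhds x₀, ContDiffOn ℝ 1 f U) (hg : ∃ V ∈ nhds y₀, ContDiffOn ℝ 1 g V)
    (hf' : deriv f x₀ ≠ 0)
    (hm₁ : m₁ < deriv g y₀ / deriv f x₀) (hm₂ : deriv g y₀ / deriv f x₀ < m₂) :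
    ∃ u v : ℝ, u < v ∧ Set.Ioo u v ⊆
      {z : ℝ | ∃ x ∈ middleCantor (1 / p), ∃ y ∈ middleCantor (1 / q), z = f x - g y} := by
  have hfa : ContDiffAt ℝ 1 f x₀ := by
    obtain ⟨U, hU, h⟩ := hf
    exact h.contDiffAt hU
  have hga : ContDiffAt ℝ 1 g y₀ := by
    obtain ⟨V, hV, h⟩ := hg
    exact h.contDiffAt hV
  rcases lt_or_gt_of_ne hf' with hneg | hpos
    -- The pair `(-f, -g)` has the same derivative ratio and the negated difference set.
  · obtain ⟨u, v, huv, hsub⟩ := stmt14_of_pos p q hp hq n₀ m₀ hm₀ hratio m₁ m₂ hm h0 hconn hlink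
      (-f) (-g) x₀ y₀ hx₀ hy₀ hfa.neg hga.neg (by rw [deriv.neg]; linarith)
      (by rw [deriv.neg, deriv.neg, neg_div_neg_eq]; exact ⟨hm₁, hm₂⟩)
    refine ⟨-v, -u, by linarith, fun z hz => ?_⟩
    obtain ⟨x, hx, y, hy, h⟩ := hsub
      (show -z ∈ Ioo u v from ⟨by linarith [hz.2], by linarith [hz.1]⟩)
    refine ⟨x, hx, y, hy, ?_⟩
    simp only [Pi.neg_apply] at h
    linarith
  · exact stmt14_of_pos p q hp hq n₀ m₀ hm₀ hratio m₁ m₂ hm h0 hconn hlink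
      f g x₀ y₀ hx₀ hy₀ hfa hga hpos ⟨hm₁, hm₂⟩
end

section
/- Let C be the middle-thirds Cantor set C_{1/3}. Then the set { x² + y² : x ∈ C, y ∈ C } contains a nonempty open interval. -/
/-!
The set `C × C` contains the Cantor dust `(8/9 + C/9) × (2/3 + C/9)`, and `x² + y²` maps this dust
onto an interval. On a square `[x, x+s] × [y, y+s]` satisfying `x + s ≤ 3y` and `y + s ≤ x`, the
image of the square under `x² + y²` is already covered by the images of its four corner squares of
side `s/3`: removing the middle third in `x` leaves no hole since `x ≤ 3y`, and then removing the
middle third in `y` leaves no hole since `y + s ≤ x`. Both inequalities are inherited by the corner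
squares, so every value is attained at each finite level (`exists_preCantor`), and
compactness passes this to the limit. The ratio `y/x` is bounded away from `1/3` and `1` on the dust,
which is why the borderline thickness of the middle-thirds set causes no trouble.
-/

open Set MeasureTheory

/-- Every value of `x² + y²` on a suitable square is attained on the level-`n` approximation of the
Cantor dust in that square. -/
lemma exists_preCantor (n : ℕ) : ∀ x y s t : ℝ, 0 ≤ x → 0 ≤ y → 0 ≤ s → x + s ≤ 3 * y → y + s ≤ x →
    x ^ 2 + y ^ 2 ≤ t → t ≤ (x + s) ^ 2 + (y + s) ^ 2 →
    ∃ c ∈ preCantorSet n, ∃ d ∈ preCantorSet n, (x + s * c) ^ 2 + (y + s * d) ^ 2 = t := by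
  induction n with
  | zero =>
    intro x y s t _ _ _ _ _ h1 h2
    have hc : ContinuousOn (fun c : ℝ => (x + s * c) ^ 2 + (y + s * c) ^ 2) (Icc 0 1) := by
      fun_prop
    obtain ⟨c, hc, h⟩ := intermediate_value_Icc zero_le_one hc
      (show t ∈ Icc _ _ from ⟨by simpa using h1, by simpa using h2⟩)
    exact ⟨c, by simpa using hc, c, by simpa using hc, h⟩
  | succ n ih =>
    intro x y s t hx hy hs hxy hyx h1 h2
    have left : ∀ c ∈ preCantorSet n, c / 3 ∈ preCantorSet (n + 1) := fun c hc => by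
      rw [preCantorSet_succ]; exact Or.inl ⟨c, hc, rfl⟩
    have right : ∀ c ∈ preCantorSet n, (2 + c) / 3 ∈ preCantorSet (n + 1) := fun c hc => by
      rw [preCantorSet_succ]; exact Or.inr ⟨c, hc, rfl⟩
    by_cases hA : t ≤ (x + s / 3) ^ 2 + (y + s) ^ 2
    · by_cases hB : t ≤ (x + s / 3) ^ 2 + (y + s / 3) ^ 2
      · obtain ⟨c, hc, d, hd, h⟩ := ih x y (s / 3) t hx hy (by linarith) (by linarith)
          (by linarith) h1 hB
        exact ⟨_, left c hc, _, left d hd, by rw [← h]; ring⟩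
      · obtain ⟨c, hc, d, hd, h⟩ := ih x (y + 2 * s / 3) (s / 3) t hx (by linarith)
          (by linarith) (by linarith) (by linarith) (by nlinarith) (by convert hA using 3; ring)
        exact ⟨_, left c hc, _, right d hd, by rw [← h]; ring⟩
    · by_cases hB : t ≤ (x + s) ^ 2 + (y + s / 3) ^ 2
      · obtain ⟨c, hc, d, hd, h⟩ := ih (x + 2 * s / 3) y (s / 3) t (by linarith) hy
          (by linarith) (by linarith) (by linarith) (by nlinarith) (by convert hB using 3; ring)
        exact ⟨_, right c hc, _, left d hd, by rw [← h]; ring⟩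
      · obtain ⟨c, hc, d, hd, h⟩ := ih (x + 2 * s / 3) (y + 2 * s / 3) (s / 3) t (by linarith)
          (by linarith) (by linarith) (by linarith) (by linarith) (by nlinarith)
          (by convert h2 using 3 <;> ring)
        exact ⟨_, right c hc, _, right d hd, by rw [← h]; ring⟩

lemma exists_cantor (x y s t : ℝ) (hx : 0 ≤ x) (hy : 0 ≤ y) (hs : 0 ≤ s) (hxy : x + s ≤ 3 * y)
    (hyx : y + s ≤ x) (h1 : x ^ 2 + y ^ 2 ≤ t) (h2 : t ≤ (x + s) ^ 2 + (y + s) ^ 2) :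
    ∃ c ∈ cantorSet, ∃ d ∈ cantorSet, (x + s * c) ^ 2 + (y + s * d) ^ 2 = t := by
  let K : ℕ → Set (ℝ × ℝ) := fun n => (preCantorSet n ×ˢ preCantorSet n) ∩
    {p | (x + s * p.1) ^ 2 + (y + s * p.2) ^ 2 = t}
  have hl : IsClosed {p : ℝ × ℝ | (x + s * p.1) ^ 2 + (y + s * p.2) ^ 2 = t} :=
    isClosed_eq (by fun_prop) (by fun_prop)
  have hcl : ∀ n, IsClosed (K n) := fun n =>
    ((isClosed_preCantorSet n).prod (isClosed_preCantorSet n)).inter hl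
  have h0 : IsCompact (K 0) := by
    refine IsCompact.inter_right ?_ hl
    simpa using (isCompact_Icc (a := (0 : ℝ)) (b := 1)).prod isCompact_Icc
  obtain ⟨p, hp⟩ := IsCompact.nonempty_iInter_of_sequence_nonempty_isCompact_isClosed K
    (fun n => inter_subset_inter_left _
      (prod_mono (preCantorSet_antitone n.le_succ) (preCantorSet_antitone n.le_succ)))
    (fun n => by
      obtain ⟨c, hc, d, hd, h⟩ := exists_preCantor n x y s t hx hy hs hxy hyx h1 h2
      exact ⟨(c, d), ⟨hc, hd⟩, h⟩) h0 hcl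
  rw [mem_iInter] at hp
  exact ⟨p.1, mem_iInter.2 fun n => (hp n).1.1, p.2, mem_iInter.2 fun n => (hp n).1.2, (hp 0).2⟩

lemma cantorSet_subset_middleCantor : cantorSet ⊆ middleCantor (1 / 3) := by
  intro x hx
  rw [cantorSet_eq_zero_two_ofDigits] at hx
  obtain ⟨a, ha, rfl⟩ := hx
  refine ⟨fun k => decide (a k = 2), ?_⟩
  rw [← tsum_mul_left]
  refine tsum_congr fun k => ?_
  have h : a k = 0 ∨ a k = 2 := by have := ha k; revert this; generalize a k = z; decide +revert
  rcases h with h | h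
  · simp [Real.ofDigitsTerm, h]
  · simp [Real.ofDigitsTerm, h, pow_succ]; ring

lemma cantorSet_left {c : ℝ} (hc : c ∈ cantorSet) : c / 3 ∈ cantorSet := by
  rw [cantorSet_eq_union_halves]; exact Or.inl ⟨c, hc, rfl⟩

lemma cantorSet_right {c : ℝ} (hc : c ∈ cantorSet) : (2 + c) / 3 ∈ cantorSet := by
  rw [cantorSet_eq_union_halves]; exact Or.inr ⟨c, hc, rfl⟩

theorem stmt15 :
    ∃ u v : ℝ, u < v ∧ Set.Ioo u v ⊆
      {z : ℝ | ∃ x ∈ middleCantor (1 / 3), ∃ y ∈ middleCantor (1 / 3), z = x ^ 2 + y ^ 2} := by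
  refine ⟨(8 / 9) ^ 2 + (2 / 3) ^ 2, (8 / 9 + 1 / 9) ^ 2 + (2 / 3 + 1 / 9) ^ 2, by norm_num, ?_⟩
  intro t ht
  obtain ⟨c, hc, d, hd, h⟩ := exists_cantor (8 / 9) (2 / 3) (1 / 9) t (by norm_num) (by norm_num)
    (by norm_num) (by norm_num) (by norm_num) ht.1.le ht.2.le
  exact ⟨_, cantorSet_subset_middleCantor (cantorSet_right (cantorSet_right hc)),
    _, cantorSet_subset_middleCantor (cantorSet_right (cantorSet_left hd)), by rw [← h]; ring⟩
end

section
/- Let C be the middle-thirds Cantor set C_{1/3}. Then the set { sin x + cos y : x ∈ C, y ∈ C } contains a nonempty open interval. -/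
/-!
The restrictions of `sin` to `[0, 1/3]` and of `-cos` to `[2/3, 1]` are increasing, with derivatives
in `[17/18, 1]` and `[1/3, 17/18]` respectively. Hence the ratio of the two derivatives stays
between `1` and `3`. For triadic intervals `I ⊆ [0, 1/3]`, `J ⊆ [2/3, 1]` of equal length, this
implies that the four intervals `sin I' + cos J'`, where `I'`, `J'` run over the outer thirds of `I`
and `J`, cover `sin I + cos J` (`exists_digits`): in increasing order, consecutive ones overlap.

Given any `z` in `sin [0, 1/3] + cos [2/3, 1]`, this covering property is iterated to choose the
triadic digits of `x` and `y` one after another. The nested intervals shrink to points `x`, `y` of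
the Cantor set, and `sin x + cos y = z` by continuity.
-/

open Set MeasureTheory

theorem sin_sub_bounds {u v : ℝ} (h0 : 0 ≤ u) (huv : u ≤ v) (h1 : v ≤ 1 / 3) :
    17 / 18 * (v - u) ≤ Real.sin v - Real.sin u ∧ Real.sin v - Real.sin u ≤ v - u := by
  have hu : u ∈ Icc (0 : ℝ) (1 / 3) := ⟨h0, huv.trans h1⟩
  have hv : v ∈ Icc (0 : ℝ) (1 / 3) := ⟨h0.trans huv, h1⟩
  constructor
  · refine (convex_Icc (0 : ℝ) (1 / 3)).mul_sub_le_image_sub_of_le_deriv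
      Real.continuous_sin.continuousOn Real.differentiable_sin.differentiableOn ?_ u hu v hv huv
    intro x hx
    rw [interior_Icc] at hx
    rw [Real.deriv_sin]
    nlinarith [Real.one_sub_sq_div_two_le_cos (x := x), hx.1, hx.2]
  · have := (convex_Icc (0 : ℝ) (1 / 3)).image_sub_le_mul_sub_of_deriv_le
      (f := Real.sin) (C := 1)
      Real.continuous_sin.continuousOn Real.differentiable_sin.differentiableOn
      (fun x _ => by rw [Real.deriv_sin]; exact Real.cos_le_one x) u hu v hv huv
    linarith

theorem cos_sub_bounds {u v : ℝ} (h0 : 2 / 3 ≤ u) (huv : u ≤ v) (h1 : v ≤ 1) :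
    1 / 3 * (v - u) ≤ Real.cos u - Real.cos v ∧
      Real.cos u - Real.cos v ≤ 17 / 18 * (v - u) := by
  have hu : u ∈ Icc (2 / 3 : ℝ) 1 := ⟨h0, huv.trans h1⟩
  have hv : v ∈ Icc (2 / 3 : ℝ) 1 := ⟨h0.trans huv, h1⟩
  have key : ∀ x ∈ interior (Icc (2 / 3 : ℝ) 1), 1 / 3 ≤ Real.sin x ∧ Real.sin x ≤ 17 / 18 := by
    intro x hx
    rw [interior_Icc] at hx
    obtain ⟨hx0, hx1⟩ := hx
    constructor
    · have h := Real.sin_gt_sub_cube (x := x) (by linarith)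
      have h3 : x ^ 3 ≤ x := by
        have : x ^ 2 ≤ 1 := by nlinarith
        nlinarith
      linarith
    · -- On `[0, 1]` one has `cos x ≥ 1 / 2`, hence `sin x ≤ √3 / 2 < 17 / 18`.
      have hc : 1 / 2 ≤ Real.cos x := by
        nlinarith [Real.one_sub_sq_div_two_le_cos (x := x)]
      nlinarith [Real.sin_sq_add_cos_sq x]
  constructor
  · have := (convex_Icc (2 / 3 : ℝ) 1).image_sub_le_mul_sub_of_deriv_le
      (f := Real.cos) (C := -(1 / 3))
      Real.continuous_cos.continuousOn Real.differentiable_cos.differentiableOn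
      (fun x hx => by rw [Real.deriv_cos]; linarith [(key x hx).1]) u hu v hv huv
    linarith
  · have := (convex_Icc (2 / 3 : ℝ) 1).mul_sub_le_image_sub_of_le_deriv
      (f := Real.cos) (C := -(17 / 18))
      Real.continuous_cos.continuousOn Real.differentiable_cos.differentiableOn
      (fun x hx => by rw [Real.deriv_cos]; linarith [(key x hx).2]) u hu v hv huv
    linarith

/-- The intervals `I = [a, a + h] ⊆ [0, 1/3]` and `J = [b, b + h] ⊆ [2/3, 1]` satisfy
`z ∈ sin I + cos J`; the latter set is an interval whose endpoints appear in the definition. -/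
def Reaches (z h a b : ℝ) : Prop :=
  0 ≤ a ∧ a + h ≤ 1 / 3 ∧ 2 / 3 ≤ b ∧ b + h ≤ 1 ∧
    Real.sin a + Real.cos (b + h) ≤ z ∧ z ≤ Real.sin (a + h) + Real.cos b

/-- The covering property: `z` is still reached after replacing each of the two intervals by a
suitable one of its outer thirds. -/
theorem exists_digits {z h a b : ℝ} (hh : 0 ≤ h) (H : Reaches z h a b) :
    ∃ d e : Bool, Reaches z (1 / 3 * h) (a + 2 / 3 * if d then h else 0)
      (b + 2 / 3 * if e then h else 0) := by
  obtain ⟨ha, ha', hb, hb', h1, h2⟩ := H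
  have s1 := sin_sub_bounds (u := a) (v := a + 1 / 3 * h) ha (by linarith) (by linarith)
  have s2 := sin_sub_bounds (u := a + 1 / 3 * h) (v := a + 2 / 3 * h)
    (by linarith) (by linarith) (by linarith)
  have s3 := sin_sub_bounds (u := a + 2 / 3 * h) (v := a + h)
    (by linarith) (by linarith) (by linarith)
  have c2 := cos_sub_bounds (u := b + 1 / 3 * h) (v := b + 2 / 3 * h)
    (by linarith) (by linarith) (by linarith)
  have c3 := cos_sub_bounds (u := b) (v := b + h) (by linarith) (by linarith) (by linarith)
  have e3 (x : ℝ) : x + 2 / 3 * h + 1 / 3 * h = x + h := by ring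
  -- The four subintervals in increasing order are those with digits `01`, `00`, `11`, `10`.
  rcases le_or_gt z (Real.sin (a + 1 / 3 * h) + Real.cos (b + 2 / 3 * h)) with k1 | k1
  · refine ⟨false, true, ?_⟩
    simp only [Reaches, if_true, Bool.false_eq_true, if_false, mul_zero, add_zero, e3]
    refine ⟨?_, ?_, ?_, ?_, ?_, ?_⟩ <;> linarith
  rcases le_or_gt z (Real.sin (a + 1 / 3 * h) + Real.cos b) with k2 | k2
  · refine ⟨false, false, ?_⟩
    simp only [Reaches, Bool.false_eq_true, if_false, mul_zero, add_zero]
    refine ⟨?_, ?_, ?_, ?_, ?_, ?_⟩ <;> linarith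
  rcases le_or_gt z (Real.sin (a + h) + Real.cos (b + 2 / 3 * h)) with k3 | k3
  · refine ⟨true, true, ?_⟩
    simp only [Reaches, if_true, e3]
    refine ⟨?_, ?_, ?_, ?_, ?_, ?_⟩ <;> linarith
  · refine ⟨true, false, ?_⟩
    simp only [Reaches, if_true, Bool.false_eq_true, if_false, mul_zero, add_zero, e3]
    refine ⟨?_, ?_, ?_, ?_, ?_, ?_⟩ <;> linarith

theorem tendsto_cantor_partial (ε : ℕ → Bool) :
    Filter.Tendsto
      (fun n : ℕ => 2 / 3 * ∑ k ∈ Finset.range (n + 1), if ε k then (1 / 3 : ℝ) ^ k else 0)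
      Filter.atTop (nhds ((1 - 1 / 3) * ∑' k : ℕ, if ε k then (1 / 3 : ℝ) ^ k else 0)) := by
  have hs : Summable (fun k : ℕ => if ε k then (1 / 3 : ℝ) ^ k else 0) := by
    refine Summable.of_nonneg_of_le (fun k => ?_) (fun k => ?_)
      (summable_geometric_of_lt_one (r := (1 / 3 : ℝ)) (by norm_num) (by norm_num))
    · split_ifs <;> positivity
    · split_ifs
      · exact le_rfl
      · positivity
  have h := (hs.hasSum.tendsto_sum_nat.comp (Filter.tendsto_add_atTop_nat 1)).const_mul (2 / 3 : ℝ)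
  have e : (1 - 1 / 3 : ℝ) = 2 / 3 := by norm_num
  rw [e]
  exact h

theorem mem_of_reaches {z : ℝ} (hz : Reaches z (1 / 3) 0 (2 / 3)) :
    ∃ x ∈ middleCantor (1 / 3), ∃ y ∈ middleCantor (1 / 3), z = Real.sin x + Real.cos y := by
  have step : ∀ (n : ℕ) (a b : ℝ), Reaches z ((1 / 3) ^ (n + 1)) a b → ∃ d e : Bool,
      Reaches z ((1 / 3) ^ (n + 1 + 1)) (a + 2 / 3 * if d then (1 / 3 : ℝ) ^ (n + 1) else 0)
        (b + 2 / 3 * if e then (1 / 3 : ℝ) ^ (n + 1) else 0) := by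
    intro n a b H
    rw [pow_succ' (1 / 3 : ℝ) (n + 1)]
    exact exists_digits (by positivity) H
  choose! d e hde using step
  let S : ℕ → ℝ × ℝ := fun n => Nat.rec (motive := fun _ => ℝ × ℝ) (0, 2 / 3)
    (fun n s => (s.1 + 2 / 3 * (if d n s.1 s.2 then (1 / 3 : ℝ) ^ (n + 1) else 0),
      s.2 + 2 / 3 * (if e n s.1 s.2 then (1 / 3 : ℝ) ^ (n + 1) else 0))) n
  have hS : ∀ n, Reaches z ((1 / 3) ^ (n + 1)) (S n).1 (S n).2 := by
    intro n
    induction n with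
    | zero => simpa [S] using hz
    | succ n ih => exact hde n _ _ ih
  -- The leading digits `0` and `1` place `x` in `[0, 1/3]` and `y` in `[2/3, 1]`.
  let ε : ℕ → Bool := fun k => Nat.casesOn (motive := fun _ => Bool) k false (fun n => d n (S n).1 (S n).2)
  let δ : ℕ → Bool := fun k => Nat.casesOn (motive := fun _ => Bool) k true (fun n => e n (S n).1 (S n).2)
  have hS1 : ∀ n : ℕ, 2 / 3 * (∑ k ∈ Finset.range (n + 1), if ε k then (1 / 3 : ℝ) ^ k else 0)
      = (S n).1 := by
    intro n
    induction n with
    | zero => simp [S, ε]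
    | succ n ih => rw [Finset.sum_range_succ, mul_add, ih]
  have hS2 : ∀ n : ℕ, 2 / 3 * (∑ k ∈ Finset.range (n + 1), if δ k then (1 / 3 : ℝ) ^ k else 0)
      = (S n).2 := by
    intro n
    induction n with
    | zero => simp [S, δ]
    | succ n ih => rw [Finset.sum_range_succ, mul_add, ih]
  have tx := tendsto_cantor_partial ε
  have ty := tendsto_cantor_partial δ
  simp only [hS1] at tx
  simp only [hS2] at ty
  refine ⟨_, ⟨ε, rfl⟩, _, ⟨δ, rfl⟩, ?_⟩
  have th : Filter.Tendsto (fun n : ℕ => (1 / 3 : ℝ) ^ (n + 1)) Filter.atTop (nhds 0) :=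
    (tendsto_pow_atTop_nhds_zero_of_lt_one (by norm_num) (by norm_num)).comp
      (Filter.tendsto_add_atTop_nat 1)
  have txh := tx.add th
  have tyh := ty.add th
  rw [add_zero] at txh tyh
  have lo := ((Real.continuous_sin.tendsto _).comp tx).add ((Real.continuous_cos.tendsto _).comp tyh)
  have hi := ((Real.continuous_sin.tendsto _).comp txh).add ((Real.continuous_cos.tendsto _).comp ty)
  apply le_antisymm
  · exact ge_of_tendsto' hi fun n => (hS n).2.2.2.2.2
  · exact le_of_tendsto' lo fun n => (hS n).2.2.2.2.1

theorem stmt16 :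
    ∃ u v : ℝ, u < v ∧ Set.Ioo u v ⊆
      {z : ℝ | ∃ x ∈ middleCantor (1 / 3), ∃ y ∈ middleCantor (1 / 3),
        z = Real.sin x + Real.cos y} := by
  refine ⟨Real.sin 0 + Real.cos (2 / 3 + 1 / 3), Real.sin (0 + 1 / 3) + Real.cos (2 / 3), ?_, ?_⟩
  · have s := sin_sub_bounds (u := 0) (v := 0 + 1 / 3) (by norm_num) (by norm_num) (by norm_num)
    have c := cos_sub_bounds (u := 2 / 3) (v := 2 / 3 + 1 / 3)
      (by norm_num) (by norm_num) (by norm_num)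
    linarith [s.1, c.1]
  · intro z hz
    exact mem_of_reaches
      ⟨le_rfl, by norm_num, le_rfl, by norm_num, hz.1.le, hz.2.le⟩
end

section
/- Let γ = (1 + √5)/2 be the golden ratio, and set α = γ^{−3}, β = γ^{−2}. Then the set { √x − √y : x ∈ C_α, y ∈ C_β } contains a nonempty open interval. -/
/-!
Put `r = γ⁻¹`, so that `r² = 1 - r`, `α = r³`, `β = r²` and `α² = β³`.  For fixed `t`, the equation
`√x - √y = t` reads `x = h y` with `h y = (t + √y)²`, so the task is to make `C_α` meet `h(C_β)` for
every `t` in some interval.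

The product of the thicknesses of the two sets is below `1`, so the gap lemma does not apply
directly; a gap argument along a prescribed order of subdivisions does.  Let `[x, x + α^p]` and
`[y, y + β^q]` be basic intervals such that the first meets the `h`-image of the second.
If the image of the gap of the second interval is no longer than the first interval, then one of the
two children of the second interval still has an image meeting the first (`Linked.split_right`);
if the gap of the first interval is no longer than the image of the second, then one of the two
children of the first interval still meets that image (`Linked.split_left`).
When all difference quotients of `h` lie in `[1.4, 1.6]`, the cycle of five subdivisions
`β, α, β, α, β` is admissible at every stage starting from intervals of the same length
(`Linked.cycle`), and it ends with intervals of the same length again, because `α² = β³`.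
Iterating, `C_α` and `h(C_β)` come arbitrarily close, hence they meet by compactness
(`exists_eq_of_linked`).

For `t ∈ (0.28, 0.30)`, the intervals `[1 - α, 1 - α + α²]` and `[β - β³, β]` are a valid start:
there `h` has slope `1 + t / √y`, which is about `1.5`.
-/

open Set MeasureTheory

/-- `IsLeftEnd a p x`: the point `x` is the left endpoint of one of the `2 ^ p` basic intervals
`[x, x + a ^ p]` of level `p` in the construction of `middleCantor a`. -/
def IsLeftEnd (a : ℝ) (p : ℕ) (x : ℝ) : Prop :=
  ∃ ε : ℕ → Bool, x = (1 - a) * ∑ k ∈ Finset.range p, (if ε k then a ^ k else 0)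

lemma IsLeftEnd.zero (a : ℝ) : IsLeftEnd a 0 0 := ⟨fun _ => false, by simp⟩

lemma IsLeftEnd.left {a : ℝ} {p : ℕ} {x : ℝ} (h : IsLeftEnd a p x) : IsLeftEnd a (p + 1) x := by
  obtain ⟨ε, rfl⟩ := h
  refine ⟨fun k => if k < p then ε k else false, ?_⟩
  rw [Finset.sum_range_succ]
  simp only [lt_irrefl, if_false, Bool.false_eq_true, add_zero]
  congr 1
  refine Finset.sum_congr rfl fun k hk => ?_
  simp [Finset.mem_range.1 hk]

lemma IsLeftEnd.right {a : ℝ} {p : ℕ} {x : ℝ} (h : IsLeftEnd a p x) :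
    IsLeftEnd a (p + 1) (x + (1 - a) * a ^ p) := by
  obtain ⟨ε, rfl⟩ := h
  refine ⟨fun k => if k < p then ε k else true, ?_⟩
  rw [Finset.sum_range_succ]
  simp only [lt_irrefl, if_false, if_true]
  rw [mul_add]
  congr 2
  refine Finset.sum_congr rfl fun k hk => ?_
  simp [Finset.mem_range.1 hk]

lemma IsLeftEnd.mem {a : ℝ} {p : ℕ} {x : ℝ} (h : IsLeftEnd a p x) : x ∈ middleCantor a := by
  obtain ⟨ε, rfl⟩ := h
  refine ⟨fun k => if k < p then ε k else false, ?_⟩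
  congr 1
  rw [tsum_eq_sum (s := Finset.range p)]
  · refine Finset.sum_congr rfl fun k hk => ?_
    simp [Finset.mem_range.1 hk]
  · intro k hk
    simp [show ¬ k < p by simpa using hk]

/-- `middleCantor a` is the image of the compact space `ℕ → Bool` under a uniformly convergent
series of continuous functions. -/
lemma isCompact_middleCantor {a : ℝ} (h0 : 0 ≤ a) (h1 : a < 1) : IsCompact (middleCantor a) := by
  have hc : Continuous fun ε : ℕ → Bool => (1 - a) * ∑' k : ℕ, (if ε k then a ^ k else 0) := by
    refine continuous_const.mul
      (continuous_tsum (fun k => ?_) (summable_geometric_of_lt_one h0 h1) fun k ε => ?_)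
    · exact (continuous_of_discreteTopology (f := fun b : Bool => if b then a ^ k else (0 : ℝ))).comp
        (continuous_apply k)
    · split_ifs
      · rw [Real.norm_of_nonneg (pow_nonneg h0 k)]
      · simpa using pow_nonneg h0 k
  convert isCompact_range hc using 1
  ext x
  exact exists_congr fun ε => eq_comm

/-- Some basic interval `[x, x + a ^ p]` of `C_a` meets the interval `[h y, h (y + b ^ q)]`, the
image of a basic interval of `C_b` contained in `[c, d]`. -/
def Linked (a b : ℝ) (h : ℝ → ℝ) (c d : ℝ) (p q : ℕ) : Prop :=
  ∃ x y, IsLeftEnd a p x ∧ IsLeftEnd b q y ∧ c ≤ y ∧ y + b ^ q ≤ d ∧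
    h y ≤ x + a ^ p ∧ x ≤ h (y + b ^ q)

/-- Subdivision of the interval of `C_a`, whose gap is too short to contain the image of the
interval of `C_b`. -/
lemma Linked.split_left {a b c d : ℝ} {h : ℝ → ℝ} {p q : ℕ} (H : Linked a b h c d p q)
    (hb0 : 0 ≤ b)
    (hlow : ∀ y y', c ≤ y → y ≤ y' → y' ≤ d → 1.4 * (y' - y) ≤ h y' - h y)
    (hgap : (1 - 2 * a) * a ^ p ≤ 1.4 * b ^ q) : Linked a b h c d (p + 1) q := by
  obtain ⟨x, y, hx, hy, hc, hd, h1, h2⟩ := H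
  by_cases hcase : h y ≤ x + a ^ (p + 1)
  · exact ⟨x, y, hx.left, hy, hc, hd, hcase, h2⟩
  · refine ⟨_, y, hx.right, hy, hc, hd, ?_, ?_⟩
    · rw [pow_succ]; linarith
    · have := hlow y (y + b ^ q) hc (by linarith [pow_nonneg hb0 q]) hd
      rw [pow_succ] at hcase
      linarith

/-- Subdivision of the interval of `C_b`, the image of whose gap is too short to contain the
interval of `C_a`. -/
lemma Linked.split_right {a b c d : ℝ} {h : ℝ → ℝ} {p q : ℕ} (H : Linked a b h c d p q)
    (hb0 : 0 ≤ b) (hb : 2 * b ≤ 1)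
    (hupp : ∀ y y', c ≤ y → y ≤ y' → y' ≤ d → h y' - h y ≤ 1.6 * (y' - y))
    (hgap : 1.6 * ((1 - 2 * b) * b ^ q) ≤ a ^ p) : Linked a b h c d p (q + 1) := by
  obtain ⟨x, y, hx, hy, hc, hd, h1, h2⟩ := H
  have hq := pow_nonneg hb0 q
  have e1 : 0 ≤ b * b ^ q := mul_nonneg hb0 hq
  have e2 : 0 ≤ (1 - 2 * b) * b ^ q := mul_nonneg (by linarith) hq
  by_cases hcase : x ≤ h (y + b ^ (q + 1))
  · exact ⟨x, y, hx, hy.left, hc, by rw [pow_succ]; linarith, h1, hcase⟩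
  · rw [pow_succ] at hcase
    have e3 : y + (1 - b) * b ^ q + b ^ (q + 1) = y + b ^ q := by ring
    refine ⟨x, _, hx, hy.right, by linarith, by linarith, ?_, by rwa [e3]⟩
    have := hupp (y + b ^ q * b) (y + (1 - b) * b ^ q) (by linarith) (by linarith) (by linarith)
    linarith

/-- One period of the subdivision scheme.  The lengths at the start are both `r ^ (6 * m)`; during
the cycle, the quotient of the length of the interval of `C_β` by that of `C_α` runs through
`1, r², r⁻¹, r, r⁻², 1`. -/
lemma Linked.cycle {r c d : ℝ} {h : ℝ → ℝ} {m : ℕ} (hr : r ^ 2 = 1 - r) (hr0 : 0.618 < r)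
    (hr1 : r < 0.6181)
    (hlow : ∀ y y', c ≤ y → y ≤ y' → y' ≤ d → 1.4 * (y' - y) ≤ h y' - h y)
    (hupp : ∀ y y', c ≤ y → y ≤ y' → y' ≤ d → h y' - h y ≤ 1.6 * (y' - y))
    (H : Linked (r ^ 3) (r ^ 2) h c d (2 * m) (3 * m)) :
    Linked (r ^ 3) (r ^ 2) h c d (2 * (m + 1)) (3 * (m + 1)) := by
  have hD : 0 < r ^ (6 * m) := by positivity
  have hb0 : 0 ≤ r ^ 2 := by positivity
  have hb : 2 * r ^ 2 ≤ 1 := by linarith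
  have r3 : r ^ 3 = 2 * r - 1 := by linear_combination (r - 1) * hr
  have pa : ∀ i, (r ^ 3) ^ (2 * m + i) = (r ^ 3) ^ i * r ^ (6 * m) := fun i => by ring
  have pb : ∀ i, (r ^ 2) ^ (3 * m + i) = (r ^ 2) ^ i * r ^ (6 * m) := fun i => by ring
  have pa0 := pa 0
  have pb0 := pb 0
  rw [add_zero] at pa0 pb0
  have scale : ∀ u v : ℝ, u ≤ v → u * r ^ (6 * m) ≤ v * r ^ (6 * m) :=
    fun u v huv => mul_le_mul_of_nonneg_right huv hD.le
  have H1 := H.split_right hb0 hb hupp (by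
    have := scale (1.6 * (1 - 2 * r ^ 2)) 1 (by linarith)
    rw [pa0, pb0]; linarith)
  have H2 := H1.split_left hb0 hlow (by
    have := scale (1 - 2 * r ^ 3) (1.4 * r ^ 2) (by linarith)
    rw [pa0, pb]; linarith)
  have H3 := H2.split_right hb0 hb hupp (by
    have := scale (1.6 * ((1 - 2 * r ^ 2) * r ^ 2)) (r ^ 3) (by rw [r3, hr]; nlinarith)
    rw [pa, pb]; linarith)
  have pa2 : (r ^ 3) ^ (2 * m + 1 + 1) = (r ^ 3) ^ 2 * r ^ (6 * m) := pa 2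
  have pb2 : (r ^ 2) ^ (3 * m + 1 + 1) = (r ^ 2) ^ 2 * r ^ (6 * m) := pb 2
  have H4 := H3.split_left hb0 hlow (by
    have := scale ((1 - 2 * r ^ 3) * r ^ 3) (1.4 * (r ^ 2) ^ 2) (by rw [r3, hr]; nlinarith)
    rw [pa, pb2]; linarith)
  have H5 := H4.split_right hb0 hb hupp (by
    have := scale (1.6 * ((1 - 2 * r ^ 2) * (r ^ 2) ^ 2)) ((r ^ 3) ^ 2)
      (by rw [r3, hr]; nlinarith)
    rw [pa2, pb2]; linarith)
  exact H5

/-- A linked pair of intervals of length `r ^ 6` forces `C_α` to meet `h(C_β)`: linked pairs of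
arbitrarily high level make the minimum of `|h y - x|` over `C_α × C_β` equal to `0`. -/
lemma exists_eq_of_linked {r c d : ℝ} {h : ℝ → ℝ} (hr : r ^ 2 = 1 - r) (hr0 : 0.618 < r)
    (hr1 : r < 0.6181)
    (hcont : Continuous h)
    (hlow : ∀ y y', c ≤ y → y ≤ y' → y' ≤ d → 1.4 * (y' - y) ≤ h y' - h y)
    (hupp : ∀ y y', c ≤ y → y ≤ y' → y' ≤ d → h y' - h y ≤ 1.6 * (y' - y))
    (H : Linked (r ^ 3) (r ^ 2) h c d (2 * 1) (3 * 1)) :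
    ∃ x ∈ middleCantor (r ^ 3), ∃ y ∈ middleCantor (r ^ 2), x = h y := by
  have rpos : 0 < r := by linarith
  have rlt : r < 1 := by linarith
  have all : ∀ m : ℕ, Linked (r ^ 3) (r ^ 2) h c d (2 * (m + 1)) (3 * (m + 1)) := by
    intro m
    induction m with
    | zero => exact H
    | succ m ih => exact ih.cycle hr hr0 hr1 hlow hupp
  have near : ∀ m : ℕ, ∃ x ∈ middleCantor (r ^ 3), ∃ y ∈ middleCantor (r ^ 2),
      |h y - x| ≤ 1.6 * (r ^ 6) ^ (m + 1) := by
    intro m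
    obtain ⟨x, y, hx, hy, hc, hd, h1, h2⟩ := all m
    have pa : (r ^ 3) ^ (2 * (m + 1)) = (r ^ 6) ^ (m + 1) := by rw [pow_mul]; ring
    have pb : (r ^ 2) ^ (3 * (m + 1)) = (r ^ 6) ^ (m + 1) := by rw [pow_mul]; ring
    rw [pa] at h1
    rw [pb] at h2 hd
    have hD : 0 < (r ^ 6) ^ (m + 1) := by positivity
    have := hupp y (y + (r ^ 6) ^ (m + 1)) hc (by linarith) hd
    exact ⟨x, hx.mem, y, hy.mem, abs_le.2 ⟨by linarith, by linarith⟩⟩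
  have hK := (isCompact_middleCantor (a := r ^ 3) (by positivity)
    (pow_lt_one₀ rpos.le rlt (by norm_num))).prod
    (isCompact_middleCantor (a := r ^ 2) (by positivity) (pow_lt_one₀ rpos.le rlt (by norm_num)))
  obtain ⟨x0, hx0, y0, hy0, -⟩ := near 0
  obtain ⟨⟨x, y⟩, ⟨hx, hy⟩, hmin⟩ := hK.exists_isMinOn ⟨(x0, y0), hx0, hy0⟩
    (f := fun z : ℝ × ℝ => |h z.2 - z.1|) (by fun_prop)
  refine ⟨x, hx, y, hy, ?_⟩
  have lim : Filter.Tendsto (fun m : ℕ => 1.6 * (r ^ 6) ^ (m + 1)) Filter.atTop (nhds (1.6 * 0)) :=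
    ((Filter.tendsto_add_atTop_iff_nat 1).2 (tendsto_pow_atTop_nhds_zero_of_lt_one
      (by positivity) (pow_lt_one₀ rpos.le rlt (by norm_num)))).const_mul _
  have hle : |h y - x| ≤ 1.6 * 0 := by
    refine ge_of_tendsto' lim fun m => ?_
    obtain ⟨x', hx', y', hy', hle⟩ := near m
    exact (isMinOn_iff.1 hmin (x', y') ⟨hx', hy'⟩).trans hle
  have h0 : |h y - x| = 0 := le_antisymm (by linarith) (abs_nonneg _)
  linarith [abs_eq_zero.1 h0]

theorem stmt17 (γ : ℝ) (hγ : γ = (1 + Real.sqrt 5) / 2) :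
    ∃ u v : ℝ, u < v ∧ Set.Ioo u v ⊆
      {z : ℝ | ∃ x ∈ middleCantor (γ ^ (-3 : ℤ)), ∃ y ∈ middleCantor (γ ^ (-2 : ℤ)),
        z = Real.sqrt x - Real.sqrt y} := by
  have h5 : Real.sqrt 5 ^ 2 = 5 := Real.sq_sqrt (by norm_num)
  have h5l : 2.236 < Real.sqrt 5 := Real.lt_sqrt_of_sq_lt (by norm_num)
  have h5u : Real.sqrt 5 < 2.2362 := (Real.sqrt_lt' (by norm_num)).2 (by norm_num)
  obtain ⟨r, hrdef⟩ : ∃ r : ℝ, r = (Real.sqrt 5 - 1) / 2 := ⟨_, rfl⟩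
  have hinv : γ⁻¹ = r := by
    refine inv_eq_of_mul_eq_one_right ?_
    rw [hγ, hrdef]; linear_combination h5 / 4
  have hr : r ^ 2 = 1 - r := by rw [hrdef]; linear_combination h5 / 4
  have hr0 : 0.618 < r := by rw [hrdef]; linarith
  have hr1 : r < 0.6181 := by rw [hrdef]; linarith
  have ea : γ ^ (-3 : ℤ) = r ^ 3 := by rw [← hinv, zpow_neg, inv_pow]; rfl
  have eb : γ ^ (-2 : ℤ) = r ^ 2 := by rw [← hinv, zpow_neg, inv_pow]; rfl
  have r3 : r ^ 3 = 2 * r - 1 := by linear_combination (r - 1) * hr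
  have r6 : r ^ 6 = 5 - 8 * r := by
    linear_combination (r ^ 3 + 2 * r - 1) * r3 + 4 * hr
  rw [ea, eb]
  refine ⟨0.28, 0.3, by norm_num, ?_⟩
  rintro t ⟨ht0, ht1⟩
  have sq_bounds : ∀ y, r ^ 2 - r ^ 6 ≤ y → y ≤ r ^ 2 →
      0.57 ≤ Real.sqrt y ∧ Real.sqrt y ≤ 0.62 := by
    intro y h1 h2
    rw [r6, hr] at h1
    rw [hr] at h2
    exact ⟨Real.le_sqrt_of_sq_le (by linarith), Real.sqrt_le_iff.2 ⟨by norm_num, by linarith⟩⟩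
  -- `h y' - h y = (y' - y) + 2 * t * (√y' - √y)`, and `y' - y = (√y' - √y) * (√y' + √y)`.
  have slope : ∀ y y', r ^ 2 - r ^ 6 ≤ y → y ≤ y' → y' ≤ r ^ 2 →
      1.4 * (y' - y) ≤ (t + Real.sqrt y') ^ 2 - (t + Real.sqrt y) ^ 2 ∧
      (t + Real.sqrt y') ^ 2 - (t + Real.sqrt y) ^ 2 ≤ 1.6 * (y' - y) := by
    intro y y' h1 h2 h3
    obtain ⟨a1, a2⟩ := sq_bounds y h1 (h2.trans h3)
    obtain ⟨b1, b2⟩ := sq_bounds y' (h1.trans h2) h3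
    have hypos : 0 ≤ y := by rw [r6, hr] at h1; linarith
    have e1 := Real.sq_sqrt hypos
    have e2 := Real.sq_sqrt (hypos.trans h2)
    have hm := Real.sqrt_le_sqrt h2
    set a := Real.sqrt y
    set b := Real.sqrt y'
    rw [← e1, ← e2]
    have k1 : 0 ≤ (b - a) * (2 * t - 0.4 * (a + b)) := mul_nonneg (by linarith) (by linarith)
    have k2 : 0 ≤ (b - a) * (0.6 * (a + b) - 2 * t) := mul_nonneg (by linarith) (by linarith)
    constructor <;> nlinarith
  have start : Linked (r ^ 3) (r ^ 2) (fun y => (t + Real.sqrt y) ^ 2) (r ^ 2 - r ^ 6) (r ^ 2)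
      (2 * 1) (3 * 1) := by
    have e : r ^ 2 - r ^ 6 = 0 + (1 - r ^ 2) * (r ^ 2) ^ 1 + (1 - r ^ 2) * (r ^ 2) ^ 2 := by ring
    have e' : r ^ 2 - r ^ 6 + (r ^ 2) ^ 3 = r ^ 2 := by ring
    have hr6 : 0 ≤ r ^ 6 := by positivity
    refine ⟨_, r ^ 2 - r ^ 6, (IsLeftEnd.zero (r ^ 3)).right.left, ?_, le_rfl, ?_, ?_, ?_⟩
    · rw [e]
      exact (IsLeftEnd.zero (r ^ 2)).left.right.right
    · rw [mul_one, e']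
    · have hs : Real.sqrt (r ^ 2 - r ^ 6) ≤ 0.58 :=
        Real.sqrt_le_iff.2 ⟨by norm_num, by rw [r6, hr]; linarith⟩
      have hp := Real.sqrt_nonneg (r ^ 2 - r ^ 6)
      have : (r ^ 3) ^ (2 * 1) = r ^ 6 := by ring
      dsimp only
      rw [this, r3, pow_zero]
      nlinarith
    · dsimp only
      rw [mul_one, e', Real.sqrt_sq (by linarith), r3, pow_zero]
      nlinarith
  obtain ⟨x, hx, y, hy, hxy⟩ := exists_eq_of_linked hr hr0 hr1 (by fun_prop)
    (fun y y' h1 h2 h3 => (slope y y' h1 h2 h3).1)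
    (fun y y' h1 h2 h3 => (slope y y' h1 h2 h3).2) start
  refine ⟨x, hx, y, hy, ?_⟩
  rw [hxy, Real.sqrt_sq (by linarith [Real.sqrt_nonneg y])]
  ring
end

section
/- Let γ = (1 + √5)/2 be the golden ratio, and set α = γ^{−3}, β = γ^{−2}. Then the Hausdorff dimension of C_α − (2/γ)·C_β is strictly less than 1, while the sum of the Hausdorff dimensions of C_α and C_β is strictly greater than 1; in particular, C_α − (2/γ)·C_β has Lebesgue measure zero. -/
/-!
Write `u = γ⁻¹`, so `u ^ 2 = 1 - u`, `α = u ^ 3`, `β = u ^ 2` and `2 / γ = 2 * u`.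

**Upper bound.** Expanding `C_α` two levels and `C_β` three levels exhibits the difference set `D` as
the attractor of 32 similarities of common ratio `u ^ 6`. Since `1 - α = (2 / γ) * (1 - β) = 2 * u ^ 2`,
the translations are, up to a common factor and shift, subset sums of
`γ ^ 6, γ ^ 6, γ ^ 4, γ ^ 3, γ ^ 2`, and relations in `ℤ[γ]` leave only 21 of them. There are also
coincidences between words of length two: many pairs of letters `i j` have the same value as some
pair `(i + 1) j'`. Always carrying to the larger first letter, every point of `D` has an expansion
avoiding these forbidden pairs (`exists_good`). The transition matrix of the allowed pairs has
spectral radius at most `17.4`, as a positive weight vector certifies (`wt_bound`). So `D` is covered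
by `O(17.4 ^ n)` intervals of length `O(γ ^ (-6 * n))` (`Good.cover`), and since `17.4 < γ ^ 6`
the dimension of `D` is less than one (`dimH_lt_one_of_cover`); in particular `D` is Lebesgue null.

**Lower bound.** Reading the digits of a point of `C_a` in base 2 gives a map from `C_a` onto an
interval that is Hölder of any exponent `s` with `1 / 2 ≤ a ^ s`, whence `s ≤ dimH C_a`
(`le_dimH_middleCantor`). As `γ ^ 7 ≤ 2 ^ 5`, the exponents `7 / 15` for `α` and `7 / 10` for `β`
are admissible, and their sum exceeds one.
-/

open Set MeasureTheory

/-! ### The digit combinatorics -/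

/-- The 21 digits, in increasing order, are the elements `digP i + digQ i * γ` of `ℤ[γ]`; this is
the integer coordinate. They are the sums of a subset of `γ ^ 6, γ ^ 6, γ ^ 4, γ ^ 3, γ ^ 2`. -/
def digP : Fin 21 → ℕ :=
  ![0, 1, 1, 2, 3, 3, 4, 5, 6, 6, 7, 8, 8, 9, 10, 11, 11, 12, 13, 13, 14]
/-- The coordinate along `γ` of the digits `digP i + digQ i * γ`. -/
def digQ : Fin 21 → ℕ :=
  ![0, 1, 2, 3, 4, 5, 6, 8, 9, 10, 11, 12, 13, 14, 16, 17, 18, 19, 20, 21, 22]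

/-- The two-letter words `i j` and `i' j'` have the same value, that is,
`γ ^ 6 * d i + d j = γ ^ 6 * d i' + d j'` for the digits `d k = digP k + digQ k * γ`, written in
coordinates by means of `γ ^ 6 = 5 + 8 * γ` and `γ ^ 7 = 8 + 13 * γ`. -/
def Carry (i j i' j' : Fin 21) : Prop :=
  5 * digP i + 8 * digQ i + digP j = 5 * digP i' + 8 * digQ i' + digP j' ∧
  8 * digP i + 13 * digQ i + digQ j = 8 * digP i' + 13 * digQ i' + digQ j'

instance (i j i' j' : Fin 21) : Decidable (Carry i j i' j') := by
  unfold Carry; infer_instance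

/-- The pair `i j` is forbidden if it can be rewritten, without changing its value, as a pair whose
first letter is the next digit `i + 1`. -/
def Forb (i j : Fin 21) : Prop :=
  ∃ i' : Fin 21, i'.val = i.val + 1 ∧ ∃ j' : Fin 21, Carry i j i' j'

instance (i j : Fin 21) : Decidable (Forb i j) := by
  unfold Forb; infer_instance

/-- A positive vector that the transition matrix of allowed pairs multiplies by at most `17.4`
(see `wt_bound`). The letters fall into three classes with 21, 19 and 13 allowed successors, of
weights 10, 9 and 6. -/
def wt : Fin 21 → ℕ :=
  ![9, 6, 9, 9, 6, 9, 10, 9, 6, 9, 9, 6, 9, 10, 9, 6, 9, 9, 6, 9, 10]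

/-- The reason for the dimension drop: the growth rate of allowed words is at most `17.4`, which is
below `γ ^ 6 ≈ 17.94`. -/
theorem wt_bound : ∀ i : Fin 21,
    10 * ∑ j : Fin 21, (if Forb i j then 0 else wt j) ≤ 174 * wt i := by
  decide +kernel

/-- Two binary digits of `C_α` and three of `C_β` combine to one of the 21 digits. The shift by
`8 + 12 * γ = γ ^ 6 + γ ^ 4 + γ ^ 2` makes the digits nonnegative. -/
theorem dig_surj : ∀ e0 e1 f0 f1 f2 : Bool, ∃ i : Fin 21,
    digP i + 5 * f0.toNat + 2 * f1.toNat + f2.toNat = 5 * e0.toNat + e1.toNat + 8 ∧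
    digQ i + 8 * f0.toNat + 3 * f1.toNat + f2.toNat = 8 * e0.toNat + 2 * e1.toNat + 12 := by
  decide +kernel

/-- Every one of the 21 digits comes from binary digits of `C_α` and `C_β`. -/
theorem dig_real : ∀ i : Fin 21, ∃ e0 e1 f0 f1 f2 : Bool,
    digP i + 5 * f0.toNat + 2 * f1.toNat + f2.toNat = 5 * e0.toNat + e1.toNat + 8 ∧
    digQ i + 8 * f0.toNat + 3 * f1.toNat + f2.toNat = 8 * e0.toNat + 2 * e1.toNat + 12 := by
  decide +kernel

/-! ### Hausdorff dimension from coverings -/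

open Filter Topology ENNReal NNReal in
/-- If `E` is covered by `O(c ^ n)` intervals of length `O(r ^ n)` for every `n`, with `c * r < 1`,
then `dimH E < 1`: the measure `μH[s] E` is finite as soon as `c * r ^ s ≤ 1`. -/
theorem dimH_lt_one_of_cover {E : Set ℝ} {r c K M : ℝ} (hr0 : 0 < r) (hr1 : r < 1) (hc : 0 < c)
    (hcr : c * r < 1) (hM : 0 ≤ M)
    (h : ∀ n : ℕ, ∃ F : Finset ℝ, (F.card : ℝ) ≤ K * c ^ n ∧
      ∀ x ∈ E, ∃ y ∈ F, |x - y| ≤ M * r ^ n) : dimH E < 1 := by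
  obtain ⟨s, hs0, hs1, hs⟩ : ∃ s : ℝ, 0 < s ∧ s < 1 ∧ c * r ^ s < 1 := by
    have hcont : ContinuousAt (fun s : ℝ => c * r ^ s) 1 := by
      have := Real.continuousAt_const_rpow (a := r) (b := 1) hr0.ne'
      fun_prop
    have h1 : ∀ᶠ s in 𝓝 (1 : ℝ), c * r ^ s < 1 :=
      hcont.eventually_lt continuousAt_const (by simpa using hcr)
    have h2 : ∀ᶠ s in 𝓝[<] (1 : ℝ), 0 < s ∧ s < 1 ∧ c * r ^ s < 1 := by
      filter_upwards [nhdsWithin_le_nhds h1, self_mem_nhdsWithin,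
        nhdsWithin_le_nhds (Ioi_mem_nhds (zero_lt_one' ℝ))] with s a b d
      exact ⟨d, b, a⟩
    exact h2.exists
  choose F hcard hF using h
  have hK : 0 ≤ K := by
    have := hcard 0
    simp only [pow_zero, mul_one] at this
    exact le_trans (by positivity) this
  have key : MeasureTheory.Measure.hausdorffMeasure s E ≤ ENNReal.ofReal (K * (2 * M) ^ s) := by
    refine (MeasureTheory.Measure.hausdorffMeasure_le_liminf_sum (ι := fun n => F n) (l := atTop) s E
      (fun n => ENNReal.ofReal (2 * M * r ^ n)) ?_
      (fun n y => Metric.closedBall (y : ℝ) (M * r ^ n)) ?_ ?_).trans ?_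
    · rw [← ENNReal.ofReal_zero]
      refine ENNReal.tendsto_ofReal ?_
      simpa using (tendsto_pow_atTop_nhds_zero_of_lt_one hr0.le hr1).const_mul (2 * M)
    · refine Eventually.of_forall fun n y => ?_
      rw [Real.closedBall_eq_Icc, Real.ediam_Icc]
      exact ENNReal.ofReal_le_ofReal (by linarith)
    · refine Eventually.of_forall fun n x hx => ?_
      obtain ⟨y, hy, hxy⟩ := hF n x hx
      exact mem_iUnion.2 ⟨⟨y, hy⟩, by simpa [Real.dist_eq] using hxy⟩
    · refine liminf_le_of_le (by isBoundedDefault) fun b hb => ?_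
      obtain ⟨n, hn⟩ := hb.exists
      refine hn.trans ?_
      have e : ∀ y : F n, Metric.ediam (Metric.closedBall (y : ℝ) (M * r ^ n)) ^ s
          = ENNReal.ofReal ((2 * M * r ^ n) ^ s) := by
        intro y
        rw [Real.closedBall_eq_Icc, Real.ediam_Icc,
          ENNReal.ofReal_rpow_of_nonneg (by ring_nf; positivity) hs0.le]
        ring_nf
      simp only [e, Finset.sum_const, Finset.card_univ, Fintype.card_coe, nsmul_eq_mul]
      rw [← ENNReal.ofReal_natCast, ← ENNReal.ofReal_mul (by positivity)]
      apply ENNReal.ofReal_le_ofReal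
      rw [Real.mul_rpow (by positivity) (by positivity), ← Real.rpow_natCast, ← Real.rpow_mul hr0.le,
        mul_comm (n : ℝ) s, Real.rpow_mul hr0.le, Real.rpow_natCast]
      calc ((F n).card : ℝ) * ((2 * M) ^ s * (r ^ s) ^ n)
          ≤ (K * c ^ n) * ((2 * M) ^ s * (r ^ s) ^ n) := by gcongr; exact hcard n
        _ = K * (2 * M) ^ s * (c * r ^ s) ^ n := by rw [mul_pow]; ring
        _ ≤ K * (2 * M) ^ s * 1 := by
            gcongr
            exact pow_le_one₀ (by positivity) hs.le
        _ = _ := mul_one _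
  lift s to ℝ≥0 using hs0.le
  refine (dimH_le_of_hausdorffMeasure_ne_top (key.trans_lt ENNReal.ofReal_lt_top).ne).trans_lt ?_
  exact_mod_cast hs1

/-! ### Middle Cantor sets and their dimension -/

open Cardinal in
theorem mem_middleCantor_iff {a x : ℝ} :
    x ∈ middleCantor a ↔ ∃ ε : ℕ → Bool, x = (1 - a) * cantorFunction a ε := by
  have h : ∀ ε : ℕ → Bool, (∑' k : ℕ, (if ε k then a ^ k else 0)) = cantorFunction a ε := by
    intro ε
    refine tsum_congr fun k => ?_
    cases hk : ε k <;> simp [hk]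
  simp only [middleCantor, mem_ofPred_eq, h]

theorem middleCantor_split {a x : ℝ} (h0 : 0 ≤ a) (h1 : a < 1) :
    x ∈ middleCantor a ↔
      ∃ e : Bool, ∃ y ∈ middleCantor a, x = (1 - a) * (e.toNat : ℝ) + a * y := by
  constructor
  · intro hx
    obtain ⟨ε, rfl⟩ := mem_middleCantor_iff.1 hx
    refine ⟨ε 0, _, mem_middleCantor_iff.2 ⟨fun n => ε (n + 1), rfl⟩, ?_⟩
    rw [Cardinal.cantorFunction_succ ε h0 h1]
    cases ε 0 <;> simp <;> ring
  · rintro ⟨e, y, hy, rfl⟩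
    obtain ⟨ε, rfl⟩ := mem_middleCantor_iff.1 hy
    refine mem_middleCantor_iff.2 ⟨fun n => Nat.casesOn n e ε, ?_⟩
    rw [Cardinal.cantorFunction_succ (fun n => Nat.casesOn n e ε) h0 h1]
    cases e <;> simp <;> ring

theorem cantorFunction_nonneg {c : ℝ} (h0 : 0 ≤ c) (ε : ℕ → Bool) :
    0 ≤ Cardinal.cantorFunction c ε :=
  tsum_nonneg fun _ => Cardinal.cantorFunctionAux_nonneg h0

theorem cantorFunction_le_inv {c : ℝ} (h0 : 0 ≤ c) (h1 : c < 1) (ε : ℕ → Bool) :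
    Cardinal.cantorFunction c ε ≤ (1 - c)⁻¹ := by
  rw [← tsum_geometric_of_lt_one h0 h1]
  refine (Cardinal.summable_cantor_function ε h0 h1).tsum_le_tsum (fun n => ?_)
    (summable_geometric_of_lt_one h0 h1)
  have := pow_nonneg h0 n
  cases h : ε n <;> simp [h, this]

theorem middleCantor_subset_Icc {a x : ℝ} (h0 : 0 ≤ a) (h1 : a < 1) (hx : x ∈ middleCantor a) :
    0 ≤ x ∧ x ≤ 1 := by
  obtain ⟨ε, rfl⟩ := mem_middleCantor_iff.1 hx
  have h2 : 0 < 1 - a := by linarith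
  refine ⟨mul_nonneg h2.le (cantorFunction_nonneg h0 ε), ?_⟩
  calc _ ≤ (1 - a) * (1 - a)⁻¹ := by gcongr; exact cantorFunction_le_inv h0 h1 ε
    _ = 1 := mul_inv_cancel₀ h2.ne'

theorem cantorFunction_sub_of_agree {c : ℝ} (h0 : 0 ≤ c) (h1 : c < 1) (k : ℕ) :
    ∀ ε δ : ℕ → Bool, (∀ m < k, ε m = δ m) →
      Cardinal.cantorFunction c ε - Cardinal.cantorFunction c δ =
        c ^ k * (Cardinal.cantorFunction c (fun n => ε (n + k)) -
          Cardinal.cantorFunction c (fun n => δ (n + k))) := by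
  induction k with
  | zero => intro ε δ _; simp
  | succ k ih =>
    intro ε δ h
    rw [Cardinal.cantorFunction_succ ε h0 h1, Cardinal.cantorFunction_succ δ h0 h1,
      h 0 (Nat.succ_pos k)]
    have := ih (fun n => ε (n + 1)) (fun n => δ (n + 1)) fun m hm => h (m + 1) (by omega)
    rw [add_sub_add_left_eq_sub, ← mul_sub, this, pow_succ']
    simp only [add_assoc, mul_assoc]

/-- Points of `C_a` whose first digits differ are separated by the central gap, of length `1 - 2 * a`. -/
theorem cantor_gap {a : ℝ} (h0 : 0 ≤ a) (h1 : a < 1 / 2) (ε δ : ℕ → Bool) (h : ε 0 ≠ δ 0) :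
    1 - 2 * a ≤ |(1 - a) * (Cardinal.cantorFunction a ε - Cardinal.cantorFunction a δ)| := by
  have h2 : a < 1 := by linarith
  wlog hε : ε 0 = true generalizing ε δ
  · have := this δ ε h.symm (by cases h3 : δ 0 <;> simp_all)
    rwa [← abs_neg, ← mul_neg, neg_sub]
  have hδ : δ 0 = false := by cases h3 : δ 0 <;> simp_all
  have e1 := cantorFunction_nonneg h0 fun n => ε (n + 1)
  have e2 := cantorFunction_le_inv h0 h2 fun n => δ (n + 1)
  have e3 : (1 - a) * (1 - a)⁻¹ = 1 := mul_inv_cancel₀ (by linarith : (0 : ℝ) < 1 - a).ne'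
  rw [Cardinal.cantorFunction_succ ε h0 h2, Cardinal.cantorFunction_succ δ h0 h2, hε, hδ]
  refine le_trans ?_ (le_abs_self _)
  simp only [cond_true, cond_false]
  have e4 : (1 - a) * Cardinal.cantorFunction a (fun n => δ (n + 1)) ≤ 1 := by
    exact (mul_le_mul_of_nonneg_left e2 (by linarith : (0 : ℝ) ≤ 1 - a)).trans e3.le
  have e5 : 0 ≤ (1 - a) * Cardinal.cantorFunction a (fun n => ε (n + 1)) :=
    mul_nonneg (by linarith) e1
  nlinarith [mul_le_mul_of_nonneg_left e4 h0, mul_nonneg h0 e5]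

/-- Rereading the digits of a point of `C_a` in base 2 is Hölder of exponent `s`, provided
`1 / 2 ≤ a ^ s`. -/
theorem cantor_holder {a s : ℝ} (h0 : 0 < a) (h1 : a < 1 / 2) (hs : 0 < s)
    (has : 1 / 2 ≤ a ^ s) (ε δ : ℕ → Bool) :
    |Cardinal.cantorFunction (1 / 2) ε - Cardinal.cantorFunction (1 / 2) δ| ≤
      2 * ((1 - 2 * a)⁻¹) ^ s *
        |(1 - a) * Cardinal.cantorFunction a ε - (1 - a) * Cardinal.cantorFunction a δ| ^ s := by
  by_cases hne : ε = δ
  · subst hne; simp [Real.zero_rpow hs.ne']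
  have hex : ∃ k, ε k ≠ δ k := by
    by_contra hcon
    push Not at hcon
    exact hne (funext hcon)
  classical
  obtain ⟨k, hk, hmin⟩ : ∃ k, ε k ≠ δ k ∧ ∀ m < k, ε m = δ m :=
    ⟨Nat.find hex, Nat.find_spec hex, fun m hm => not_not.1 (Nat.find_min hex hm)⟩
  -- `k` is the first index at which the codes differ: the left side is at most `2 * 2⁻ᵏ`, while the
  -- two points of `C_a` are at least `a ^ k * (1 - 2 * a)` apart.
  have hpos : 0 < 1 - 2 * a := by linarith
  rw [← mul_sub, cantorFunction_sub_of_agree h0.le (by linarith) k ε δ hmin,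
    cantorFunction_sub_of_agree (by norm_num) (by norm_num) k ε δ hmin]
  have gap := cantor_gap h0.le h1 (fun n => ε (n + k)) (fun n => δ (n + k)) (by simpa using hk)
  set A := Cardinal.cantorFunction a (fun n => ε (n + k)) -
    Cardinal.cantorFunction a (fun n => δ (n + k))
  have up : |Cardinal.cantorFunction (1 / 2) (fun n => ε (n + k)) -
      Cardinal.cantorFunction (1 / 2) (fun n => δ (n + k))| ≤ 2 := by
    have a1 := cantorFunction_nonneg (c := 1 / 2) (by norm_num) fun n => ε (n + k)
    have a2 := cantorFunction_nonneg (c := 1 / 2) (by norm_num) fun n => δ (n + k)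
    have a3 := cantorFunction_le_inv (c := 1 / 2) (by norm_num) (by norm_num) fun n => ε (n + k)
    have a4 := cantorFunction_le_inv (c := 1 / 2) (by norm_num) (by norm_num) fun n => δ (n + k)
    norm_num at a1 a2 a3 a4 ⊢
    rw [abs_le]; constructor <;> linarith
  have low : (a ^ k) ≤ (1 - 2 * a)⁻¹ * |(1 - a) * (a ^ k * A)| := by
    have : |(1 - a) * (a ^ k * A)| = a ^ k * |(1 - a) * A| := by
      rw [mul_left_comm, abs_mul, abs_of_pos (pow_pos h0 k)]
    rw [this]
    calc a ^ k = (1 - 2 * a)⁻¹ * (a ^ k * (1 - 2 * a)) := by field_simp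
      _ ≤ _ := by gcongr
  rw [abs_mul, abs_of_pos (by positivity : (0 : ℝ) < (1 / 2) ^ k), mul_assoc,
    ← Real.mul_rpow (by positivity) (by positivity)]
  calc _ ≤ (1 / 2 : ℝ) ^ k * 2 := by gcongr
    _ ≤ (a ^ s) ^ k * 2 := by gcongr
    _ = 2 * (a ^ k) ^ s := by
        rw [← Real.rpow_natCast, ← Real.rpow_mul h0.le, mul_comm s, Real.rpow_mul h0.le,
          Real.rpow_natCast, mul_comm]
    _ ≤ _ := by gcongr

theorem exists_binary {t : ℝ} (ht : t ∈ Ico (0 : ℝ) 1) :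
    ∃ ε : ℕ → Bool, Cardinal.cantorFunction (1 / 2) ε = 2 * t := by
  refine ⟨fun n => decide (Real.digits t 2 n = 1), ?_⟩
  conv_rhs => rw [← Real.ofDigits_digits (b := 2) (by norm_num) ht]
  rw [Real.ofDigits, ← tsum_mul_left]
  refine tsum_congr fun n => ?_
  rw [Cardinal.cantorFunctionAux, Real.ofDigitsTerm]
  generalize Real.digits t 2 n = d
  fin_cases d
  · simp
  · simp [pow_succ]

open NNReal ENNReal in
/-- The Hölder map of `cantor_holder` sends `C_a` onto a set containing `(0, 1)`, of dimension 1. -/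
theorem le_dimH_middleCantor {a : ℝ} {s : ℝ≥0} (h0 : 0 < a) (h1 : a < 1 / 2) (hs : 0 < s)
    (has : 1 / 2 ≤ a ^ (s : ℝ)) : (s : ℝ≥0∞) ≤ dimH (middleCantor a) := by
  have hmem : ∀ x ∈ middleCantor a, ∃ ε : ℕ → Bool, x = (1 - a) * Cardinal.cantorFunction a ε :=
    fun x hx => mem_middleCantor_iff.1 hx
  choose! code hcode using hmem
  have hpos : 0 < 1 - 2 * a := by linarith
  set C : ℝ≥0 := ⟨2 * ((1 - 2 * a)⁻¹) ^ (s : ℝ), by positivity⟩ with hC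
  set f : ℝ → ℝ := fun x => Cardinal.cantorFunction (1 / 2) (code x) with hf
  have hold : HolderOnWith C s f (middleCantor a) := by
    intro x hx y hy
    have := cantor_holder h0 h1 (s := s) hs has (code x) (code y)
    rw [← hcode x hx, ← hcode y hy] at this
    rw [edist_dist, edist_dist, ENNReal.ofReal_rpow_of_nonneg dist_nonneg s.coe_nonneg,
      ← ENNReal.ofReal_coe_nnreal, ← ENNReal.ofReal_mul C.coe_nonneg]
    exact ENNReal.ofReal_le_ofReal this
  have himg : Ioo (0 : ℝ) 1 ⊆ f '' middleCantor a := by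
    intro t ht
    obtain ⟨ε, hε⟩ := exists_binary (t := t / 2) ⟨by linarith [ht.1], by linarith [ht.2]⟩
    have hx : (1 - a) * Cardinal.cantorFunction a ε ∈ middleCantor a :=
      mem_middleCantor_iff.2 ⟨ε, rfl⟩
    refine ⟨_, hx, ?_⟩
    have h2 := hcode _ hx
    have h3 := Cardinal.cantorFunction_injective h0 h1
      (mul_left_cancel₀ (by linarith : (0 : ℝ) < 1 - a).ne' h2)
    rw [hf]
    simp only
    rw [← h3, hε]
    ring
  have hone : (1 : ℝ≥0∞) ≤ dimH (middleCantor a) / s := by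
    refine le_trans ?_ (hold.dimH_image_le hs)
    refine le_trans (le_of_eq ?_) (dimH_mono himg)
    rw [Real.dimH_of_nonempty_interior]
    · simp
    · rw [isOpen_Ioo.interior_eq]; exact ⟨1 / 2, by norm_num, by norm_num⟩
  rwa [ENNReal.le_div_iff_mul_le (Or.inl (by simpa using hs.ne')) (Or.inl (by simp)), one_mul]
    at hone

/-! ### The difference set as an overlapping self-similar set -/

/-- With `u = γ⁻¹`, the translation part of the `i`-th similarity `z ↦ tr u i + u ^ 6 * z` mapping
`C_α - (2 / γ) * C_β` into itself. Here `1 + u = γ`. -/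
noncomputable def tr (u : ℝ) (i : Fin 21) : ℝ :=
  2 * u ^ 8 * (((digP i : ℝ) - 8) + ((digQ i : ℝ) - 12) * (1 + u))

theorem tr_carry {u : ℝ} (hu : u ^ 2 = 1 - u) {i j i' j' : Fin 21} (h : Carry i j i' j') :
    tr u i + u ^ 6 * tr u j = tr u i' + u ^ 6 * tr u j' := by
  obtain ⟨h1, h2⟩ := h
  have h1' : (5 * digP i + 8 * digQ i + digP j : ℝ) = 5 * digP i' + 8 * digQ i' + digP j' := by
    exact_mod_cast h1
  have h2' : (8 * digP i + 13 * digQ i + digQ j : ℝ) = 8 * digP i' + 13 * digQ i' + digQ j' := by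
    exact_mod_cast h2
  have k1 : u ^ 6 * (13 + 8 * u) = 1 := by grind
  have k2 : u ^ 6 * (21 + 13 * u) = 1 + u := by grind
  unfold tr
  linear_combination 2 * u ^ 14 * h1' + 2 * u ^ 14 * (1 + u) * h2' -
    2 * u ^ 8 * ((digP i : ℝ) - digP i') * k1 - 2 * u ^ 8 * ((digQ i : ℝ) - digQ i') * k2

/-- Both `1 - α` and `(2 / γ) * (1 - β)` equal `2 * u ^ 2`, so the digits of `C_α` and `C_β` enter
with the same factor; this is where the choice of `2 / γ` matters. -/
theorem tr_bits {u : ℝ} (hu : u ^ 2 = 1 - u) {i : Fin 21} {e0 e1 f0 f1 f2 : Bool}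
    (h1 : digP i + 5 * f0.toNat + 2 * f1.toNat + f2.toNat = 5 * e0.toNat + e1.toNat + 8)
    (h2 : digQ i + 8 * f0.toNat + 3 * f1.toNat + f2.toNat = 8 * e0.toNat + 2 * e1.toNat + 12) :
    tr u i = 2 * u ^ 2 * (e0.toNat + u ^ 3 * e1.toNat - f0.toNat - u ^ 2 * f1.toNat
      - u ^ 4 * f2.toNat) := by
  have h1' : (digP i + 5 * f0.toNat + 2 * f1.toNat + f2.toNat : ℝ)
      = 5 * e0.toNat + e1.toNat + 8 := by exact_mod_cast h1
  have h2' : (digQ i + 8 * f0.toNat + 3 * f1.toNat + f2.toNat : ℝ)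
      = 8 * e0.toNat + 2 * e1.toNat + 12 := by exact_mod_cast h2
  have k1 : u ^ 6 * (13 + 8 * u) = 1 := by grind
  have k2 : u ^ 3 * (3 + 2 * u) = 1 := by grind
  have k3 : u ^ 4 * (5 + 3 * u) = 1 := by grind
  have k4 : u ^ 2 * (2 + u) = 1 := by grind
  unfold tr
  linear_combination 2 * u ^ 8 * h1' + 2 * u ^ 8 * (1 + u) * h2' +
    2 * u ^ 2 * ((e0.toNat : ℝ) - f0.toNat) * k1 + 2 * u ^ 5 * e1.toNat * k2
    - 2 * u ^ 4 * f1.toNat * k3 - 2 * u ^ 6 * f2.toNat * k4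

/-- The difference set `C_α - (2 / γ) * C_β` in terms of `u = γ⁻¹`. -/
noncomputable abbrev gdiff (u : ℝ) : Set ℝ := diffSet (u ^ 3) (u ^ 2) (2 * u)

theorem gdiff_split {u : ℝ} (hu : u ^ 2 = 1 - u) (h0 : 0 < u) (h1 : u < 1) {x : ℝ}
    (hx : x ∈ gdiff u) : ∃ i, ∃ z ∈ gdiff u, x = tr u i + u ^ 6 * z := by
  obtain ⟨x, hx, y, hy, rfl⟩ := hx
  have a0 : 0 ≤ u ^ 3 := by positivity
  have a1 : u ^ 3 < 1 := pow_lt_one₀ h0.le h1 (by norm_num)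
  have b0 : 0 ≤ u ^ 2 := by positivity
  have b1 : u ^ 2 < 1 := pow_lt_one₀ h0.le h1 (by norm_num)
  obtain ⟨e0, x1, hx1, rfl⟩ := (middleCantor_split a0 a1).1 hx
  obtain ⟨e1, x2, hx2, rfl⟩ := (middleCantor_split a0 a1).1 hx1
  obtain ⟨f0, y1, hy1, rfl⟩ := (middleCantor_split b0 b1).1 hy
  obtain ⟨f1, y2, hy2, rfl⟩ := (middleCantor_split b0 b1).1 hy1
  obtain ⟨f2, y3, hy3, rfl⟩ := (middleCantor_split b0 b1).1 hy2
  obtain ⟨i, hP, hQ⟩ := dig_surj e0 e1 f0 f1 f2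
  refine ⟨i, _, ⟨x2, hx2, y3, hy3, rfl⟩, ?_⟩
  have k1 : 1 - u ^ 3 = 2 * u ^ 2 := by grind
  have k2 : 1 - u ^ 2 = u := by grind
  rw [tr_bits hu hP hQ, k1, k2]
  ring

theorem tr_add_mem_gdiff {u : ℝ} (hu : u ^ 2 = 1 - u) (h0 : 0 < u) (h1 : u < 1) (i : Fin 21)
    {z : ℝ} (hz : z ∈ gdiff u) : tr u i + u ^ 6 * z ∈ gdiff u := by
  obtain ⟨x, hx, y, hy, rfl⟩ := hz
  have a0 : 0 ≤ u ^ 3 := by positivity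
  have a1 : u ^ 3 < 1 := pow_lt_one₀ h0.le h1 (by norm_num)
  have b0 : 0 ≤ u ^ 2 := by positivity
  have b1 : u ^ 2 < 1 := pow_lt_one₀ h0.le h1 (by norm_num)
  obtain ⟨e0, e1, f0, f1, f2, hP, hQ⟩ := dig_real i
  have hx1 := (middleCantor_split a0 a1).2 ⟨e1, x, hx, rfl⟩
  have hx0 := (middleCantor_split a0 a1).2 ⟨e0, _, hx1, rfl⟩
  have hy2 := (middleCantor_split b0 b1).2 ⟨f2, y, hy, rfl⟩
  have hy1 := (middleCantor_split b0 b1).2 ⟨f1, _, hy2, rfl⟩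
  have hy0 := (middleCantor_split b0 b1).2 ⟨f0, _, hy1, rfl⟩
  refine ⟨_, hx0, _, hy0, ?_⟩
  have k1 : 1 - u ^ 3 = 2 * u ^ 2 := by grind
  have k2 : 1 - u ^ 2 = u := by grind
  rw [tr_bits hu hP hQ, k1, k2]
  ring

/-- Points of the difference set having an expansion whose first `n + 1` letters start with `i` and
contain no forbidden pair. -/
def Good (u : ℝ) : ℕ → Fin 21 → Set ℝ
  | 0, i => {x | ∃ z ∈ gdiff u, x = tr u i + u ^ 6 * z}
  | n + 1, i => {x | ∃ j, ¬ Forb i j ∧ ∃ y ∈ Good u n j, x = tr u i + u ^ 6 * y}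

theorem Good.exists_tail {u : ℝ} (hu : u ^ 2 = 1 - u) (h0 : 0 < u) (h1 : u < 1) (n : ℕ) :
    ∀ (i : Fin 21) (x : ℝ), x ∈ Good u n i → ∃ z ∈ gdiff u, x = tr u i + u ^ 6 * z := by
  induction n with
  | zero => intro i x hx; exact hx
  | succ n ih =>
    rintro i x ⟨j, -, y, hy, rfl⟩
    obtain ⟨z, hz, rfl⟩ := ih j y hy
    exact ⟨_, tr_add_mem_gdiff hu h0 h1 j hz, rfl⟩

/-- Every point has an expansion without forbidden pairs: a forbidden pair at the front can be
replaced by one with a larger first letter, and there are only 21 letters. -/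
theorem exists_good {u : ℝ} (hu : u ^ 2 = 1 - u) (h0 : 0 < u) (h1 : u < 1) (n : ℕ) :
    ∀ x ∈ gdiff u, ∃ i, x ∈ Good u n i := by
  induction n with
  | zero => intro x hx; exact gdiff_split hu h0 h1 hx
  | succ n ih =>
    -- Induction on `m = 20 - i`: each carry increases the first letter by one.
    have key : ∀ (m : ℕ) (i : Fin 21), i.val + m = 20 → ∀ x ∈ gdiff u,
        ∃ i', tr u i + u ^ 6 * x ∈ Good u (n + 1) i' := by
      intro m
      induction m with
      | zero =>
        intro i hi x hx
        obtain ⟨j, hj⟩ := ih x hx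
        refine ⟨i, j, ?_, x, hj, rfl⟩
        rintro ⟨i', hi', -⟩
        omega
      | succ m ihm =>
        intro i hi x hx
        obtain ⟨j, hj⟩ := ih x hx
        by_cases hF : Forb i j
        · obtain ⟨i', hi', j', hc⟩ := hF
          obtain ⟨z, hz, rfl⟩ := Good.exists_tail hu h0 h1 n j x hj
          have e : tr u i + u ^ 6 * (tr u j + u ^ 6 * z) =
              tr u i' + u ^ 6 * (tr u j' + u ^ 6 * z) := by
            linear_combination tr_carry hu hc
          rw [e]
          exact ihm i' (by omega) _ (tr_add_mem_gdiff hu h0 h1 j' hz)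
        · exact ⟨i, j, hF, x, hj, rfl⟩
    intro x hx
    obtain ⟨i, z, hz, rfl⟩ := gdiff_split hu h0 h1 hx
    exact key (20 - i.val) i (by omega) z hz

theorem abs_le_of_mem_gdiff {u : ℝ} (h0 : 0 < u) (h1 : u < 1) {x : ℝ} (hx : x ∈ gdiff u) :
    |x| ≤ 2 := by
  obtain ⟨x, hx, y, hy, rfl⟩ := hx
  have hx' := middleCantor_subset_Icc (by positivity) (pow_lt_one₀ h0.le h1 (by norm_num)) hx
  have hy' := middleCantor_subset_Icc (by positivity) (pow_lt_one₀ h0.le h1 (by norm_num)) hy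
  rw [abs_le]
  constructor <;> nlinarith [mul_nonneg h0.le hy'.1, mul_le_mul h1.le hy'.2 hy'.1 zero_le_one]

theorem Good.cover {u : ℝ} (h0 : 0 < u) (h1 : u < 1) (n : ℕ) :
    ∀ i : Fin 21, ∃ F : Finset ℝ, (F.card : ℝ) ≤ wt i * (87 / 5) ^ n ∧
      ∀ x ∈ Good u n i, ∃ y ∈ F, |x - y| ≤ 2 * (u ^ 6) ^ n := by
  have hwt : ∀ i, 1 ≤ wt i := by decide
  have hr : u ^ 6 ≤ 1 := pow_le_one₀ h0.le h1.le
  induction n with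
  | zero =>
    intro i
    refine ⟨{tr u i}, by simpa using hwt i, ?_⟩
    rintro x ⟨z, hz, rfl⟩
    refine ⟨_, Finset.mem_singleton_self _, ?_⟩
    have := abs_le_of_mem_gdiff h0 h1 hz
    rw [add_sub_cancel_left, abs_mul, abs_of_pos (by positivity)]
    nlinarith [abs_nonneg z]
  | succ n ih =>
    classical
    intro i
    choose F hcard hF using ih
    refine ⟨(Finset.univ.filter fun j => ¬ Forb i j).biUnion
      fun j => (F j).image fun y => tr u i + u ^ 6 * y, ?_, ?_⟩
    · have hw : (10 : ℝ) * ∑ j : Fin 21, (if Forb i j then 0 else (wt j : ℝ)) ≤ 174 * wt i := by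
        exact_mod_cast wt_bound i
      have hle : (((Finset.univ.filter fun j => ¬ Forb i j).biUnion
          fun j => (F j).image fun y => tr u i + u ^ 6 * y).card : ℝ) ≤
          ∑ j ∈ Finset.univ.filter (fun j => ¬ Forb i j), ((F j).card : ℝ) := by
        have := (Finset.card_biUnion_le (s := Finset.univ.filter fun j => ¬ Forb i j)
          (t := fun j => (F j).image fun y => tr u i + u ^ 6 * y)).trans
          (Finset.sum_le_sum fun j _ => Finset.card_image_le)
        exact_mod_cast this
      refine hle.trans ((Finset.sum_le_sum fun j _ => hcard j).trans ?_)
      rw [← Finset.sum_mul, Finset.sum_filter, pow_succ]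
      simp only [ite_not]
      have : (0 : ℝ) < (87 / 5) ^ n := by positivity
      nlinarith
    · rintro x ⟨j, hj, y, hy, rfl⟩
      obtain ⟨y', hy', hd⟩ := hF j y hy
      refine ⟨tr u i + u ^ 6 * y', Finset.mem_biUnion.2
        ⟨j, by simpa using hj, Finset.mem_image_of_mem _ hy'⟩, ?_⟩
      rw [add_sub_add_left_eq_sub, ← mul_sub, abs_mul, abs_of_pos (by positivity), pow_succ (u ^ 6)]
      nlinarith [mul_le_mul_of_nonneg_left hd (pow_pos h0 6).le]

theorem dimH_gdiff_lt_one {u : ℝ} (hu : u ^ 2 = 1 - u) (h0 : 0 < u) (h1 : u < 1) :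
    dimH (gdiff u) < 1 := by
  have hlow : 0.618 < u := by nlinarith
  have h6 : u ^ 6 = 5 - 8 * u := by grind
  refine dimH_lt_one_of_cover (r := u ^ 6) (c := 87 / 5) (K := ∑ i, (wt i : ℝ)) (M := 2)
    (by positivity) (pow_lt_one₀ h0.le h1 (by norm_num)) (by norm_num) (by rw [h6]; linarith)
    (by norm_num) fun n => ?_
  classical
  choose F hcard hF using Good.cover h0 h1 n
  refine ⟨Finset.univ.biUnion F, ?_, fun x hx => ?_⟩
  · rw [Finset.sum_mul]
    refine le_trans ?_ (Finset.sum_le_sum fun i _ => hcard i)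
    exact_mod_cast Finset.card_biUnion_le
  · obtain ⟨i, hi⟩ := exists_good hu h0 h1 n x hx
    obtain ⟨y, hy, hd⟩ := hF i x hi
    exact ⟨y, Finset.mem_biUnion.2 ⟨i, Finset.mem_univ i, hy⟩, hd⟩

/-- Equivalent to `γ ^ 7 ≤ 2 ^ 5`; it yields the lower bounds `7 / 15` and `7 / 10` for the
dimensions of `C_α` and `C_β`. -/
theorem half_le_rpow {u : ℝ} (hu : u ^ 2 = 1 - u) (h0 : 0 < u) : 1 / 2 ≤ u ^ (7 / 5 : ℝ) := by
  have hlow : 0.618 < u := by nlinarith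
  have h7 : u ^ 7 = 13 * u - 8 := by grind
  have e : u ^ (7 / 5 : ℝ) = (u ^ 7) ^ (1 / 5 : ℝ) := by
    rw [← Real.rpow_natCast, ← Real.rpow_mul h0.le]; norm_num
  have e2 : (1 / 2 : ℝ) = ((1 / 2) ^ 5) ^ (1 / 5 : ℝ) := by
    rw [← Real.rpow_natCast, ← Real.rpow_mul (by norm_num)]; norm_num
  rw [e, e2]
  refine Real.rpow_le_rpow (by norm_num) ?_ (by norm_num)
  rw [h7]; norm_num; linarith

theorem stmt18 (γ : ℝ) (hγ : γ = (1 + Real.sqrt 5) / 2) :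
    dimH (diffSet (γ ^ (-3 : ℤ)) (γ ^ (-2 : ℤ)) (2 / γ)) < 1 ∧
    1 < dimH (middleCantor (γ ^ (-3 : ℤ))) + dimH (middleCantor (γ ^ (-2 : ℤ))) ∧
    volume (diffSet (γ ^ (-3 : ℤ)) (γ ^ (-2 : ℤ)) (2 / γ)) = 0 := by
  have hs5 : Real.sqrt 5 ^ 2 = 5 := Real.sq_sqrt (by norm_num)
  have hs0 := Real.sqrt_nonneg 5
  have hpos : 0 < γ := by rw [hγ]; positivity
  have hγ2 : γ ^ 2 = γ + 1 := by rw [hγ]; linear_combination hs5 / 4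
  obtain ⟨u, hu⟩ : ∃ u, u = γ⁻¹ := ⟨_, rfl⟩
  have h0 : 0 < u := by rw [hu]; positivity
  have hu2 : u ^ 2 = 1 - u := by
    rw [hu]; field_simp; linear_combination -hγ2
  have h1 : u < 1 := by nlinarith
  have e3 : γ ^ (-3 : ℤ) = u ^ 3 := by rw [hu, zpow_neg, inv_pow]; norm_cast
  have e2 : γ ^ (-2 : ℤ) = u ^ 2 := by rw [hu, zpow_neg, inv_pow]; norm_cast
  have e1 : 2 / γ = 2 * u := by rw [hu]; rfl
  rw [e3, e2, e1]
  have hdim : dimH (diffSet (u ^ 3) (u ^ 2) (2 * u)) < 1 := dimH_gdiff_lt_one hu2 h0 h1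
  have hlow : 0.618 < u := by nlinarith
  have hhigh : u < 0.62 := by nlinarith
  refine ⟨hdim, ?_, ?_⟩
  · have hα := le_dimH_middleCantor (a := u ^ 3) (s := 7 / 15) (by positivity)
      (by rw [show u ^ 3 = 2 * u - 1 by grind]; linarith) (by positivity) (by
        rw [← Real.rpow_natCast, ← Real.rpow_mul h0.le]
        convert half_le_rpow hu2 h0 using 2
        push_cast; norm_num)
    have hβ := le_dimH_middleCantor (a := u ^ 2) (s := 7 / 10) (by positivity)
      (by rw [hu2]; linarith) (by positivity) (by
        rw [← Real.rpow_natCast, ← Real.rpow_mul h0.le]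
        convert half_le_rpow hu2 h0 using 2
        push_cast; norm_num)
    refine lt_of_lt_of_le ?_ (add_le_add hα hβ)
    rw [← ENNReal.coe_add, ← ENNReal.coe_one, ENNReal.coe_lt_coe, ← NNReal.coe_lt_coe]
    push_cast
    norm_num
  · rw [← hausdorffMeasure_real]
    have := hausdorffMeasure_of_dimH_lt (d := 1) (by simpa using hdim)
    simpa using this
end

section
/- Let γ = (1 + √5)/2 be the golden ratio, and set α = γ^{−3}, β = γ^{−2}. Let x* be the largest real root of the polynomial x³ − 19x² + 31x + 3 (one has 17 < x* < 18). Then the Hausdorff dimension of C_α − (2/γ)·C_β equals log x* / (6·log γ). -/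
/-!
Write `θ = γ⁻¹`. Since `1 - θ³ = 2θ² = 2θ (1 - θ²)`, the difference set is `2θ²` times the set of
sums `∑ εₖ θ^(3k) - ∑ δₖ θ^(2k)`. Truncating after the exponent `6n` and multiplying by `γ^(6n)`
gives a finite set `level n` of lattice points in `ℤ[γ]`, and `level (n + 1) = γ⁶ level n + digits`
for a fixed set of digits (`expand`).

*Counting.* Starting from a point, or more generally from one of the three clusters `{0}`,
`{0, θ}`, `{0, θ, 1, γ}`, one expansion step produces a union of translates of these clusters
(`expand_cluster`), and points of different translates are so far apart that their descendants never
meet (`disjoint_expand_iter`). Hence the numbers of descendants obey a linear recursion with matrix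
`[[5, 4, 2], [6, 7, 4], [8, 12, 7]]`, whose characteristic polynomial is `x³ - 19x² + 31x + 3`; the
positive eigenvector shows that they are comparable to `xⁿ` (`exists_card_bounds`).

*Separation.* Points of `level n` have bounded Galois conjugates, so boundedly many of them lie in an
interval of bounded length (`card_level_near`).

*Dimension.* With `γ^(6s) = x`, covering the set by intervals of length comparable to `γ^(-6n)` around
the rescaled points of `level n` shows that its `s`-dimensional Hausdorff measure is finite. By
separation, a ball of radius `R` contains at most a constant times `Rˢ xⁿ` of these points once `n`
is large, so a finite cover by balls has `∑ Rᵢˢ` bounded below, and the measure is positive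
(`dimH_of_counting`).
-/

open Set MeasureTheory

/-! ### The expansion operator on the lattice `ℤ[γ]` -/

/-- Multiplication by `γ⁶ = 5 + 8γ` on `ℤ[γ]`, where `(a, b)` stands for `a + bγ`. -/
def mulSix (p : ℤ × ℤ) : ℤ × ℤ := (5 * p.1 + 8 * p.2, 8 * p.1 + 13 * p.2)

/-- One block of six digits in base `γ`, namely `-d₁ γ⁴ + e₁ γ³ - d₂ γ² + (e₂ - d₃)`, for
`w = (d₁, e₁, d₂, e₂, d₃)`. -/
def digit (w : Bool × Bool × Bool × Bool × Bool) : ℤ × ℤ :=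
  (-2 * w.1.toNat + w.2.1.toNat - w.2.2.1.toNat + w.2.2.2.1.toNat - w.2.2.2.2.toNat,
    -3 * w.1.toNat + 2 * w.2.1.toNat - w.2.2.1.toNat)

/-- The set of all six-digit blocks. -/
def digits : Finset (ℤ × ℤ) := Finset.univ.image digit

/-- The expansion operator `X ↦ γ⁶ X + digits`. -/
def expand (X : Finset (ℤ × ℤ)) : Finset (ℤ × ℤ) :=
  (X ×ˢ digits).image fun p => mulSix p.1 + p.2

lemma mulSix_add (p q : ℤ × ℤ) : mulSix (p + q) = mulSix p + mulSix q := by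
  ext <;> simp [mulSix] <;> ring

lemma mulSix_iter_add (n : ℕ) (p q : ℤ × ℤ) :
    mulSix^[n] (p + q) = mulSix^[n] p + mulSix^[n] q := by
  induction n with
  | zero => rfl
  | succ n ih => simp only [Function.iterate_succ_apply', ih, mulSix_add]

lemma mulSix_iter_zero (n : ℕ) : mulSix^[n] 0 = 0 := by
  have h := mulSix_iter_add n 0 0
  simpa using h

lemma mem_expand {X : Finset (ℤ × ℤ)} {z : ℤ × ℤ} :
    z ∈ expand X ↔ ∃ x ∈ X, ∃ d ∈ digits, mulSix x + d = z := by
  simp only [expand, Finset.mem_image, Finset.mem_product, Prod.exists]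
  constructor
  · rintro ⟨a, b, c, d, ⟨h1, h2⟩, h3⟩
    exact ⟨_, _, h1, _, _, h2, h3⟩
  · rintro ⟨a, b, h1, c, d, h2, h3⟩
    exact ⟨a, b, c, d, ⟨h1, h2⟩, h3⟩

lemma mem_expand_iter (n : ℕ) {X : Finset (ℤ × ℤ)} {z : ℤ × ℤ} :
    z ∈ expand^[n] X ↔ ∃ x ∈ X, ∃ e ∈ expand^[n] {0}, mulSix^[n] x + e = z := by
  induction n generalizing z with
  | zero => simp
  | succ n ih =>
    simp only [Function.iterate_succ_apply', mem_expand]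
    constructor
    · rintro ⟨y, hy, d, hd, rfl⟩
      obtain ⟨x, hx, e, he, rfl⟩ := ih.1 hy
      exact ⟨x, hx, _, ⟨e, he, d, hd, rfl⟩, by rw [mulSix_add, add_assoc]⟩
    · rintro ⟨x, hx, _, ⟨e, he, d, hd, rfl⟩, rfl⟩
      exact ⟨_, ih.2 ⟨x, hx, e, he, rfl⟩, d, hd, by rw [mulSix_add, add_assoc]⟩

lemma expand_iter_biUnion {ι : Type*} [DecidableEq ι] (n : ℕ) (S : Finset ι)
    (f : ι → Finset (ℤ × ℤ)) :
    expand^[n] (S.biUnion f) = S.biUnion fun i => expand^[n] (f i) := by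
  ext z
  simp only [Finset.mem_biUnion, mem_expand_iter n (X := S.biUnion f)]
  constructor
  · rintro ⟨x, ⟨i, hi, hx⟩, e, he, rfl⟩
    exact ⟨i, hi, (mem_expand_iter n).2 ⟨x, hx, e, he, rfl⟩⟩
  · rintro ⟨i, hi, hz⟩
    obtain ⟨x, hx, e, he, rfl⟩ := (mem_expand_iter n).1 hz
    exact ⟨x, ⟨i, hi, hx⟩, e, he, rfl⟩

lemma card_expand_iter_translate (n : ℕ) (t : ℤ × ℤ) (X : Finset (ℤ × ℤ)) :
    (expand^[n] (X.image (t + ·))).card = (expand^[n] X).card := by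
  have h : expand^[n] (X.image (t + ·)) = (expand^[n] X).image (mulSix^[n] t + ·) := by
    ext z
    simp only [mem_expand_iter n (X := X.image (t + ·)), Finset.mem_image]
    constructor
    · rintro ⟨_, ⟨x, hx, rfl⟩, e, he, rfl⟩
      exact ⟨_, (mem_expand_iter n).2 ⟨x, hx, e, he, rfl⟩, by rw [mulSix_iter_add, add_assoc]⟩
    · rintro ⟨y, hy, rfl⟩
      obtain ⟨x, hx, e, he, rfl⟩ := (mem_expand_iter n).1 hy
      exact ⟨_, ⟨x, hx, rfl⟩, e, he, by rw [mulSix_iter_add, add_assoc]⟩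
  rw [h, Finset.card_image_of_injective _ (add_right_injective _)]

/-! ### Values and conjugates of lattice points -/

/-- The real number `a + bγ` represented by `(a, b)`. -/
def latVal (γ : ℝ) (p : ℤ × ℤ) : ℝ := p.1 + p.2 * γ

lemma latVal_add (γ : ℝ) (p q : ℤ × ℤ) : latVal γ (p + q) = latVal γ p + latVal γ q := by
  simp [latVal]; ring

lemma latVal_sub (γ : ℝ) (p q : ℤ × ℤ) : latVal γ (p - q) = latVal γ p - latVal γ q := by
  simp [latVal]; ring

lemma golden_six {γ : ℝ} (h : γ ^ 2 = γ + 1) : γ ^ 6 = 8 * γ + 5 := by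
  rw [show γ ^ 6 = (γ ^ 2) ^ 3 by ring, h]
  linear_combination (γ + 4) * h

/-- This applies both to `γ` and to its conjugate `1 - γ`. -/
lemma latVal_mulSix {γ : ℝ} (h : γ ^ 2 = γ + 1) (p : ℤ × ℤ) :
    latVal γ (mulSix p) = γ ^ 6 * latVal γ p := by
  have h6 := golden_six h
  simp only [latVal, mulSix, h6]
  push_cast
  linear_combination (-8 * p.2) * h

lemma latVal_mulSix_iter {γ : ℝ} (h : γ ^ 2 = γ + 1) (n : ℕ) (p : ℤ × ℤ) :
    latVal γ (mulSix^[n] p) = (γ ^ 6) ^ n * latVal γ p := by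
  induction n with
  | zero => simp
  | succ n ih => rw [Function.iterate_succ_apply', latVal_mulSix h, ih]; ring

/-- An affine function is bounded on an interval by its values at the endpoints. -/
lemma affine_le {γ l u a b c : ℝ} (hl : l ≤ γ) (hu : γ ≤ u) (h1 : a + b * l ≤ c)
    (h2 : a + b * u ≤ c) : a + b * γ ≤ c := by
  rcases le_total 0 b with hb | hb
  · nlinarith
  · nlinarith

lemma latVal_digits {γ : ℝ} (h1 : 1.618 ≤ γ) (h2 : γ ≤ 1.619) {d : ℤ × ℤ} (hd : d ∈ digits) :
    -10.5 ≤ latVal γ d ∧ latVal γ d ≤ 5.25 := by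
  have key : ∀ d ∈ digits, (-d.1 * 1000 - d.2 * 1618 ≤ 10500 ∧ -d.1 * 1000 - d.2 * 1619 ≤ 10500) ∧
      (d.1 * 1000 + d.2 * 1618 ≤ 5250 ∧ d.1 * 1000 + d.2 * 1619 ≤ 5250) := by decide +kernel
  obtain ⟨⟨k1, k2⟩, k3, k4⟩ := key d hd
  have k1' : (-d.1 * 1000 - d.2 * 1618 : ℝ) ≤ 10500 := by exact_mod_cast k1
  have k2' : (-d.1 * 1000 - d.2 * 1619 : ℝ) ≤ 10500 := by exact_mod_cast k2
  have k3' : (d.1 * 1000 + d.2 * 1618 : ℝ) ≤ 5250 := by exact_mod_cast k3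
  have k4' : (d.1 * 1000 + d.2 * 1619 : ℝ) ≤ 5250 := by exact_mod_cast k4
  constructor
  · have := affine_le (a := -d.1) (b := -d.2) (c := 10.5) h1 h2 (by linarith) (by linarith)
    unfold latVal; linarith
  · exact affine_le h1 h2 (by linarith) (by linarith)

lemma latVal_conj_digits {γ : ℝ} (h1 : 1.618 ≤ γ) (h2 : γ ≤ 1.619) {d : ℤ × ℤ}
    (hd : d ∈ digits) : |latVal (1 - γ) d| ≤ 1.8 := by
  have key : ∀ d ∈ digits, (-d.1 * 1000 + d.2 * 618 ≤ 1800 ∧ -d.1 * 1000 + d.2 * 619 ≤ 1800) ∧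
      (d.1 * 1000 - d.2 * 618 ≤ 1800 ∧ d.1 * 1000 - d.2 * 619 ≤ 1800) := by decide +kernel
  obtain ⟨⟨k1, k2⟩, k3, k4⟩ := key d hd
  have k1' : (-d.1 * 1000 + d.2 * 618 : ℝ) ≤ 1800 := by exact_mod_cast k1
  have k2' : (-d.1 * 1000 + d.2 * 619 : ℝ) ≤ 1800 := by exact_mod_cast k2
  have k3' : (d.1 * 1000 - d.2 * 618 : ℝ) ≤ 1800 := by exact_mod_cast k3
  have k4' : (d.1 * 1000 - d.2 * 619 : ℝ) ≤ 1800 := by exact_mod_cast k4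
  have h1' : -0.619 ≤ 1 - γ := by linarith
  have h2' : 1 - γ ≤ -0.618 := by linarith
  rw [abs_le]
  constructor
  · have := affine_le (a := -d.1) (b := -d.2) (c := 1.8) h1' h2' (by linarith) (by linarith)
    unfold latVal; linarith
  · exact affine_le h1' h2' (by linarith) (by linarith)

/-- All digits lie in `[-0.62 (γ⁶ - 1), 0.31 (γ⁶ - 1)]`, hence the descendants of a point `x`,
rescaled to the size of `x`, stay within `[x - 0.62, x + 0.31]`. -/
lemma latVal_expand_iter {γ : ℝ} (h : γ ^ 2 = γ + 1) (h1 : 1.618 ≤ γ) (h2 : γ ≤ 1.619) (n : ℕ)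
    {e : ℤ × ℤ} (he : e ∈ expand^[n] {0}) :
    -0.62 * ((γ ^ 6) ^ n - 1) ≤ latVal γ e ∧ latVal γ e ≤ 0.31 * ((γ ^ 6) ^ n - 1) := by
  induction n generalizing e with
  | zero =>
    have : e = 0 := by simpa using he
    simp [this, latVal]
  | succ n ih =>
    rw [Function.iterate_succ_apply', mem_expand] at he
    obtain ⟨x, hx, d, hd, rfl⟩ := he
    obtain ⟨i1, i2⟩ := ih hx
    obtain ⟨j1, j2⟩ := latVal_digits h1 h2 hd
    have h6 := golden_six h
    have hρ : 17.944 ≤ γ ^ 6 := by linarith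
    rw [latVal_add, latVal_mulSix h, pow_succ]
    constructor <;> nlinarith

lemma latVal_conj_expand_iter {γ : ℝ} (h : γ ^ 2 = γ + 1) (h1 : 1.618 ≤ γ) (h2 : γ ≤ 1.619)
    {X : Finset (ℤ × ℤ)} (hX : ∀ p ∈ X, |latVal (1 - γ) p| ≤ 2) (n : ℕ) :
    ∀ p ∈ expand^[n] X, |latVal (1 - γ) p| ≤ 2 := by
  induction n with
  | zero => exact hX
  | succ n ih =>
    intro p hp
    rw [Function.iterate_succ_apply', mem_expand] at hp
    obtain ⟨x, hx, d, hd, rfl⟩ := hp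
    have i := ih x hx
    have j := latVal_conj_digits h1 h2 hd
    have hc : (1 - γ) ^ 2 = (1 - γ) + 1 := by linarith
    have h6 := golden_six hc
    rw [latVal_add, latVal_mulSix hc, h6]
    rw [abs_le] at *
    constructor <;> nlinarith

/-! ### The three neighbourhood types and their transition matrix -/

/-- The three clusters `{0}`, `{0, γ⁻¹}` and `{0, γ⁻¹, 1, γ}`; every iterate of `expand` on a
cluster splits into translates of these. -/
def cluster : Fin 3 → Finset (ℤ × ℤ)
  | 0 => {(0, 0)}
  | 1 => {(0, 0), (-1, 1)}
  | 2 => {(0, 0), (-1, 1), (1, 0), (0, 1)}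

/-- The positions and types of the clusters into which `expand (cluster i)` splits, listed in
increasing order of their values. -/
def children : Fin 3 → Finset ((ℤ × ℤ) × Fin 3)
  | 0 => {((-4, -4), 0), ((-3, -4), 0), ((-2, -4), 1), ((-2, -3), 2), ((-1, -2), 1),
      ((-1, -1), 0), ((0, -1), 1), ((0, 0), 2), ((1, 1), 1), ((1, 2), 0), ((2, 2), 0)}
  | 1 => {((-4, -4), 0), ((-3, -4), 0), ((-2, -4), 1), ((-2, -3), 2), ((-1, -2), 1),
      ((-1, -1), 0), ((0, -1), 1), ((0, 0), 2), ((1, 1), 1), ((1, 2), 2), ((2, 3), 1),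
      ((2, 4), 0), ((3, 4), 1), ((3, 5), 2), ((4, 6), 1), ((4, 7), 0), ((5, 7), 0)}
  | 2 => {((-4, -4), 0), ((-3, -4), 0), ((-2, -4), 1), ((-2, -3), 2), ((-1, -2), 1),
      ((-1, -1), 0), ((0, -1), 1), ((0, 0), 2), ((1, 1), 1), ((1, 2), 2), ((2, 3), 1),
      ((2, 4), 0), ((3, 4), 1), ((3, 5), 2), ((4, 6), 1), ((4, 7), 0), ((5, 7), 1),
      ((5, 8), 2), ((6, 9), 1), ((6, 10), 2), ((7, 11), 1), ((7, 12), 0), ((8, 12), 1),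
      ((8, 13), 2), ((9, 14), 1), ((9, 15), 0), ((10, 15), 0)}

/-- The translate of a cluster described by an element of `children`. -/
def placed (q : (ℤ × ℤ) × Fin 3) : Finset (ℤ × ℤ) := (cluster q.2).image (q.1 + ·)

/-- A decidable sufficient condition for `|a + bγ| ≥ 0.93`, using `1.618 ≤ γ ≤ 1.619`. -/
def Far (s : ℤ × ℤ) : Prop :=
  (930 ≤ 1000 * s.1 + 1618 * s.2 ∧ 930 ≤ 1000 * s.1 + 1619 * s.2) ∨
    (1000 * s.1 + 1618 * s.2 ≤ -930 ∧ 1000 * s.1 + 1619 * s.2 ≤ -930)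

instance : DecidablePred Far := fun s => by unfold Far; infer_instance

lemma expand_cluster (i : Fin 3) : expand (cluster i) = (children i).biUnion placed := by
  revert i; decide +kernel

lemma children_far (i : Fin 3) : ∀ q ∈ children i, ∀ q' ∈ children i, q ≠ q' →
    ∀ u ∈ placed q, ∀ v ∈ placed q', Far (u - v) := by
  revert i; decide +kernel

lemma Far.le_abs_latVal {γ : ℝ} (h1 : 1.618 ≤ γ) (h2 : γ ≤ 1.619) {s : ℤ × ℤ} (hs : Far s) :
    0.93 ≤ |latVal γ s| := by
  rw [le_abs]
  rcases hs with ⟨k1, k2⟩ | ⟨k1, k2⟩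
  · left
    have k1' : (930 : ℝ) ≤ 1000 * s.1 + 1618 * s.2 := by exact_mod_cast k1
    have k2' : (930 : ℝ) ≤ 1000 * s.1 + 1619 * s.2 := by exact_mod_cast k2
    have := affine_le (a := -s.1) (b := -s.2) (c := -0.93) h1 h2 (by linarith) (by linarith)
    unfold latVal; linarith
  · right
    have k1' : 1000 * s.1 + 1618 * s.2 ≤ (-930 : ℝ) := by exact_mod_cast k1
    have k2' : 1000 * s.1 + 1619 * s.2 ≤ (-930 : ℝ) := by exact_mod_cast k2
    have := affine_le (a := s.1) (b := s.2) (c := -0.93) h1 h2 (by linarith) (by linarith)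
    unfold latVal; linarith

/-- Points at distance at least `0.93` have disjoint descendants, since `0.93` bounds the width of
the range in `latVal_expand_iter`. -/
lemma disjoint_expand_iter {γ : ℝ} (h : γ ^ 2 = γ + 1) (h1 : 1.618 ≤ γ) (h2 : γ ≤ 1.619) (n : ℕ)
    {X Y : Finset (ℤ × ℤ)} (hXY : ∀ u ∈ X, ∀ v ∈ Y, Far (u - v)) :
    Disjoint (expand^[n] X) (expand^[n] Y) := by
  rw [Finset.disjoint_left]
  intro z hz hz'
  obtain ⟨u, hu, e, he, rfl⟩ := (mem_expand_iter n).1 hz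
  obtain ⟨v, hv, e', he', hvu⟩ := (mem_expand_iter n).1 hz'
  have hfar := (hXY u hu v hv).le_abs_latVal h1 h2
  obtain ⟨a1, a2⟩ := latVal_expand_iter h h1 h2 n he
  obtain ⟨b1, b2⟩ := latVal_expand_iter h h1 h2 n he'
  have hv := congrArg (latVal γ) hvu
  simp only [latVal_add, latVal_mulSix_iter h] at hv
  rw [latVal_sub, le_abs] at hfar
  have hρ : 0 < (γ ^ 6) ^ n := by positivity
  rcases hfar with hf | hf <;> nlinarith

lemma card_expand_cluster_succ {γ : ℝ} (h : γ ^ 2 = γ + 1) (h1 : 1.618 ≤ γ) (h2 : γ ≤ 1.619)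
    (n : ℕ) (i : Fin 3) :
    (expand^[n + 1] (cluster i)).card =
      ∑ q ∈ children i, (expand^[n] (cluster q.2)).card := by
  rw [Function.iterate_succ_apply, expand_cluster, expand_iter_biUnion, Finset.card_biUnion]
  · exact Finset.sum_congr rfl fun q _ => card_expand_iter_translate n q.1 _
  · intro q hq r hr hne
    exact disjoint_expand_iter h h1 h2 n (children_far i q hq r hr hne)

/-- The transition matrix between cluster types. -/
def transMat : Fin 3 → Fin 3 → ℕ
  | 0 => ![5, 4, 2]
  | 1 => ![6, 7, 4]
  | 2 => ![8, 12, 7]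

lemma card_children (i j : Fin 3) : ((children i).filter fun q => q.2 = j).card = transMat i j := by
  revert i j; decide +kernel

lemma sum_children (i : Fin 3) (f : Fin 3 → ℝ) :
    ∑ q ∈ children i, f q.2 = ∑ j, transMat i j * f j := by
  rw [← Finset.sum_fiberwise (children i) (fun q => q.2)]
  refine Finset.sum_congr rfl fun j _ => ?_
  rw [← card_children, Finset.sum_congr rfl (g := fun _ => f j)]
  · simp
  · intro q hq; rw [(Finset.mem_filter.1 hq).2]

/-- A positive eigenvector of `transMat` for the eigenvalue `x`, obtained as the cross product of the
first two rows of `transMat - x`. -/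
def eigvec (x : ℝ) : Fin 3 → ℝ := ![2 + 2 * x, 4 * x - 8, x ^ 2 - 12 * x + 11]

lemma transMat_eigvec {x : ℝ} (hroot : x ^ 3 - 19 * x ^ 2 + 31 * x + 3 = 0) (i : Fin 3) :
    ∑ j, transMat i j * eigvec x j = x * eigvec x i := by
  fin_cases i <;> simp [Fin.sum_univ_three, transMat, eigvec]
  · ring
  · ring
  · linear_combination -hroot

/-- The numbers of descendants grow like `xⁿ`. -/
lemma card_expand_cluster_bounds {γ x : ℝ} (h : γ ^ 2 = γ + 1) (h1 : 1.618 ≤ γ) (h2 : γ ≤ 1.619)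
    (hroot : x ^ 3 - 19 * x ^ 2 + 31 * x + 3 = 0) {c C : ℝ}
    (h0 : ∀ i, c * eigvec x i ≤ (cluster i).card ∧ (cluster i).card ≤ C * eigvec x i)
    (n : ℕ) (i : Fin 3) :
    c * x ^ n * eigvec x i ≤ (expand^[n] (cluster i)).card ∧
      (expand^[n] (cluster i)).card ≤ C * x ^ n * eigvec x i := by
  induction n generalizing i with
  | zero => simpa using h0 i
  | succ n ih =>
    have e : ∀ c : ℝ, c * x ^ (n + 1) * eigvec x i =
        ∑ q ∈ children i, c * x ^ n * eigvec x q.2 := by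
      intro c
      rw [← Finset.mul_sum, sum_children i (eigvec x), transMat_eigvec hroot]
      ring
    rw [card_expand_cluster_succ h h1 h2, Nat.cast_sum, e, e]
    exact ⟨Finset.sum_le_sum fun q _ => (ih q.2).1, Finset.sum_le_sum fun q _ => (ih q.2).2⟩

lemma exists_card_bounds {γ x : ℝ} (h : γ ^ 2 = γ + 1) (h1 : 1.618 ≤ γ) (h2 : γ ≤ 1.619)
    (hroot : x ^ 3 - 19 * x ^ 2 + 31 * x + 3 = 0) (hx : 17 < x) :
    ∃ c C : ℝ, 0 < c ∧ 0 < C ∧ ∀ n : ℕ, c * x ^ n ≤ (expand^[n] {0}).card ∧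
      (expand^[n] {0}).card ≤ C * x ^ n := by
  have w2 : x ^ 2 - 12 * x + 11 ≥ 4 := by nlinarith
  have hw : 0 < x ^ 2 := by positivity
  have key := card_expand_cluster_bounds h h1 h2 hroot (c := 1 / (10 * x ^ 2)) (C := 1) (by
    intro i
    rw [div_mul_eq_mul_div, one_mul, div_le_iff₀ (by positivity)]
    fin_cases i <;> simp [eigvec, cluster] <;> constructor <;> nlinarith)
  refine ⟨1 / (10 * x ^ 2) * (2 + 2 * x), 2 + 2 * x, by positivity, by positivity, fun n => ?_⟩
  have k := key n 0
  change _ ≤ ((expand^[n] {0}).card : ℝ) ∧ ((expand^[n] {0}).card : ℝ) ≤ _ at k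
  simp only [eigvec, Matrix.cons_val_zero] at k
  constructor <;> linarith [k.1, k.2]

/-! ### Hausdorff dimension from counting points -/

/-- If `K` is compact and every finite cover of `K` by balls of radii `Rᵢ ≤ 1` satisfies
`c ≤ ∑ Rᵢˢ`, then `μH[s] K ≥ c`. -/
lemma le_hausdorffMeasure_of_finite_covers {K : Set ℝ} (hK : IsCompact K) {s c : ℝ} (hs : 0 < s)
    (hcov : ∀ (F : Finset ℕ) (y R : ℕ → ℝ), (∀ i ∈ F, 0 < R i ∧ R i ≤ 1) →
      K ⊆ ⋃ i ∈ F, Metric.ball (y i) (R i) → c ≤ ∑ i ∈ F, R i ^ s) :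
    ENNReal.ofReal c ≤ μH[s] K := by
  rw [Measure.hausdorffMeasure_apply]
  refine le_iSup₂_of_le (ENNReal.ofReal (1 / 2)) (by simp) ?_
  refine le_iInf fun t => le_iInf fun ht => le_iInf fun hd => ?_
  refine ENNReal.le_of_forall_pos_le_add fun ε hε _ => ?_
  obtain ⟨ε', hε', hsum⟩ := ENNReal.exists_pos_sum_of_countable (ε := (ε : ENNReal))
    (by exact_mod_cast ne_of_gt hε) ℕ
  -- Each nonempty `t i` lies in an open ball whose radius to the `s` exceeds the `s`-th power of
  -- the diameter by at most `ε' i`.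
  have hball : ∀ i, ∃ y R : ℝ, 0 < R ∧ R ≤ 1 ∧ t i ⊆ Metric.ball y R ∧
      ENNReal.ofReal (R ^ s) ≤ (⨆ _ : (t i).Nonempty, Metric.ediam (t i) ^ s) + ε' i := by
    intro i
    have htop : Metric.ediam (t i) ≠ ⊤ := ne_top_of_le_ne_top ENNReal.ofReal_ne_top (hd i)
    set d := (Metric.ediam (t i)).toReal with hdd
    have hd0 : 0 ≤ d := ENNReal.toReal_nonneg
    have hd1 : d ≤ 1 / 2 := ENNReal.toReal_le_of_le_ofReal (by norm_num) (hd i)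
    have hcont : Filter.Tendsto (fun R : ℝ => R ^ s) (nhdsWithin d (Ioi d)) (nhds (d ^ s)) :=
      ((Real.continuousAt_rpow_const d s (Or.inr hs.le)).tendsto).mono_left nhdsWithin_le_nhds
    have hlt : d ^ s < d ^ s + ε' i := by
      have : (0 : ℝ) < ε' i := hε' i
      linarith
    have hev := (hcont.eventually_lt_const hlt).and
      (Ioc_mem_nhdsGT (show d < 1 by linarith))
    obtain ⟨R, hR, hR1⟩ := hev.exists
    have hR0 : 0 < R := lt_of_le_of_lt hd0 hR1.1
    rcases (t i).eq_empty_or_nonempty with hemp | hne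
    · -- for an empty piece the supremum is `0`, so a tiny radius is needed
      have hcont0 : Filter.Tendsto (fun R : ℝ => R ^ s) (nhdsWithin 0 (Ioi 0)) (nhds (0 ^ s)) :=
        ((Real.continuousAt_rpow_const 0 s (Or.inr hs.le)).tendsto).mono_left nhdsWithin_le_nhds
      rw [Real.zero_rpow hs.ne'] at hcont0
      have hev0 := (hcont0.eventually_lt_const (show (0 : ℝ) < ε' i from hε' i)).and
        (Ioc_mem_nhdsGT (show (0 : ℝ) < 1 by norm_num))
      obtain ⟨R, hR, hR1⟩ := hev0.exists
      refine ⟨0, R, hR1.1, hR1.2, by simp [hemp], ?_⟩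
      refine le_add_left ?_
      rw [ENNReal.ofReal_le_iff_le_toReal (by simp)]
      simpa using hR.le
    · obtain ⟨y, hy⟩ := hne
      refine ⟨y, R, hR0, hR1.2, ?_, ?_⟩
      · intro z hz
        rw [Metric.mem_ball]
        have h1 : edist z y ≤ Metric.ediam (t i) := Metric.edist_le_ediam_of_mem hz hy
        have h2 : dist z y ≤ d := by
          rw [dist_edist]
          exact ENNReal.toReal_mono htop h1
        exact lt_of_le_of_lt h2 hR1.1
      · rw [iSup_pos ⟨y, hy⟩, ← ENNReal.ofReal_toReal htop, ← hdd,
          ENNReal.ofReal_rpow_of_nonneg hd0 hs.le]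
        calc ENNReal.ofReal (R ^ s) ≤ ENNReal.ofReal (d ^ s + ε' i) :=
              ENNReal.ofReal_le_ofReal hR.le
          _ = ENNReal.ofReal (d ^ s) + ε' i := by
              rw [ENNReal.ofReal_add (by positivity) (by positivity), ENNReal.ofReal_coe_nnreal]
  choose y R hR0 hR1 hsub hRs using hball
  obtain ⟨F, hF⟩ := hK.elim_finite_subcover (fun i => Metric.ball (y i) (R i))
    (fun i => Metric.isOpen_ball) (ht.trans (iUnion_mono hsub))
  calc ENNReal.ofReal c ≤ ENNReal.ofReal (∑ i ∈ F, R i ^ s) :=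
        ENNReal.ofReal_le_ofReal (hcov F y R (fun i _ => ⟨hR0 i, hR1 i⟩) hF)
    _ = ∑ i ∈ F, ENNReal.ofReal (R i ^ s) :=
        ENNReal.ofReal_sum_of_nonneg fun i _ => Real.rpow_nonneg (hR0 i).le _
    _ ≤ ∑ i ∈ F, ((⨆ _ : (t i).Nonempty, Metric.ediam (t i) ^ s) + ε' i) :=
        Finset.sum_le_sum fun i _ => hRs i
    _ ≤ ∑' i, ((⨆ _ : (t i).Nonempty, Metric.ediam (t i) ^ s) + ε' i) := ENNReal.sum_le_tsum F
    _ = (∑' i, ⨆ _ : (t i).Nonempty, Metric.ediam (t i) ^ s) + ∑' i, (ε' i : ENNReal) :=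
        ENNReal.tsum_add
    _ ≤ _ := by gcongr

/-- Suppose that `U n` describes a `ρ⁻ⁿ`-dense set of points of the compact set `K`, that it has
about `ρ^(s n)` elements, and that an interval of length comparable to `ρ⁻ᵏ` contains at most
about `ρ^(s m)` of the points of `U (k + m)`. Then `dimH K = s`: the cover by intervals of length
comparable to `ρ⁻ⁿ` bounds `μH[s] K` above, and counting the points of `U n` in a finite cover by
balls bounds it below. -/
lemma dimH_of_counting {ι : Type*} {K : Set ℝ} (hK : IsCompact K) {ρ x s : ℝ} (hρ : 1 < ρ)
    (hs : 0 < s) (hx : ρ ^ s = x) (U : ℕ → Finset ι) (pos : ι → ℝ) {c₁ c₂ C₀ C : ℝ}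
    (hc₁ : 0 < c₁) (hC₀ : 0 ≤ C₀) (hC : 0 < C)
    (hlow : ∀ n, c₁ * x ^ n ≤ (U n).card) (hup : ∀ n, (U n).card ≤ c₂ * x ^ n)
    (hcov : ∀ n, ∀ z ∈ K, ∃ p ∈ U n, |z - pos p / ρ ^ n| ≤ C₀ / ρ ^ n)
    (hmem : ∀ n, ∀ p ∈ U n, pos p / ρ ^ n ∈ K)
    (hloc : ∀ k m : ℕ, ∀ y : ℝ,
      (((U (k + m)).filter fun p => |pos p / ρ ^ (k + m) - y| ≤ 1 / ρ ^ k).card : ℝ) ≤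
        C * x ^ m) :
    dimH K = ENNReal.ofReal s := by
  classical
  have hρ0 : 0 < ρ := by linarith
  have hx0 : 0 < x := hx ▸ Real.rpow_pos_of_pos hρ0 s
  have hxpow : ∀ n : ℕ, (ρ ^ n) ^ s = x ^ n := by
    intro n
    rw [← hx, ← Real.rpow_natCast, ← Real.rpow_natCast, ← Real.rpow_mul hρ0.le,
      ← Real.rpow_mul hρ0.le, mul_comm]
  have hinv : Filter.Tendsto (fun n : ℕ => 1 / ρ ^ n) Filter.atTop (nhds 0) := by
    simpa [Function.comp_def] using
      tendsto_inv_atTop_zero.comp (tendsto_pow_atTop_atTop_of_one_lt hρ)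
  have hcoe : ((s.toNNReal : NNReal) : ℝ) = s := Real.coe_toNNReal s hs.le
  change dimH K = ((s.toNNReal : NNReal) : ENNReal)
  apply dimH_of_hausdorffMeasure_ne_zero_ne_top
  · rw [hcoe]
    have hpos : 0 < c₁ / (C * x) := by positivity
    refine ne_of_gt (lt_of_lt_of_le (ENNReal.ofReal_pos.2 hpos)
      (le_hausdorffMeasure_of_finite_covers hK hs ?_))
    intro F y R hR hKF
    have hn : ∃ n : ℕ, ∀ i ∈ F, 1 / ρ ^ n < R i := by
      have : ∀ᶠ n : ℕ in Filter.atTop, ∀ i ∈ F, 1 / ρ ^ n < R i := by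
        rw [Finset.eventually_all]
        intro i hi
        exact hinv.eventually_lt_const (hR i hi).1
      exact this.exists
    obtain ⟨n, hn⟩ := hn
    have hcount : ∀ i ∈ F, (((U n).filter fun p => |pos p / ρ ^ n - y i| < R i).card : ℝ) ≤
        C * x * x ^ n * R i ^ s := by
      intro i hi
      obtain ⟨hRi0, hRi1⟩ := hR i hi
      obtain ⟨k, hk1, hk2⟩ := exists_nat_pow_near (x := (R i)⁻¹) (y := ρ)
        ((one_le_inv₀ hRi0).2 hRi1) hρ
      have hk1' : R i ≤ 1 / ρ ^ k := by
        rw [one_div, le_inv_comm₀ hRi0 (by positivity)]; exact hk1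
      have hk2' : 1 / ρ ^ (k + 1) ≤ R i := by
        rw [one_div, inv_le_comm₀ (by positivity) hRi0]; exact hk2.le
      have hkn : k ≤ n := by
        have h1 : 1 / ρ ^ n < 1 / ρ ^ k := lt_of_lt_of_le (hn i hi) hk1'
        have h2 : ρ ^ k < ρ ^ n := by
          rwa [one_div_lt_one_div (by positivity) (by positivity)] at h1
        exact ((pow_lt_pow_iff_right₀ hρ).1 h2).le
      obtain ⟨m, rfl⟩ := Nat.exists_eq_add_of_le hkn
      have hpowR : 1 / x ^ (k + 1) ≤ R i ^ s := by
        rw [← hxpow, ← Real.one_rpow s, ← Real.div_rpow zero_le_one (by positivity)]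
        · simpa using Real.rpow_le_rpow (by positivity) hk2' hs.le
      calc (((U (k + m)).filter fun p => |pos p / ρ ^ (k + m) - y i| < R i).card : ℝ)
          ≤ ((U (k + m)).filter fun p => |pos p / ρ ^ (k + m) - y i| ≤ 1 / ρ ^ k).card := by
            gcongr with p hp
            intro hlt
            exact hlt.le.trans hk1'
        _ ≤ C * x ^ m := hloc k m (y i)
        _ = C * x * x ^ (k + m) * (1 / x ^ (k + 1)) := by
            field_simp; ring
        _ ≤ C * x * x ^ (k + m) * R i ^ s := by gcongr
    have hsub : U n ⊆ F.biUnion fun i => (U n).filter fun p => |pos p / ρ ^ n - y i| < R i := by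
      intro p hp
      have h := hKF (hmem n p hp)
      simp only [mem_iUnion, Metric.mem_ball, Real.dist_eq] at h
      obtain ⟨i, hi, hlt⟩ := h
      exact Finset.mem_biUnion.2 ⟨i, hi, Finset.mem_filter.2 ⟨hp, hlt⟩⟩
    have htot : c₁ * x ^ n ≤ C * x * x ^ n * ∑ i ∈ F, R i ^ s := by
      calc c₁ * x ^ n ≤ (U n).card := hlow n
        _ ≤ ((∑ i ∈ F, ((U n).filter fun p => |pos p / ρ ^ n - y i| < R i).card : ℕ) : ℝ) := by
            exact_mod_cast (Finset.card_le_card hsub).trans Finset.card_biUnion_le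
        _ ≤ ∑ i ∈ F, C * x * x ^ n * R i ^ s := by
            rw [Nat.cast_sum]; exact Finset.sum_le_sum hcount
        _ = _ := by rw [Finset.mul_sum]
    rw [div_le_iff₀ (by positivity)]
    have hxn : 0 < x ^ n := by positivity
    nlinarith
  · rw [hcoe]
    have hdiam : ∀ (n : ℕ) (p : ι),
        Metric.ediam (Metric.closedBall (pos p / ρ ^ n) (C₀ / ρ ^ n)) ≤
          ENNReal.ofReal (2 * C₀ * (1 / ρ ^ n)) := by
      intro n p
      rw [Real.closedBall_eq_Icc, Real.ediam_Icc]
      exact le_of_eq (by congr 1; ring)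
    have hle := Measure.hausdorffMeasure_le_liminf_sum (ι := fun n => U n) s K
      (l := Filter.atTop) (fun n : ℕ => ENNReal.ofReal (2 * C₀ * (1 / ρ ^ n)))
      (by
        have := ENNReal.tendsto_ofReal (hinv.const_mul (2 * C₀))
        simpa using this)
      (fun n p => Metric.closedBall (pos p / ρ ^ n) (C₀ / ρ ^ n))
      (Filter.Eventually.of_forall fun n p => hdiam n p)
      (Filter.Eventually.of_forall fun n z hz => by
        obtain ⟨p, hp, h⟩ := hcov n z hz
        exact mem_iUnion.2 ⟨⟨p, hp⟩, by rwa [Metric.mem_closedBall, Real.dist_eq]⟩)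
    have hbound : ∀ n : ℕ, (∑ p : U n,
        Metric.ediam (Metric.closedBall (pos p / ρ ^ n) (C₀ / ρ ^ n)) ^ s) ≤
          ENNReal.ofReal (c₂ * (2 * C₀) ^ s) := by
      intro n
      calc (∑ p : U n, Metric.ediam (Metric.closedBall (pos p / ρ ^ n) (C₀ / ρ ^ n)) ^ s)
          ≤ ∑ p : U n, ENNReal.ofReal ((2 * C₀) ^ s * (1 / x ^ n)) := by
            refine Finset.sum_le_sum fun p _ => ?_
            refine (ENNReal.rpow_le_rpow (hdiam n p) hs.le).trans (le_of_eq ?_)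
            rw [ENNReal.ofReal_rpow_of_nonneg (by positivity) hs.le,
              Real.mul_rpow (by positivity) (by positivity),
              Real.div_rpow zero_le_one (by positivity), Real.one_rpow, hxpow]
        _ = ENNReal.ofReal ((U n).card * ((2 * C₀) ^ s * (1 / x ^ n))) := by
            rw [Finset.sum_const, Finset.card_univ, Fintype.card_coe, nsmul_eq_mul,
              ENNReal.ofReal_mul (p := ((U n).card : ℝ)) (by positivity),
              ENNReal.ofReal_natCast]
        _ ≤ ENNReal.ofReal (c₂ * (2 * C₀) ^ s) := by
            apply ENNReal.ofReal_le_ofReal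
            calc (U n).card * ((2 * C₀) ^ s * (1 / x ^ n))
                ≤ c₂ * x ^ n * ((2 * C₀) ^ s * (1 / x ^ n)) := by
                  gcongr; exact hup n
              _ = _ := by field_simp
    refine ne_top_of_le_ne_top (b := ENNReal.ofReal (c₂ * (2 * C₀) ^ s)) ENNReal.ofReal_ne_top
      (hle.trans ?_)
    exact (Filter.liminf_le_liminf (Filter.Eventually.of_forall hbound)).trans
      (by rw [Filter.liminf_const])

/-! ### The difference set in terms of the lattice -/

/-- The lattice points whose rescalings are the finite truncations of the points of the difference
set; the seed `{-1, 0, 1}` consists of the values of the first digit `ε₀ - δ₀`. -/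
def level (n : ℕ) : Finset (ℤ × ℤ) := expand^[n] {(-1, 0), (0, 0), (1, 0)}

/-- The truncated Cantor series `∑_{k < m} εₖ aᵏ`. -/
noncomputable def partialSeries (a : ℝ) (ε : ℕ → Bool) (m : ℕ) : ℝ :=
  ∑ k ∈ Finset.range m, if ε k then a ^ k else 0

lemma partialSeries_succ (a : ℝ) (ε : ℕ → Bool) (m : ℕ) :
    partialSeries a ε (m + 1) = partialSeries a ε m + (ε m).toNat * a ^ m := by
  rw [partialSeries, Finset.sum_range_succ, partialSeries]
  cases ε m <;> simp

lemma partialSeries_congr (a : ℝ) {ε ε' : ℕ → Bool} {m : ℕ} (h : ∀ k < m, ε k = ε' k) :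
    partialSeries a ε m = partialSeries a ε' m := by
  refine Finset.sum_congr rfl fun k hk => ?_
  rw [h k (Finset.mem_range.1 hk)]

lemma latVal_digit {γ : ℝ} (h : γ ^ 2 = γ + 1) (d₁ e₁ d₂ e₂ d₃ : Bool) :
    latVal γ (digit (d₁, e₁, d₂, e₂, d₃)) = e₁.toNat * γ ^ 3 + e₂.toNat -
      (d₁.toNat * γ ^ 4 + d₂.toNat * γ ^ 2 + d₃.toNat) := by
  have h3 : γ ^ 3 = 2 * γ + 1 := by linear_combination (γ + 1) * h
  have h4 : γ ^ 4 = 3 * γ + 2 := by linear_combination (γ ^ 2 + γ + 2) * h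
  simp only [latVal, digit, h3, h4, h]
  push_cast
  ring

/-- Passing from truncation level `n` to `n + 1` appends one block of six digits. -/
lemma truncation_succ {γ α β : ℝ} (h : γ ^ 2 = γ + 1) (hα : γ ^ 3 * α = 1) (hβ : γ ^ 2 * β = 1)
    (ε δ : ℕ → Bool) (n : ℕ) :
    (γ ^ 6) ^ (n + 1) *
        (partialSeries α ε (2 * (n + 1) + 1) - partialSeries β δ (3 * (n + 1) + 1)) =
      γ ^ 6 * ((γ ^ 6) ^ n * (partialSeries α ε (2 * n + 1) - partialSeries β δ (3 * n + 1))) +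
        latVal γ (digit (δ (3 * n + 1), ε (2 * n + 1), δ (3 * n + 2), ε (2 * n + 2),
          δ (3 * n + 3))) := by
  have a1 : (γ ^ 6) ^ (n + 1) * α ^ (2 * n + 1) = γ ^ 3 := by
    calc (γ ^ 6) ^ (n + 1) * α ^ (2 * n + 1) = (γ ^ 3 * α) ^ (2 * n + 1) * γ ^ 3 := by ring
      _ = γ ^ 3 := by rw [hα]; simp
  have a2 : (γ ^ 6) ^ (n + 1) * α ^ (2 * n + 2) = 1 := by
    calc (γ ^ 6) ^ (n + 1) * α ^ (2 * n + 2) = (γ ^ 3 * α) ^ (2 * n + 2) := by ring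
      _ = 1 := by rw [hα]; simp
  have b1 : (γ ^ 6) ^ (n + 1) * β ^ (3 * n + 1) = γ ^ 4 := by
    calc (γ ^ 6) ^ (n + 1) * β ^ (3 * n + 1) = (γ ^ 2 * β) ^ (3 * n + 1) * γ ^ 4 := by ring
      _ = γ ^ 4 := by rw [hβ]; simp
  have b2 : (γ ^ 6) ^ (n + 1) * β ^ (3 * n + 2) = γ ^ 2 := by
    calc (γ ^ 6) ^ (n + 1) * β ^ (3 * n + 2) = (γ ^ 2 * β) ^ (3 * n + 2) * γ ^ 2 := by ring
      _ = γ ^ 2 := by rw [hβ]; simp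
  have b3 : (γ ^ 6) ^ (n + 1) * β ^ (3 * n + 3) = 1 := by
    calc (γ ^ 6) ^ (n + 1) * β ^ (3 * n + 3) = (γ ^ 2 * β) ^ (3 * n + 3) := by ring
      _ = 1 := by rw [hβ]; simp
  rw [latVal_digit h, show 2 * (n + 1) + 1 = 2 * n + 1 + 1 + 1 by ring,
    show 3 * (n + 1) + 1 = 3 * n + 1 + 1 + 1 + 1 by ring]
  simp only [partialSeries_succ _ _ (_ + 1)]
  linear_combination ((ε (2 * n + 1)).toNat : ℝ) * a1 + ((ε (2 * n + 2)).toNat : ℝ) * a2 -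
    ((δ (3 * n + 1)).toNat : ℝ) * b1 - ((δ (3 * n + 2)).toNat : ℝ) * b2 -
    ((δ (3 * n + 3)).toNat : ℝ) * b3

lemma exists_level_of_seq {γ α β : ℝ} (h : γ ^ 2 = γ + 1) (hα : γ ^ 3 * α = 1)
    (hβ : γ ^ 2 * β = 1) (ε δ : ℕ → Bool) (n : ℕ) :
    ∃ p ∈ level n, latVal γ p =
      (γ ^ 6) ^ n * (partialSeries α ε (2 * n + 1) - partialSeries β δ (3 * n + 1)) := by
  induction n with
  | zero =>
    refine ⟨(((ε 0).toNat : ℤ) - (δ 0).toNat, 0), ?_, ?_⟩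
    · simp only [level, Function.iterate_zero, id]
      cases ε 0 <;> cases δ 0 <;> simp
    · simp only [latVal, partialSeries]
      cases h0 : ε 0 <;> cases h0' : δ 0 <;> simp [h0, h0']
  | succ n ih =>
    obtain ⟨p, hp, hval⟩ := ih
    refine ⟨mulSix p + digit (δ (3 * n + 1), ε (2 * n + 1), δ (3 * n + 2), ε (2 * n + 2),
      δ (3 * n + 3)), ?_, ?_⟩
    · rw [level, Function.iterate_succ_apply', mem_expand]
      exact ⟨p, hp, _, Finset.mem_image_of_mem _ (Finset.mem_univ _), rfl⟩
    · rw [truncation_succ h hα hβ, latVal_add, latVal_mulSix h, hval]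

lemma exists_seq_of_level {γ α β : ℝ} (h : γ ^ 2 = γ + 1) (hα : γ ^ 3 * α = 1)
    (hβ : γ ^ 2 * β = 1) (n : ℕ) {p : ℤ × ℤ} (hp : p ∈ level n) :
    ∃ ε δ : ℕ → Bool, (∀ k, 2 * n + 1 ≤ k → ε k = false) ∧ (∀ k, 3 * n + 1 ≤ k → δ k = false) ∧
      latVal γ p =
        (γ ^ 6) ^ n * (partialSeries α ε (2 * n + 1) - partialSeries β δ (3 * n + 1)) := by
  induction n generalizing p with
  | zero =>
    simp only [level, Function.iterate_zero, id, Finset.mem_insert, Finset.mem_singleton] at hp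
    rcases hp with rfl | rfl | rfl
    · refine ⟨fun _ => false, fun k => k == 0, fun _ _ => rfl, fun k hk => ?_, ?_⟩
      · simp; omega
      · simp [latVal, partialSeries]
    · exact ⟨fun _ => false, fun _ => false, fun _ _ => rfl, fun _ _ => rfl,
        by simp [latVal, partialSeries]⟩
    · refine ⟨fun k => k == 0, fun _ => false, fun k hk => ?_, fun _ _ => rfl, ?_⟩
      · simp; omega
      · simp [latVal, partialSeries]
  | succ n ih =>
    rw [level, Function.iterate_succ_apply', mem_expand] at hp
    obtain ⟨q, hq, d, hd, rfl⟩ := hp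
    obtain ⟨ε, δ, hε, hδ, hval⟩ := ih hq
    obtain ⟨⟨d₁, e₁, d₂, e₂, d₃⟩, -, rfl⟩ := Finset.mem_image.1 hd
    let ε' : ℕ → Bool := fun k => if k = 2 * n + 1 then e₁ else if k = 2 * n + 2 then e₂ else ε k
    let δ' : ℕ → Bool := fun k => if k = 3 * n + 1 then d₁ else if k = 3 * n + 2 then d₂ else
      if k = 3 * n + 3 then d₃ else δ k
    refine ⟨ε', δ', fun k hk => ?_, fun k hk => ?_, ?_⟩
    · simp only [ε']
      rw [if_neg (by omega), if_neg (by omega)]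
      exact hε k (by omega)
    · simp only [δ']
      rw [if_neg (by omega), if_neg (by omega), if_neg (by omega)]
      exact hδ k (by omega)
    · have hε' : partialSeries α ε' (2 * n + 1) = partialSeries α ε (2 * n + 1) :=
        partialSeries_congr α fun k hk => by
          simp only [ε']; rw [if_neg (by omega), if_neg (by omega)]
      have hδ' : partialSeries β δ' (3 * n + 1) = partialSeries β δ (3 * n + 1) :=
        partialSeries_congr β fun k hk => by
          simp only [δ']; rw [if_neg (by omega), if_neg (by omega), if_neg (by omega)]
      rw [truncation_succ h hα hβ, hε', hδ', latVal_add, latVal_mulSix h, hval]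
      simp only [ε', δ']
      simp

/-- The full Cantor series `∑ εₖ aᵏ`. -/
noncomputable def cantorSeries (a : ℝ) (ε : ℕ → Bool) : ℝ := ∑' k : ℕ, if ε k then a ^ k else 0

lemma cantor_term_le {a : ℝ} (ha : 0 ≤ a) (ε : ℕ → Bool) (k : ℕ) :
    ‖(if ε k then a ^ k else 0 : ℝ)‖ ≤ a ^ k := by
  split_ifs
  · rw [Real.norm_of_nonneg (by positivity)]
  · simpa using pow_nonneg ha k

lemma summable_cantor {a : ℝ} (ha : 0 ≤ a) (ha1 : a < 1) (ε : ℕ → Bool) :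
    Summable fun k : ℕ => (if ε k then a ^ k else 0 : ℝ) :=
  Summable.of_norm_bounded (summable_geometric_of_lt_one ha ha1) (cantor_term_le ha ε)

lemma cantorSeries_tail {a : ℝ} (ha : 0 ≤ a) (ha1 : a ≤ 1 / 2) (ε : ℕ → Bool) (m : ℕ) :
    0 ≤ cantorSeries a ε - partialSeries a ε m ∧
      cantorSeries a ε - partialSeries a ε m ≤ 2 * a ^ m := by
  have hlt : a < 1 := by linarith
  have hsum := summable_cantor ha hlt ε
  have hsplit := hsum.sum_add_tsum_nat_add m
  have htail : cantorSeries a ε - partialSeries a ε m =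
      ∑' k : ℕ, (if ε (k + m) then a ^ (k + m) else 0 : ℝ) := by
    rw [cantorSeries, partialSeries, ← hsplit]; ring
  rw [htail]
  constructor
  · exact tsum_nonneg fun k => by split_ifs <;> positivity
  · have hgeo : HasSum (fun k : ℕ => a ^ (k + m)) ((1 - a)⁻¹ * a ^ m) := by
      simpa [pow_add] using (hasSum_geometric_of_lt_one ha hlt).mul_right (a ^ m)
    have hle : ∑' k : ℕ, (if ε (k + m) then a ^ (k + m) else 0 : ℝ) ≤ (1 - a)⁻¹ * a ^ m := by
      rw [← hgeo.tsum_eq]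
      refine Summable.tsum_le_tsum (fun k => ?_) ((summable_nat_add_iff m).2 hsum) hgeo.summable
      exact (le_abs_self _).trans (cantor_term_le ha ε (k + m))
    have h2 : (1 - a)⁻¹ ≤ 2 := by
      rw [inv_le_comm₀ (by linarith) (by norm_num)]; linarith
    exact hle.trans (by gcongr)

lemma cantorSeries_eq_partial (a : ℝ) {ε : ℕ → Bool} {m : ℕ} (h : ∀ k, m ≤ k → ε k = false) :
    cantorSeries a ε = partialSeries a ε m := by
  refine tsum_eq_sum fun k hk => ?_
  rw [h k (by simpa using hk)]
  simp

lemma continuous_cantorSeries {a : ℝ} (ha : 0 ≤ a) (ha1 : a < 1) : Continuous (cantorSeries a) := by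
  refine continuous_tsum (fun k => ?_) (summable_geometric_of_lt_one ha ha1)
    (fun k ε => cantor_term_le ha ε k)
  exact (continuous_of_discreteTopology (f := fun b : Bool => if b then a ^ k else (0 : ℝ))).comp
    (continuous_apply k)

lemma diffSet_eq_range {a b l κ : ℝ} (h1 : 1 - a = κ) (h2 : l * (1 - b) = κ) :
    diffSet a b l = range fun w : (ℕ → Bool) × (ℕ → Bool) =>
      κ * (cantorSeries a w.1 - cantorSeries b w.2) := by
  ext z
  constructor
  · rintro ⟨x, ⟨ε, rfl⟩, y, ⟨δ, rfl⟩, rfl⟩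
    refine ⟨(ε, δ), ?_⟩
    simp only [cantorSeries]
    rw [← mul_assoc l, h2, h1]; ring
  · rintro ⟨⟨ε, δ⟩, rfl⟩
    refine ⟨_, ⟨ε, rfl⟩, _, ⟨δ, rfl⟩, ?_⟩
    simp only [cantorSeries]
    rw [← mul_assoc l, h2, h1]; ring

/-! ### Local counting -/

/-- A lattice point with bounded value and bounded conjugate lies in a fixed finite box. This is
applied to differences of two points of one level. -/
lemma mem_box {γ : ℝ} (h1 : 1.618 ≤ γ) (h2 : γ ≤ 1.619) {p : ℤ × ℤ}
    (hv : |latVal γ p| ≤ 6) (hc : |latVal (1 - γ) p| ≤ 4) :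
    p ∈ Finset.Icc (-20 : ℤ) 20 ×ˢ Finset.Icc (-20 : ℤ) 20 := by
  rw [abs_le] at hv hc
  simp only [latVal] at hv hc
  have hb1 : (p.2 : ℝ) ≤ 5 := by
    by_contra hb; push Not at hb; nlinarith
  have hb2 : (-5 : ℝ) ≤ p.2 := by
    by_contra hb; push Not at hb; nlinarith
  have ha1 : (p.1 : ℝ) ≤ 20 := by nlinarith
  have ha2 : (-20 : ℝ) ≤ p.1 := by nlinarith
  have hb1' : p.2 ≤ 5 := by exact_mod_cast hb1
  have hb2' : -5 ≤ p.2 := by exact_mod_cast hb2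
  have ha1' : p.1 ≤ 20 := by exact_mod_cast ha1
  have ha2' : -20 ≤ p.1 := by exact_mod_cast ha2
  simp only [Finset.mem_product, Finset.mem_Icc]
  omega

lemma latVal_conj_level {γ : ℝ} (h : γ ^ 2 = γ + 1) (h1 : 1.618 ≤ γ) (h2 : γ ≤ 1.619) (n : ℕ) :
    ∀ p ∈ level n, |latVal (1 - γ) p| ≤ 2 := by
  refine latVal_conj_expand_iter h h1 h2 (fun p hp => ?_) n
  simp only [Finset.mem_insert, Finset.mem_singleton] at hp
  rcases hp with rfl | rfl | rfl <;> norm_num [latVal]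

lemma card_level_near {γ κ : ℝ} (h : γ ^ 2 = γ + 1) (h1 : 1.618 ≤ γ) (h2 : γ ≤ 1.619)
    (hκ1 : 0.7 ≤ κ) (k : ℕ) (y : ℝ) :
    ((level k).filter fun q => |κ * latVal γ q - y| ≤ 2).card ≤ 1681 := by
  set S := (level k).filter fun q => |κ * latVal γ q - y| ≤ 2 with hS
  rcases S.eq_empty_or_nonempty with hemp | ⟨q₀, hq₀⟩
  · simp [hemp]
  · have hsub : S ⊆ (Finset.Icc (-20 : ℤ) 20 ×ˢ Finset.Icc (-20 : ℤ) 20).image (q₀ + ·) := by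
      intro q hq
      refine Finset.mem_image.2 ⟨q - q₀, mem_box h1 h2 ?_ ?_, by abel⟩
      · have e1 := (Finset.mem_filter.1 hq).2
        have e2 := (Finset.mem_filter.1 hq₀).2
        rw [latVal_sub]
        rw [abs_le] at *
        constructor <;> nlinarith
      · have e1 := latVal_conj_level h h1 h2 k q (Finset.mem_filter.1 hq).1
        have e2 := latVal_conj_level h h1 h2 k q₀ (Finset.mem_filter.1 hq₀).1
        rw [latVal_sub]
        rw [abs_le] at *
        constructor <;> linarith
    refine (Finset.card_le_card hsub).trans (Finset.card_image_le.trans ?_)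
    simp

/-- Points of `level (k + m)` in an interval of length comparable to `γ^(-6k)` descend from boundedly
many points of `level k`. -/
lemma card_level_local {γ κ : ℝ} (h : γ ^ 2 = γ + 1) (h1 : 1.618 ≤ γ) (h2 : γ ≤ 1.619)
    (hκ1 : 0.7 ≤ κ) (hκ2 : κ ≤ 0.8) (k m : ℕ) (y : ℝ) :
    ((level (k + m)).filter fun p =>
      |κ * latVal γ p / (γ ^ 6) ^ (k + m) - y| ≤ 1 / (γ ^ 6) ^ k).card ≤
        1681 * (expand^[m] {0}).card := by
  have hsub : ((level (k + m)).filter fun p =>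
      |κ * latVal γ p / (γ ^ 6) ^ (k + m) - y| ≤ 1 / (γ ^ 6) ^ k) ⊆
      (((level k).filter fun q => |κ * latVal γ q - y * (γ ^ 6) ^ k| ≤ 2) ×ˢ
        expand^[m] {0}).image fun w => mulSix^[m] w.1 + w.2 := by
    intro p hp
    obtain ⟨hp, hnear⟩ := Finset.mem_filter.1 hp
    rw [level, add_comm k m, Function.iterate_add_apply, mem_expand_iter] at hp
    obtain ⟨q, hq, e, he, rfl⟩ := hp
    refine Finset.mem_image.2 ⟨(q, e), Finset.mem_product.2
      ⟨Finset.mem_filter.2 ⟨hq, ?_⟩, he⟩, rfl⟩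
    obtain ⟨e1, e2⟩ := latVal_expand_iter h h1 h2 m he
    have hk : 0 < (γ ^ 6) ^ k := by positivity
    have hm : 0 < (γ ^ 6) ^ m := by positivity
    rw [latVal_add, latVal_mulSix_iter h, pow_add] at hnear
    set A := (γ ^ 6) ^ k
    set B := (γ ^ 6) ^ m
    have e3 : |κ * latVal γ e / B| ≤ 1 := by
      rw [abs_le, le_div_iff₀ hm, div_le_iff₀ hm]
      constructor <;> nlinarith
    have e4 : |κ * latVal γ q + κ * latVal γ e / B - y * A| ≤ 1 := by
      have e5 : κ * latVal γ q + κ * latVal γ e / B - y * A =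
          (κ * (B * latVal γ q + latVal γ e) / (A * B) - y) * A := by
        field_simp
      rw [e5, abs_mul, abs_of_pos hk]
      rwa [← le_div_iff₀ hk]
    rw [abs_le] at *
    constructor <;> linarith
  refine (Finset.card_le_card hsub).trans (Finset.card_image_le.trans ?_)
  rw [Finset.card_product]
  exact Nat.mul_le_mul_right _ (card_level_near h h1 h2 hκ1 k _)

lemma card_level_bounds (n : ℕ) : (expand^[n] {0}).card ≤ (level n).card ∧
    (level n).card ≤ 3 * (expand^[n] {0}).card := by
  constructor
  · refine Finset.card_le_card fun z hz => (mem_expand_iter n).2 ⟨0, by decide, z, hz, ?_⟩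
    rw [mulSix_iter_zero, zero_add]
  · have hsub : level n ⊆ ((({(-1, 0), (0, 0), (1, 0)} : Finset (ℤ × ℤ)) ×ˢ
        expand^[n] {0})).image fun w => mulSix^[n] w.1 + w.2 := by
      intro z hz
      obtain ⟨x, hx, e, he, rfl⟩ := (mem_expand_iter n).1 hz
      exact Finset.mem_image.2 ⟨(x, e), Finset.mem_product.2 ⟨hx, he⟩, rfl⟩
    refine (Finset.card_le_card hsub).trans (Finset.card_image_le.trans ?_)
    rw [Finset.card_product]
    exact Nat.mul_le_mul_right _ (by decide)

lemma seventeen_lt {x : ℝ} (hmax : ∀ y : ℝ, y ^ 3 - 19 * y ^ 2 + 31 * y + 3 = 0 → y ≤ x) :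
    17 < x := by
  have hcont : ContinuousOn (fun y : ℝ => y ^ 3 - 19 * y ^ 2 + 31 * y + 3) (Icc 17 18) := by
    fun_prop
  obtain ⟨y, hy, hy0⟩ := intermediate_value_Icc (by norm_num) hcont
    (show (0 : ℝ) ∈ Icc _ _ by norm_num)
  have hle := hmax y hy0
  have hne : y ≠ 17 := by
    rintro rfl
    norm_num at hy0
  exact lt_of_lt_of_le (lt_of_le_of_ne hy.1 hne.symm) hle

theorem stmt19 (γ : ℝ) (hγ : γ = (1 + Real.sqrt 5) / 2)
    (x : ℝ) (hroot : x ^ 3 - 19 * x ^ 2 + 31 * x + 3 = 0)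
    (hmax : ∀ y : ℝ, y ^ 3 - 19 * y ^ 2 + 31 * y + 3 = 0 → y ≤ x) :
    dimH (diffSet (γ ^ (-3 : ℤ)) (γ ^ (-2 : ℤ)) (2 / γ)) =
      ENNReal.ofReal (Real.log x / (6 * Real.log γ)) := by
  have h5 : Real.sqrt 5 ^ 2 = 5 := Real.sq_sqrt (by norm_num)
  have h50 : 0 ≤ Real.sqrt 5 := Real.sqrt_nonneg 5
  have h : γ ^ 2 = γ + 1 := by rw [hγ]; linear_combination h5 / 4
  have h1 : 1.618 ≤ γ := by rw [hγ]; nlinarith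
  have h2 : γ ≤ 1.619 := by rw [hγ]; nlinarith
  have hx := seventeen_lt hmax
  have hγ0 : γ ≠ 0 := by linarith
  obtain ⟨α, hαd⟩ : ∃ α, γ ^ (-3 : ℤ) = α := ⟨_, rfl⟩
  obtain ⟨β, hβd⟩ : ∃ β, γ ^ (-2 : ℤ) = β := ⟨_, rfl⟩
  rw [hαd, hβd]
  have hα : γ ^ 3 * α = 1 := by
    rw [← hαd, zpow_neg]
    exact mul_inv_cancel₀ (pow_ne_zero 3 hγ0)
  have hβ : γ ^ 2 * β = 1 := by
    rw [← hβd, zpow_neg]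
    exact mul_inv_cancel₀ (pow_ne_zero 2 hγ0)
  have hα' : α = 2 * γ - 3 := by
    linear_combination (2 * γ - 3) * hα - α * (2 * γ ^ 2 - γ + 1) * h
  have hβ' : β = 2 - γ := by
    linear_combination (2 - γ) * hβ - β * (1 - γ) * h
  -- `κ = 2γ⁻²` is both `1 - α` and `(2 / γ) (1 - β)`
  obtain ⟨κ, hκ⟩ : ∃ κ, κ = 4 - 2 * γ := ⟨_, rfl⟩
  have hκ1 : 0.7 ≤ κ := by linarith
  have hκ2 : κ ≤ 0.8 := by linarith
  have hα0 : 0 ≤ α := by linarith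
  have hα1 : α ≤ 1 / 2 := by linarith
  have hβ0 : 0 ≤ β := by linarith
  have hβ1 : β ≤ 1 / 2 := by linarith
  have hrange := diffSet_eq_range (a := α) (b := β) (l := 2 / γ) (κ := κ)
    (by linarith) (by rw [hβ', hκ]; field_simp; linear_combination 2 * h)
  have hcomp : IsCompact (diffSet α β (2 / γ)) := by
    rw [hrange]
    refine isCompact_range (continuous_const.mul (Continuous.sub ?_ ?_))
    · exact (continuous_cantorSeries hα0 (by linarith)).comp continuous_fst
    · exact (continuous_cantorSeries hβ0 (by linarith)).comp continuous_snd
  obtain ⟨c, C, hc, hC, hcard⟩ := exists_card_bounds h h1 h2 hroot hx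
  have hρ : 1 < γ ^ 6 := by rw [golden_six h]; linarith
  have hlogγ : 0 < Real.log γ := Real.log_pos (by linarith)
  have hlogx : 0 < Real.log x := Real.log_pos (by linarith)
  refine dimH_of_counting hcomp hρ (x := x) (by positivity) ?_ level (fun p => κ * latVal γ p)
    (c₁ := c) (c₂ := 3 * C) (C₀ := 2) (C := 1681 * C) hc (by norm_num) (by positivity)
    ?_ ?_ ?_ ?_ ?_
  · rw [Real.rpow_def_of_pos (by positivity), Real.log_pow]
    rw [show ((6 : ℕ) : ℝ) * Real.log γ * (Real.log x / (6 * Real.log γ)) = Real.log x by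
      push_cast; field_simp]
    exact Real.exp_log (by linarith)
  · intro n
    refine (hcard n).1.trans ?_
    exact_mod_cast (card_level_bounds n).1
  · intro n
    have e : ((level n).card : ℝ) ≤ 3 * (expand^[n] {0}).card := by
      exact_mod_cast (card_level_bounds n).2
    linarith [(hcard n).2]
  · intro n z hz
    rw [hrange] at hz
    obtain ⟨⟨ε, δ⟩, rfl⟩ := hz
    obtain ⟨p, hp, hval⟩ := exists_level_of_seq h hα hβ ε δ n
    refine ⟨p, hp, ?_⟩
    have hρn : 0 < (γ ^ 6) ^ n := by positivity
    obtain ⟨a1, a2⟩ := cantorSeries_tail hα0 hα1 ε (2 * n + 1)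
    obtain ⟨b1, b2⟩ := cantorSeries_tail hβ0 hβ1 δ (3 * n + 1)
    have pa : α ^ (2 * n + 1) ≤ 1 / (γ ^ 6) ^ n := by
      rw [le_div_iff₀ hρn]
      calc α ^ (2 * n + 1) * (γ ^ 6) ^ n = (γ ^ 3 * α) ^ (2 * n) * α := by ring
        _ ≤ 1 := by rw [hα]; simp; linarith
    have pb : β ^ (3 * n + 1) ≤ 1 / (γ ^ 6) ^ n := by
      rw [le_div_iff₀ hρn]
      calc β ^ (3 * n + 1) * (γ ^ 6) ^ n = (γ ^ 2 * β) ^ (3 * n) * β := by ring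
        _ ≤ 1 := by rw [hβ]; simp; linarith
    have e2 : (2 : ℝ) / (γ ^ 6) ^ n = 2 * (1 / (γ ^ 6) ^ n) := by ring
    have hi : 0 < 1 / (γ ^ 6) ^ n := by positivity
    rw [hval, e2]
    set P := (γ ^ 6) ^ n
    rw [show κ * (P * (partialSeries α ε (2 * n + 1) - partialSeries β δ (3 * n + 1))) / P =
      κ * (partialSeries α ε (2 * n + 1) - partialSeries β δ (3 * n + 1)) by field_simp]
    simp only
    rw [← mul_sub, abs_mul, abs_of_pos (by linarith : 0 < κ)]
    have habs : |cantorSeries α ε - cantorSeries β δ -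
        (partialSeries α ε (2 * n + 1) - partialSeries β δ (3 * n + 1))| ≤ 2 * (1 / P) := by
      rw [abs_le]; constructor <;> linarith
    calc _ ≤ 1 * (2 * (1 / P)) := by gcongr; linarith
      _ = _ := one_mul _
  · intro n p hp
    obtain ⟨ε, δ, hε, hδ, hval⟩ := exists_seq_of_level h hα hβ n hp
    rw [hrange]
    refine ⟨(ε, δ), ?_⟩
    have hρn : 0 < (γ ^ 6) ^ n := by positivity
    simp only
    rw [cantorSeries_eq_partial α hε, cantorSeries_eq_partial β hδ, hval]
    field_simp
  · intro k m y
    have e := card_level_local h h1 h2 hκ1 hκ2 k m y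
    have e' : (((level (k + m)).filter fun p =>
        |κ * latVal γ p / (γ ^ 6) ^ (k + m) - y| ≤ 1 / (γ ^ 6) ^ k).card : ℝ) ≤
          1681 * (expand^[m] {0}).card := by exact_mod_cast e
    linarith [(hcard m).2]
end
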